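/- Suppose ∂_u f(t,u) is locally Lipschitz continuous in u uniformly with respect to t. Let p₋ < p₊ be two elements of X_per such that for each a ∈ (p₋(0), p₊(0)), the sequence m ↦ h(t+mT; a) is increasing in m and converges to p₊(t) as m → ∞ locally uniformly in t ∈ ℝ. Then there exists R₀ > 0 such that for every R ≥ R₀, the Dirichlet periodic-parabolic problem admits a symmetrically decreasing solution φ: namely, φ : [−R,R] × ℝ → ℝ satisfies φ_t = φ_xx + f(t,φ) for −R < x < R and t ∈ ℝ, φ(x, t+T) = φ(x,t) for all x,t, p₋(t) < φ(x,t) < p₊(t) for −R < x < R and all t, φ(±R, t) = p₋(t) for all t, φ(−x,t) = φ(x,t) for all x,t, and ∂_x φ(x,t) < 0 for 0 < x < R and all t. -/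

import Mathlib

open Filter Topology Set MeasureTheory

noncomputable section

/-- `u` satisfies `u_t = u_xx + f(t,u)` for `x ∈ sx`, `t ∈ st`
(with the required differentiability in space and time). -/
def SatPDE (f u : ℝ → ℝ → ℝ) (sx st : Set ℝ) : Prop :=
  ∀ x ∈ sx, ∀ t ∈ st,
    DifferentiableAt ℝ (fun y => u y t) x ∧
    DifferentiableAt ℝ (deriv fun y => u y t) x ∧
    HasDerivAt (fun τ => u x τ) (deriv (deriv fun y => u y t) x + f t (u x t)) t

/-- entire solution of `U_t = U_xx + f(t,U)` on `ℝ × ℝ`. -/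
def EntireSol (f U : ℝ → ℝ → ℝ) : Prop := SatPDE f U Set.univ Set.univ

/-- classical (for `t > 0`) solution of the Cauchy problem with initial datum `u₀`. -/
def CauchySol (f : ℝ → ℝ → ℝ) (u₀ : ℝ → ℝ) (u : ℝ → ℝ → ℝ) : Prop :=
  SatPDE f u Set.univ (Set.Ioi 0) ∧
  ContinuousOn (fun q : ℝ × ℝ => u q.1 q.2) (Set.univ ×ˢ Set.Ioi 0) ∧
  ∀ x, u x 0 = u₀ x

/-- `U` is `T`-periodic in time. -/
def TPer (T : ℝ) (U : ℝ → ℝ → ℝ) : Prop := ∀ x t, U x (t + T) = U x t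

/-- `U` is spatially constant. -/
def SpatConst (U : ℝ → ℝ → ℝ) : Prop := ∀ x y t, U x t = U y t

/-- `U` is symmetrically decreasing with respect to `x₀`. -/
def SymDecr (U : ℝ → ℝ → ℝ) (x₀ : ℝ) : Prop :=
  (∀ x t, U (2 * x₀ - x) t = U x t) ∧ ∀ x t : ℝ, x₀ < x → deriv (fun y => U y t) x < 0

/-- `v` is symmetric with respect to `x₀` and nonincreasing away from `x₀`. -/
def SymNonincr (v : ℝ → ℝ → ℝ) (x₀ : ℝ) : Prop :=
  (∀ x t, v (2 * x₀ - x) t = v x t) ∧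
  (∀ x t : ℝ, x < x₀ → 0 ≤ deriv (fun y => v y t) x) ∧
  (∀ x t : ℝ, x₀ < x → deriv (fun y => v y t) x ≤ 0)

/-- `g` solves the ODE `g' = f(t, g)` on the set `s`. -/
def ODESolOn (f : ℝ → ℝ → ℝ) (g : ℝ → ℝ) (s : Set ℝ) : Prop :=
  ∀ t ∈ s, HasDerivAt g (f t (g t)) t

/-- `p` is a nonnegative `T`-periodic solution of `p' = f(t,p)`. -/
def XPer (T : ℝ) (f : ℝ → ℝ → ℝ) (p : ℝ → ℝ) : Prop :=
  (∀ t, 0 ≤ p t) ∧ (∀ t, p (t + T) = p t) ∧ ODESolOn f p Set.univ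

/-- `p` is the base of `U`, i.e. `U(x,t) → p(t)` as `|x| → ∞`. -/
def HasBase (U : ℝ → ℝ → ℝ) (p : ℝ → ℝ) : Prop :=
  ∀ t, Tendsto (fun x => U x t) atTop (nhds (p t)) ∧
    Tendsto (fun x => U x t) atBot (nhds (p t))

/-- `U` is an ω-limit solution of `u`: an entire solution which is the locally uniform
limit of `u(x, t + kⱼ T)` for some sequence of positive integers `kⱼ → ∞`. -/
def OmegaLimitSol (T : ℝ) (f u U : ℝ → ℝ → ℝ) : Prop :=
  EntireSol f U ∧
  ∃ k : ℕ → ℕ, StrictMono k ∧ (∀ j, 0 < k j) ∧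
    TendstoLocallyUniformly
      (fun j (q : ℝ × ℝ) => u q.1 (q.2 + (k j : ℝ) * T)) (fun q => U q.1 q.2) atTop

/-- `φ` is an ω-limit point of `u`: `u(·, kⱼ T) → φ` in `L^∞_loc(ℝ)`. -/
def OmegaLimitPt (T : ℝ) (u : ℝ → ℝ → ℝ) (φ : ℝ → ℝ) : Prop :=
  ∃ k : ℕ → ℕ, StrictMono k ∧ (∀ j, 0 < k j) ∧
    TendstoLocallyUniformly (fun j x => u x ((k j : ℝ) * T)) φ atTop

/-- the solution `h(·;a)` of `h' = f(t,h)`, `h(0) = a`, is `T`-monotone nondecreasing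
(formulated for every solution with initial value `a`; the solution is unique). -/
def TMonNondecFrom (T : ℝ) (f : ℝ → ℝ → ℝ) (a : ℝ) : Prop :=
  ∀ g : ℝ → ℝ, ODESolOn f g (Set.Ici 0) → g 0 = a → ∀ t : ℝ, 0 ≤ t → g t ≤ g (t + T)

/-- the solution `h(·;a)` is `T`-monotone decreasing. -/
def TMonDecFrom (T : ℝ) (f : ℝ → ℝ → ℝ) (a : ℝ) : Prop :=
  ∀ g : ℝ → ℝ, ODESolOn f g (Set.Ici 0) → g 0 = a → ∀ t : ℝ, 0 ≤ t → g (t + T) < g t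

/-- the solution `h(·;a)` is `T`-monotone nonincreasing. -/
def TMonNonincFrom (T : ℝ) (f : ℝ → ℝ → ℝ) (a : ℝ) : Prop :=
  ∀ g : ℝ → ℝ, ODESolOn f g (Set.Ici 0) → g 0 = a → ∀ t : ℝ, 0 ≤ t → g (t + T) ≤ g t

/-- `p ∈ Y_per`. -/
def YPer (T : ℝ) (f : ℝ → ℝ → ℝ) (p : ℝ → ℝ) : Prop :=
  XPer T f p ∧ ∃ ε > 0, ∀ a ∈ Set.Ioo (p 0) (p 0 + ε), TMonNondecFrom T f a

/-- `p` is linearly stable: `∫₀ᵀ ∂ᵤf(t, p(t)) dt < 0`. -/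
def LinStable (T : ℝ) (f : ℝ → ℝ → ℝ) (p : ℝ → ℝ) : Prop :=
  (∫ t in (0:ℝ)..T, deriv (f t) (p t)) < 0

/-- `p` is stable from above for the ODE `h' = f(t,h)`. -/
def StableFromAbove (f : ℝ → ℝ → ℝ) (p : ℝ → ℝ) : Prop :=
  ∀ ε > 0, ∃ δ > 0, ∀ a ∈ Set.Icc (p 0) (p 0 + δ),
    ∀ g : ℝ → ℝ, ODESolOn f g (Set.Ici 0) → g 0 = a → ∀ t : ℝ, 0 ≤ t → |g t - p t| ≤ ε

/-- `p` is stable from below for the ODE `h' = f(t,h)`. -/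
def StableFromBelow (f : ℝ → ℝ → ℝ) (p : ℝ → ℝ) : Prop :=
  ∀ ε > 0, ∃ δ > 0, ∀ a ∈ Set.Icc (p 0 - δ) (p 0),
    ∀ g : ℝ → ℝ, ODESolOn f g (Set.Ici 0) → g 0 = a → ∀ t : ℝ, 0 ≤ t → |g t - p t| ≤ ε

/-- `Zsc w`: the number of sign changes of `w` on `ℝ` (a value in `ℕ∞`). -/
def Zsc (w : ℝ → ℝ) : ℕ∞ :=
  ⨆ k ∈ {k : ℕ | ∃ x : Fin (k + 1) → ℝ, StrictMono x ∧
      ∀ i : Fin k, w (x i.castSucc) * w (x i.succ) < 0}, (k : ℕ∞)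

/-!
Write the solution as `φ = p₋ + u`, and extend the reaction `f(t, p₋ + w) - f(t, p₋)` to an odd
bounded function of `w`. The Dirichlet problem then becomes the search for a `u` that is even about
`0` and odd about `R`, and such a `u` is a series in the modes `cos ((2k + 1) π x / (2R))`, each of
whose coefficients is the periodic response of a scalar linear equation.

A solution below `q = p₊ - p₋` is the limit of a monotone iteration that starts from the subsolution
`J(t, A cos³(π x / 2R))`. Here `J` interpolates over one period between the time shift
`Y(t + T, a)` and `Y(t, a)`, where `Y` is the flow of the reaction. Since `Y` increases over each
period, `J` is a strict subsolution of the ODE, and this slack absorbs the diffusion loss `O(R⁻²)`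
once `R` is large. The slack degenerates as `a → 0`, but `cos³` is convex near the
boundary of the interval, so that there is no loss to absorb there.

All strict inequalities come from one quantitative Hopf lemma with a `sinh` barrier, applied to
`u`, to `q - u`, and to the reflection differences `u(2l - x, t) - u(x, t)`.
-/

section

variable {R : ℝ} {F : ℝ → ℝ}

/-- `F` is even about `0` and odd about `R`. These are the functions obtained from Dirichlet data
on `[-R, R]` by repeated reflection; they are spanned by the odd modes of the circle of length
`4 * R`. -/
structure QuarterWave (R : ℝ) (F : ℝ → ℝ) : Prop where
  even : ∀ x, F (-x) = F x
  odd : ∀ x, F (2 * R - x) = -F x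

namespace QuarterWave

lemma periodic (h : QuarterWave R F) : Function.Periodic F (4 * R) := fun x => by
  have h₁ := h.odd (-x)
  have h₂ := h.odd (-(x + 2 * R))
  rw [h.even] at h₁ h₂
  rw [show 2 * R - -(x + 2 * R) = x + 4 * R by ring] at h₂
  rw [show 2 * R - -x = x + 2 * R by ring] at h₁
  rw [h₂, h₁, neg_neg]

lemma apply_right (h : QuarterWave R F) : F R = 0 := by
  have := h.odd R
  rw [show 2 * R - R = R by ring] at this
  linarith

lemma apply_left (h : QuarterWave R F) : F (-R) = 0 := by rw [h.even, h.apply_right]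

lemma exists_mem_Icc_eq_mul (hR : 0 < R) (x : ℝ) : ∃ y ∈ Icc (-R) R, ∃ s : ℝ, |s| = 1 ∧
    ∀ F, QuarterWave R F → F x = s * F y := by
  obtain ⟨m, hm, -⟩ := existsUnique_add_zsmul_mem_Ico (by positivity : 0 < 4 * R) x (-R)
  set y := x + m • (4 * R)
  have hxy : ∀ F, QuarterWave R F → F x = F y := fun F h => (h.periodic.zsmul m x).symm
  rcases le_total y R with hyR | hyR
  · exact ⟨y, ⟨hm.1, hyR⟩, 1, abs_one, fun F h => by rw [one_mul, hxy F h]⟩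
  · refine ⟨2 * R - y, ⟨by linarith [hm.2], by linarith⟩, -1, by norm_num, fun F h => ?_⟩
    rw [h.odd, neg_one_mul, neg_neg, hxy F h]

end QuarterWave

/-- The frequencies `π n / (2 R)` of the circle of length `4 * R`. -/
def quarterFreq (R : ℝ) (n : ℤ) : ℝ := Real.pi / (2 * R) * n

/-- The `n`-th cosine Fourier coefficient on the circle of length `4 * R`, normalised so that an
even function `F` is `∑ n : ℤ, cosCoeff R F n * cos (quarterFreq R n * x)`. -/
def cosCoeff (R : ℝ) (F : ℝ → ℝ) (n : ℤ) : ℝ :=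
  1 / (4 * R) * ∫ x in (-(2 * R))..(2 * R), F x * Real.cos (quarterFreq R n * x)

lemma cos_quarterFreq_periodic (hR : 0 < R) (n : ℤ) :
    Function.Periodic (fun x => Real.cos (quarterFreq R n * x)) (4 * R) := fun x => by
  have : quarterFreq R n * (x + 4 * R) = quarterFreq R n * x + n * (2 * Real.pi) := by
    unfold quarterFreq; field_simp; ring
  simp only [this, Real.cos_add_int_mul_two_pi]

lemma cos_quarterFreq_reflect (hR : 0 < R) (n : ℤ) (x : ℝ) :
    Real.cos (quarterFreq R n * (2 * R - x)) = (-1) ^ n * Real.cos (quarterFreq R n * x) := by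
  have : quarterFreq R n * (2 * R - x) = -(quarterFreq R n * x - n * Real.pi) := by
    unfold quarterFreq; field_simp; ring
  rw [this, Real.cos_neg, Real.cos_sub_int_mul_pi]

lemma quarterWave_cos (hR : 0 < R) {n : ℤ} (hn : Odd n) :
    QuarterWave R fun x => Real.cos (quarterFreq R n * x) :=
  ⟨fun x => by rw [mul_neg, Real.cos_neg],
    fun x => by rw [cos_quarterFreq_reflect hR, hn.neg_one_zpow, neg_one_mul]⟩

lemma integral_window_eq {g : ℝ → ℝ} (hg : Function.Periodic g (4 * R)) (a : ℝ) :
    ∫ x in (-(2 * R) + a)..(2 * R + a), g x = ∫ x in (-(2 * R))..(2 * R), g x := by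
  have := hg.intervalIntegral_add_eq (-(2 * R) + a) (-(2 * R))
  rwa [show -(2 * R) + a + 4 * R = 2 * R + a by ring,
    show -(2 * R) + 4 * R = 2 * R by ring] at this

lemma integral_shift_mul_cos (hR : 0 < R) (hper : Function.Periodic F (4 * R)) (n : ℤ) (h : ℝ) :
    ∫ x in (-(2 * R))..(2 * R), F (x + h) * Real.cos (quarterFreq R n * x)
      = ∫ x in (-(2 * R))..(2 * R), F x * Real.cos (quarterFreq R n * (x - h)) := by
  set g : ℝ → ℝ := fun y => F y * Real.cos (quarterFreq R n * (y - h))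
  have hg : Function.Periodic g (4 * R) := hper.mul ((cos_quarterFreq_periodic hR n).sub_const h)
  calc ∫ x in (-(2 * R))..(2 * R), F (x + h) * Real.cos (quarterFreq R n * x)
      = ∫ x in (-(2 * R))..(2 * R), g (x + h) := by simp only [g, add_sub_cancel_right]
    _ = ∫ x in (-(2 * R))..(2 * R), g x := by
        rw [intervalIntegral.integral_comp_add_right, integral_window_eq hg]

lemma cosCoeff_secondDiff (hR : 0 < R) (hF : Continuous F) (hper : Function.Periodic F (4 * R))
    (n : ℤ) (h : ℝ) :
    cosCoeff R (fun x => F (x + h) + F (x - h) - 2 * F x) n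
      = cosCoeff R F n * (2 * Real.cos (quarterFreq R n * h) - 2) := by
  have hint : ∀ {g : ℝ → ℝ}, Continuous g →
      IntervalIntegrable g volume (-(2 * R)) (2 * R) := fun hg => hg.intervalIntegrable _ _
  have hexpand : ∀ x, (F (x + h) + F (x - h) - 2 * F x) * Real.cos (quarterFreq R n * x)
      = F (x + h) * Real.cos (quarterFreq R n * x) + F (x + -h) * Real.cos (quarterFreq R n * x)
        - 2 * (F x * Real.cos (quarterFreq R n * x)) := by
    intro x; rw [sub_eq_add_neg x h]; ring
  have hprod : ∀ x, F x * Real.cos (quarterFreq R n * (x - h))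
        + F x * Real.cos (quarterFreq R n * (x - -h))
      = 2 * Real.cos (quarterFreq R n * h) * (F x * Real.cos (quarterFreq R n * x)) := by
    intro x
    rw [mul_sub, mul_sub, Real.cos_sub, Real.cos_sub, mul_neg, Real.cos_neg, Real.sin_neg]; ring
  simp only [cosCoeff, hexpand]
  rw [intervalIntegral.integral_sub (hint (by fun_prop)) (hint (by fun_prop)),
    intervalIntegral.integral_add (hint (by fun_prop)) (hint (by fun_prop)),
    integral_shift_mul_cos hR hper, integral_shift_mul_cos hR hper,
    ← intervalIntegral.integral_add (hint (by fun_prop)) (hint (by fun_prop)),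
    intervalIntegral.integral_const_mul]
  simp only [hprod, intervalIntegral.integral_const_mul]
  ring

lemma abs_cosCoeff_le (hR : 0 < R) {B : ℝ} (hB : ∀ x, |F x| ≤ B) (n : ℤ) :
    |cosCoeff R F n| ≤ B := by
  have hle : ∀ x, ‖F x * Real.cos (quarterFreq R n * x)‖ ≤ B := fun x => by
    rw [Real.norm_eq_abs, abs_mul]
    exact (mul_le_of_le_one_right (abs_nonneg _) (Real.abs_cos_le_one _)).trans (hB x)
  have h := intervalIntegral.norm_integral_le_of_norm_le_const (a := -(2 * R)) (b := 2 * R)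
    fun x _ => hle x
  rw [Real.norm_eq_abs, show 2 * R - -(2 * R) = 4 * R by ring,
    abs_of_pos (by positivity : 0 < 4 * R)] at h
  rw [cosCoeff, abs_mul, abs_of_pos (by positivity : 0 < 1 / (4 * R))]
  calc _ ≤ 1 / (4 * R) * (B * (4 * R)) := mul_le_mul_of_nonneg_left h (by positivity)
    _ = B := by field_simp

lemma QuarterWave.cosCoeff_eq_zero (hR : 0 < R) (hF : QuarterWave R F) {n : ℤ} (hn : Even n) :
    cosCoeff R F n = 0 := by
  set g : ℝ → ℝ := fun x => F x * Real.cos (quarterFreq R n * x)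
  have hg : Function.Periodic g (4 * R) := hF.periodic.mul (cos_quarterFreq_periodic hR n)
  have hodd : ∀ x, g (2 * R - x) = -g x := fun x => by
    simp only [g, hF.odd, cos_quarterFreq_reflect hR, hn.neg_one_zpow]; ring
  have hneg : ∫ x in (-(2 * R))..(2 * R), g x = -∫ x in (-(2 * R))..(2 * R), g x := by
    rw [← intervalIntegral.integral_neg, ← integral_window_eq hg (2 * R)]
    simp only [← hodd]
    rw [intervalIntegral.integral_comp_sub_left]
    congr 1 <;> ring
  rw [cosCoeff, show ∫ x in (-(2 * R))..(2 * R), g x = 0 by linarith, mul_zero]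

/-- Zygmund condition of exponent `s`, with constant `D`: symmetric second differences of step `h`
are at most `D * h ^ s`. -/
def SecondDiffBound (F : ℝ → ℝ) (s D : ℝ) : Prop :=
  ∀ x h, 0 ≤ h → |F (x + h) + F (x - h) - 2 * F x| ≤ D * h ^ s

namespace SecondDiffBound

variable {s D D' : ℝ}

lemma const_nonneg (h : SecondDiffBound F s D) : 0 ≤ D := by
  have := h 0 1 zero_le_one
  rw [Real.one_rpow, mul_one] at this
  exact (abs_nonneg _).trans this

lemma mono (h : SecondDiffBound F s D) (hD : D ≤ D') : SecondDiffBound F s D' := fun x y hy =>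
  (h x y hy).trans (mul_le_mul_of_nonneg_right hD (Real.rpow_nonneg hy s))

/-- Testing with the step `2 * R / |n|`, half a wavelength of the `n`-th mode. -/
lemma abs_cosCoeff_le (hR : 0 < R) (hD : SecondDiffBound F s D) (hF : Continuous F)
    (hs : QuarterWave R F) (n : ℤ) :
    |cosCoeff R F n| ≤ D / 4 * (2 * R) ^ s * |(n : ℝ)| ^ (-s) := by
  have hD₀ := hD.const_nonneg
  rcases eq_or_ne n 0 with rfl | hn
  · rw [hs.cosCoeff_eq_zero hR Even.zero, abs_zero]
    positivity
  have : 0 < |(n : ℝ)| := by positivity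
  have hcos : Real.cos (quarterFreq R n * (2 * R / |(n : ℝ)|)) = -1 := by
    have : |quarterFreq R n * (2 * R / |(n : ℝ)|)| = Real.pi := by
      rw [quarterFreq, abs_mul, abs_mul, abs_of_pos (by positivity : 0 < 2 * R / |(n : ℝ)|),
        abs_of_pos (by positivity : 0 < Real.pi / (2 * R))]
      field_simp
    rw [← Real.cos_abs, this, Real.cos_pi]
  have h₁ := _root_.abs_cosCoeff_le hR (fun x => hD x (2 * R / |(n : ℝ)|) (by positivity)) n
  rw [cosCoeff_secondDiff hR hF hs.periodic n, hcos, abs_mul,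
    Real.div_rpow (by positivity) (by positivity)] at h₁
  norm_num at h₁
  rw [Real.rpow_neg (abs_nonneg _)]
  calc |cosCoeff R F n| ≤ D * ((2 * R) ^ s / |(n : ℝ)| ^ s) / 4 := by linarith
    _ = _ := by ring

end SecondDiffBound

lemma fourier_eq_exp_quarterFreq (hR : 0 < R) (n : ℤ) (x : ℝ) :
    (fourier n (x : AddCircle (4 * R)) : ℂ)
      = Complex.exp ((quarterFreq R n * x : ℝ) * Complex.I) := by
  have : (R : ℂ) ≠ 0 := by exact_mod_cast hR.ne'
  rw [fourier_coe_apply, quarterFreq]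
  congr 1
  push_cast
  field_simp
  ring

lemma integral_mul_sin_eq_zero (heven : Function.Even F) (n : ℤ) :
    ∫ x in (-(2 * R))..(2 * R), F x * Real.sin (quarterFreq R n * x) = 0 := by
  have h := intervalIntegral.integral_comp_neg (a := -(2 * R)) (b := 2 * R)
    fun x => F x * Real.sin (quarterFreq R n * x)
  simp only [heven _, mul_neg, Real.sin_neg, neg_neg, intervalIntegral.integral_neg] at h
  linarith

lemma fourierCoeff_lift_eq_cosCoeff [Fact (0 < 4 * R)] (hF : Continuous F)
    (heven : Function.Even F) (hper : Function.Periodic (fun x => (F x : ℂ)) (4 * R)) (n : ℤ) :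
    fourierCoeff hper.lift n = (cosCoeff R F n : ℂ) := by
  have hR : 0 < R := by linarith [Fact.out (p := 0 < 4 * R)]
  have hsplit : ∀ x : ℝ, (fourier (-n) (x : AddCircle (4 * R)) : ℂ) • hper.lift x
      = ((F x * Real.cos (quarterFreq R n * x) : ℝ) : ℂ)
        - ((F x * Real.sin (quarterFreq R n * x) : ℝ) : ℂ) * Complex.I := by
    intro x
    have hneg : quarterFreq R (-n) * x = -(quarterFreq R n * x) := by
      rw [quarterFreq, quarterFreq]; push_cast; ring
    rw [fourier_eq_exp_quarterFreq hR, hper.lift_coe, hneg, Complex.exp_mul_I,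
      ← Complex.ofReal_cos, ← Complex.ofReal_sin, Real.cos_neg, Real.sin_neg, smul_eq_mul]
    push_cast
    ring
  rw [fourierCoeff_eq_intervalIntegral _ n (-(2 * R)),
    show -(2 * R) + 4 * R = 2 * R by ring]
  simp_rw [hsplit]
  rw [intervalIntegral.integral_sub (Continuous.intervalIntegrable (by fun_prop) _ _)
      (Continuous.intervalIntegrable (by fun_prop) _ _),
    intervalIntegral.integral_mul_const, intervalIntegral.integral_ofReal,
    intervalIntegral.integral_ofReal, integral_mul_sin_eq_zero heven, cosCoeff]
  push_cast
  simp

lemma hasSum_cosCoeff (hR : 0 < R) (hF : Continuous F) (heven : Function.Even F)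
    (hper : Function.Periodic F (4 * R)) (hsum : Summable (cosCoeff R F)) (x : ℝ) :
    HasSum (fun n : ℤ => cosCoeff R F n * Real.cos (quarterFreq R n * x)) (F x) := by
  have : Fact (0 < 4 * R) := ⟨by positivity⟩
  have hperC : Function.Periodic (fun x : ℝ => (F x : ℂ)) (4 * R) := fun x => by simp only [hper x]
  let f : C(AddCircle (4 * R), ℂ) :=
    ⟨hperC.lift, continuous_coinduced_dom.mpr (Complex.continuous_ofReal.comp hF)⟩
  have hcoeff : fourierCoeff f = fun n => (cosCoeff R F n : ℂ) :=
    funext (fourierCoeff_lift_eq_cosCoeff hF heven hperC)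
  have hsumC : Summable (fourierCoeff f) := hcoeff ▸ Complex.ofRealCLM.summable hsum
  have h := Complex.reCLM.hasSum
    (has_pointwise_sum_fourier_series_of_summable hsumC (x : AddCircle (4 * R)))
  rw [show f x = (F x : ℂ) from hperC.lift_coe x] at h
  simp only [Complex.reCLM_apply, Complex.ofReal_re] at h
  convert! h using 2 with n
  rw [hcoeff, fourier_eq_exp_quarterFreq hR, smul_eq_mul, Complex.re_ofReal_mul,
    Complex.exp_ofReal_mul_I_re]

end

section

variable {T μ : ℝ} {φ : ℝ → ℝ}

/-- The `T`-periodic solution of `c' = -μ c + φ` for `T`-periodic `φ`, written as an integral over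
one period of the past. -/
def periodicResponse (T μ : ℝ) (φ : ℝ → ℝ) (t : ℝ) : ℝ :=
  (1 - Real.exp (-(μ * T)))⁻¹ * ∫ s in (t - T)..t, Real.exp (-(μ * (t - s))) * φ s

lemma one_sub_exp_neg_mul_pos (hT : 0 < T) (hμ : 0 < μ) : 0 < 1 - Real.exp (-(μ * T)) := by
  rw [sub_pos, Real.exp_lt_one_iff]
  exact neg_neg_of_pos (mul_pos hμ hT)

lemma hasDerivAt_periodicResponse (hT : 0 < T) (hμ : 0 < μ) (hφ : Continuous φ)
    (hper : Function.Periodic φ T) (t : ℝ) :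
    HasDerivAt (periodicResponse T μ φ) (-μ * periodicResponse T μ φ t + φ t) t := by
  set I : ℝ → ℝ := fun t => ∫ s in (0 : ℝ)..t, Real.exp (μ * s) * φ s
  have hint : ∀ a b, IntervalIntegrable (fun s => Real.exp (μ * s) * φ s) volume a b :=
    fun a b => Continuous.intervalIntegrable (by fun_prop) a b
  have hI : ∀ t, HasDerivAt I (Real.exp (μ * t) * φ t) t := fun t =>
    ((by fun_prop : Continuous fun s => Real.exp (μ * s) * φ s)).integral_hasStrictDerivAt 0 t
      |>.hasDerivAt
  have hrepr : ∀ t, periodicResponse T μ φ t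
      = (1 - Real.exp (-(μ * T)))⁻¹ * (Real.exp (-(μ * t)) * (I t - I (t - T))) := fun t => by
    rw [intervalIntegral.integral_interval_sub_left (hint _ _) (hint _ _),
      ← intervalIntegral.integral_const_mul, periodicResponse]
    congr 2 with s
    rw [← mul_assoc, ← Real.exp_add]
    ring_nf
  have hexp : HasDerivAt (fun t => Real.exp (-(μ * t))) (Real.exp (-(μ * t)) * -μ) t := by
    simpa using ((hasDerivAt_id t).const_mul μ).neg.exp
  have hder := (hexp.mul ((hI t).sub ((hI (t - T)).comp_sub_const t T))).const_mul
    (1 - Real.exp (-(μ * T)))⁻¹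
  rw [funext hrepr]
  refine hder.congr_deriv ?_
  have hpast : φ (t - T) = φ t := by rw [← hper (t - T), sub_add_cancel]
  have e₁ : Real.exp (-(μ * t)) * Real.exp (μ * t) = 1 := by rw [← Real.exp_add]; simp
  have e₂ : Real.exp (-(μ * t)) * Real.exp (μ * (t - T)) = Real.exp (-(μ * T)) := by
    rw [← Real.exp_add]; ring_nf
  have e₃ := inv_mul_cancel₀ (one_sub_exp_neg_mul_pos hT hμ).ne'
  rw [hpast]
  simp only [Pi.sub_apply]
  linear_combination (1 - Real.exp (-(μ * T)))⁻¹ * φ t * (e₁ - e₂) + φ t * e₃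

lemma periodic_periodicResponse (hper : Function.Periodic φ T) :
    Function.Periodic (periodicResponse T μ φ) T := fun t => by
  rw [periodicResponse, periodicResponse, show t + T - T = t - T + T by ring,
    ← intervalIntegral.integral_comp_add_right]
  simp only [hper _, add_sub_add_right_eq_sub]

lemma abs_periodicResponse_le (hT : 0 < T) (hμ : 0 < μ) {B : ℝ} (hB : ∀ t, |φ t| ≤ B) (t : ℝ) :
    |periodicResponse T μ φ t| ≤ B / μ := by
  have hpos := one_sub_exp_neg_mul_pos hT hμ
  have hprim : ∀ s, HasDerivAt (fun s => B / μ * Real.exp (-(μ * (t - s))))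
      (Real.exp (-(μ * (t - s))) * B) s := fun s => by
    refine ((((hasDerivAt_id s).const_sub t).const_mul μ).neg.exp.const_mul (B / μ)).congr_deriv ?_
    simp only [Pi.neg_apply, id]
    field_simp
  have hmass : ∫ s in (t - T)..t, Real.exp (-(μ * (t - s))) * B
      = B / μ * (1 - Real.exp (-(μ * T))) := by
    rw [intervalIntegral.integral_eq_sub_of_hasDerivAt (fun s _ => hprim s)
      (Continuous.intervalIntegrable (by fun_prop) _ _)]
    simp [mul_sub]
  have hle := intervalIntegral.norm_integral_le_of_norm_le (a := t - T) (b := t) (μ := volume)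
    (f := fun s => Real.exp (-(μ * (t - s))) * φ s)
    (g := fun s => Real.exp (-(μ * (t - s))) * B) (by linarith)
    (Eventually.of_forall fun s _ => by
      rw [Real.norm_eq_abs, abs_mul, Real.abs_exp]
      exact mul_le_mul_of_nonneg_left (hB s) (Real.exp_pos _).le)
    (Continuous.intervalIntegrable (by fun_prop) _ _)
  rw [hmass, Real.norm_eq_abs] at hle
  rw [periodicResponse, abs_mul, abs_of_pos (inv_pos.2 hpos), inv_mul_le_iff₀ hpos]
  linarith

end

section

variable {R : ℝ} {c c' : ℤ → ℝ} {B B' r σ : ℝ}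

lemma abs_cos_sub_cos_le_rpow (h₀ : 0 ≤ σ) (h₁ : σ ≤ 1) (a b : ℝ) :
    |Real.cos a - Real.cos b| ≤ 2 * |a - b| ^ σ := by
  have hpow : 0 ≤ |a - b| ^ σ := by positivity
  rcases le_total |a - b| 1 with h | h
  · have hlip : |Real.cos a - Real.cos b| ≤ |a - b| := by
      simpa [Real.dist_eq] using Real.lipschitzWith_cos.dist_le_mul a b
    have : |a - b| ≤ |a - b| ^ σ := Real.self_le_rpow_of_le_one (abs_nonneg _) h h₁
    linarith
  · have : 1 ≤ |a - b| ^ σ := Real.one_le_rpow h h₀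
    linarith [abs_sub (Real.cos a) (Real.cos b), Real.abs_cos_le_one a, Real.abs_cos_le_one b]

lemma abs_two_mul_cos_sub_two_le_rpow (h₀ : 0 ≤ σ) (h₁ : σ ≤ 2) (y : ℝ) :
    |2 * Real.cos y - 2| ≤ 4 * |y| ^ σ := by
  rw [abs_of_nonpos (by linarith [Real.cos_le_one y])]
  rcases le_total |y| 1 with h | h
  · have hsq : y ^ 2 ≤ |y| ^ σ := by
      rcases eq_or_ne y 0 with rfl | hy
      · simp only [ne_eq, OfNat.ofNat_ne_zero, not_false_eq_true, zero_pow]; positivity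
      · rw [← sq_abs, ← Real.rpow_natCast]
        exact Real.rpow_le_rpow_of_exponent_ge (abs_pos.2 hy) h (by exact_mod_cast h₁)
    have : 0 ≤ |y| ^ σ := by positivity
    linarith [Real.one_sub_sq_div_two_le_cos (x := y)]
  · linarith [Real.one_le_rpow h h₀, Real.neg_one_le_cos y]

lemma abs_quarterFreq (hR : 0 < R) (n : ℤ) :
    |quarterFreq R n| = Real.pi / (2 * R) * |(n : ℝ)| := by
  rw [quarterFreq, abs_mul, abs_of_pos (by positivity : 0 < Real.pi / (2 * R))]

/-- The sum `∑ |n| ^ (-p)` over all integers; it equals `2 ζ(p)`, since `0 ^ (-p) = 0`. -/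
def intZeta (p : ℝ) : ℝ := ∑' n : ℤ, |(n : ℝ)| ^ (-p)

lemma intZeta_nonneg (p : ℝ) : 0 ≤ intZeta p := tsum_nonneg fun _ => by positivity

/-- Power decay of a sequence of coefficients. As `0 ^ (-r) = 0` for `r ≠ 0`, the coefficient of
index `0` then vanishes. -/
def PowerDecay (c : ℤ → ℝ) (r B : ℝ) : Prop := ∀ n, |c n| ≤ B * |(n : ℝ)| ^ (-r)

namespace PowerDecay

lemma const_nonneg (h : PowerDecay c r B) : 0 ≤ B := by
  have := (abs_nonneg _).trans (h 1)
  simpa using this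

lemma add (h : PowerDecay c r B) (h' : PowerDecay c' r B') :
    PowerDecay (fun n => c n + c' n) r (B + B') := fun n =>
  (abs_add_le _ _).trans (by rw [add_mul]; exact add_le_add (h n) (h' n))

lemma const_mul (h : PowerDecay c r B) (k : ℝ) :
    PowerDecay (fun n => k * c n) r (|k| * B) := fun n => by
  rw [abs_mul, mul_assoc]
  exact mul_le_mul_of_nonneg_left (h n) (abs_nonneg k)

lemma neg (h : PowerDecay c r B) : PowerDecay (fun n => -c n) r B := fun n => by
  rw [abs_neg]; exact h n

lemma mul_rpow_le (hσ : 0 < σ) (h : PowerDecay c r B) (n : ℤ) :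
    |c n| * |(n : ℝ)| ^ σ ≤ B * |(n : ℝ)| ^ (-(r - σ)) := by
  have hB := h.const_nonneg
  calc |c n| * |(n : ℝ)| ^ σ ≤ B * |(n : ℝ)| ^ (-r) * |(n : ℝ)| ^ σ :=
        mul_le_mul_of_nonneg_right (h n) (by positivity)
    _ ≤ B * |(n : ℝ)| ^ (-(r - σ)) := by
        rw [mul_assoc]
        refine mul_le_mul_of_nonneg_left ?_ hB
        rcases eq_or_ne n 0 with rfl | hn
        · rw [Int.cast_zero, abs_zero, Real.zero_rpow hσ.ne', mul_zero]; positivity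
        · rw [← Real.rpow_add (by positivity)]
          apply le_of_eq; congr 1; ring

lemma weaken (h : PowerDecay c r B) (hσ : 0 < σ) (hσr : σ ≤ r) : PowerDecay c σ B := fun n => by
  have hB := h.const_nonneg
  refine (h n).trans (mul_le_mul_of_nonneg_left ?_ hB)
  rcases eq_or_ne n 0 with rfl | hn
  · rw [Int.cast_zero, abs_zero, Real.zero_rpow (by linarith)]; positivity
  · exact Real.rpow_le_rpow_of_exponent_le
      (by exact_mod_cast Int.one_le_abs hn) (by linarith)

lemma mul_quarterFreq (hR : 0 < R) (h : PowerDecay c r B) :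
    PowerDecay (fun n => quarterFreq R n * c n) (r - 1) (Real.pi / (2 * R) * B) := fun n => by
  rw [abs_mul, abs_quarterFreq hR, mul_assoc, mul_assoc, mul_comm |(n : ℝ)|]
  have := h.mul_rpow_le one_pos n
  rw [Real.rpow_one] at this
  exact mul_le_mul_of_nonneg_left this (by positivity)

end PowerDecay

lemma abs_tsum_le_intZeta {g : ℤ → ℝ} (hr : 1 < r) (hg : PowerDecay g r B) :
    |∑' n, g n| ≤ B * intZeta r :=
  tsum_of_norm_bounded ((Real.summable_abs_int_rpow hr).hasSum.mul_left B)
    (f := g) fun n => (Real.norm_eq_abs _).trans_le (hg n)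

/-- The series `∑ c n * cos (π n x / (2 R))`. -/
def cosSeries (R : ℝ) (c : ℤ → ℝ) (x : ℝ) : ℝ := ∑' n, c n * Real.cos (quarterFreq R n * x)

/-- The series `∑ c n * sin (π n x / (2 R))`. -/
def sinSeries (R : ℝ) (c : ℤ → ℝ) (x : ℝ) : ℝ := ∑' n, c n * Real.sin (quarterFreq R n * x)

lemma PowerDecay.mul_of_abs_le_one (h : PowerDecay c r B) {g : ℤ → ℝ} (hg : ∀ n, |g n| ≤ 1) :
    PowerDecay (fun n => c n * g n) r B := fun n => by
  rw [abs_mul]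
  exact (mul_le_of_le_one_right (abs_nonneg _) (hg n)).trans (h n)

lemma PowerDecay.summable (h : PowerDecay c r B) (hr : 1 < r) : Summable c :=
  Summable.of_norm_bounded ((Real.summable_abs_int_rpow hr).mul_left B) h

lemma PowerDecay.summable_cos (h : PowerDecay c r B) (hr : 1 < r) (x : ℝ) :
    Summable fun n => c n * Real.cos (quarterFreq R n * x) :=
  (h.mul_of_abs_le_one fun _ => Real.abs_cos_le_one _).summable hr

lemma PowerDecay.hasSum_cosSeries (h : PowerDecay c r B) (hr : 1 < r) (x : ℝ) :
    HasSum (fun n => c n * Real.cos (quarterFreq R n * x)) (cosSeries R c x) :=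
  (h.summable_cos hr x).hasSum

lemma abs_cosSeries_le (h : PowerDecay c r B) (hr : 1 < r) (x : ℝ) :
    |cosSeries R c x| ≤ B * intZeta r :=
  abs_tsum_le_intZeta hr (h.mul_of_abs_le_one fun _ => Real.abs_cos_le_one _)

lemma abs_cosSeries_sub_le (hR : 0 < R) (h : PowerDecay c r B) (hσ : 0 < σ) (hσ₁ : σ ≤ 1)
    (hr : 1 < r - σ) (x y : ℝ) :
    |cosSeries R c x - cosSeries R c y|
      ≤ 2 * (Real.pi / (2 * R)) ^ σ * intZeta (r - σ) * B * |x - y| ^ σ := by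
  have hterm : PowerDecay (fun n => c n * Real.cos (quarterFreq R n * x)
      - c n * Real.cos (quarterFreq R n * y)) (r - σ)
      (2 * (Real.pi / (2 * R)) ^ σ * |x - y| ^ σ * B) := fun n => by
    have hcos := abs_cos_sub_cos_le_rpow hσ.le hσ₁ (quarterFreq R n * x) (quarterFreq R n * y)
    rw [← mul_sub, abs_mul, abs_quarterFreq hR, Real.mul_rpow (by positivity) (by positivity),
      Real.mul_rpow (by positivity) (by positivity)] at hcos
    calc |c n * Real.cos (quarterFreq R n * x) - c n * Real.cos (quarterFreq R n * y)|
        ≤ |c n| * (2 * ((Real.pi / (2 * R)) ^ σ * |(n : ℝ)| ^ σ * |x - y| ^ σ)) := by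
          rw [← mul_sub, abs_mul]
          exact mul_le_mul_of_nonneg_left hcos (abs_nonneg _)
      _ = 2 * (Real.pi / (2 * R)) ^ σ * |x - y| ^ σ * (|c n| * |(n : ℝ)| ^ σ) := by ring
      _ ≤ 2 * (Real.pi / (2 * R)) ^ σ * |x - y| ^ σ * (B * |(n : ℝ)| ^ (-(r - σ))) :=
          mul_le_mul_of_nonneg_left (h.mul_rpow_le hσ n) (by positivity)
      _ = _ := by ring
  rw [cosSeries, cosSeries,
    ← (h.summable_cos (by linarith) x).tsum_sub (h.summable_cos (by linarith) y)]
  exact (abs_tsum_le_intZeta hr hterm).trans_eq (by ring)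

lemma secondDiffBound_cosSeries (hR : 0 < R) (h : PowerDecay c r B) (hσ : 0 < σ) (hσ₂ : σ ≤ 2)
    (hr : 1 < r - σ) :
    SecondDiffBound (cosSeries R c) σ
      (4 * (Real.pi / (2 * R)) ^ σ * intZeta (r - σ) * B) := by
  intro x y hy
  have hterm : PowerDecay (fun n => c n * Real.cos (quarterFreq R n * (x + y))
      + c n * Real.cos (quarterFreq R n * (x - y)) - 2 * (c n * Real.cos (quarterFreq R n * x)))
      (r - σ) (4 * (Real.pi / (2 * R)) ^ σ * y ^ σ * B) := fun n => by
    have hfactor : c n * Real.cos (quarterFreq R n * (x + y))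
        + c n * Real.cos (quarterFreq R n * (x - y)) - 2 * (c n * Real.cos (quarterFreq R n * x))
        = c n * (Real.cos (quarterFreq R n * x) * (2 * Real.cos (quarterFreq R n * y) - 2)) := by
      rw [mul_add, mul_sub, Real.cos_add, Real.cos_sub]; ring
    have hcos := abs_two_mul_cos_sub_two_le_rpow hσ.le hσ₂ (quarterFreq R n * y)
    rw [abs_mul (quarterFreq R n), abs_quarterFreq hR, abs_of_nonneg hy,
      Real.mul_rpow (by positivity) (by positivity),
      Real.mul_rpow (by positivity) (by positivity)] at hcos
    calc _ ≤ |c n| * (4 * ((Real.pi / (2 * R)) ^ σ * |(n : ℝ)| ^ σ * y ^ σ)) := by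
          beta_reduce
          rw [hfactor, abs_mul, abs_mul]
          exact mul_le_mul_of_nonneg_left
            ((mul_le_of_le_one_left (abs_nonneg _) (Real.abs_cos_le_one _)).trans hcos)
            (abs_nonneg _)
      _ = 4 * (Real.pi / (2 * R)) ^ σ * y ^ σ * (|c n| * |(n : ℝ)| ^ σ) := by ring
      _ ≤ 4 * (Real.pi / (2 * R)) ^ σ * y ^ σ * (B * |(n : ℝ)| ^ (-(r - σ))) :=
          mul_le_mul_of_nonneg_left (h.mul_rpow_le hσ n) (by positivity)
      _ = _ := by ring
  have hsum : ∀ z, Summable fun n => c n * Real.cos (quarterFreq R n * z) :=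
    h.summable_cos (by linarith)
  rw [cosSeries, cosSeries, cosSeries, ← tsum_mul_left, ← (hsum _).tsum_add (hsum _),
    ← ((hsum _).add (hsum _)).tsum_sub ((hsum _).mul_left 2)]
  exact (abs_tsum_le_intZeta hr hterm).trans_eq (by ring)

lemma hasDerivAt_quarterFreq_mul (n : ℤ) (x : ℝ) :
    HasDerivAt (fun y => quarterFreq R n * y) (quarterFreq R n) x := by
  simpa using (hasDerivAt_id x).const_mul (quarterFreq R n)

lemma hasDerivAt_cosSeries (hR : 0 < R) (h : PowerDecay c r B) (hr : 2 < r) (x : ℝ) :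
    HasDerivAt (cosSeries R c) (sinSeries R (fun n => -(quarterFreq R n * c n)) x) x := by
  have hmul := (h.mul_quarterFreq hR).neg
  have hder := hasDerivAt_tsum
    (g := fun n y => c n * Real.cos (quarterFreq R n * y))
    (g' := fun n y => -(quarterFreq R n * c n) * Real.sin (quarterFreq R n * y))
    ((Real.summable_abs_int_rpow (by linarith : 1 < r - 1)).mul_left _)
    (fun n y => ((hasDerivAt_quarterFreq_mul n y).cos.const_mul (c n)).congr_deriv (by ring))
    (fun n y => hmul.mul_of_abs_le_one (fun _ => Real.abs_sin_le_one _) n)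
    (h.summable_cos (by linarith) 0) x
  exact hder

lemma hasDerivAt_sinSeries (hR : 0 < R) (h : PowerDecay c r B) (hr : 2 < r) (x : ℝ) :
    HasDerivAt (sinSeries R c) (cosSeries R (fun n => quarterFreq R n * c n) x) x := by
  have hmul := h.mul_quarterFreq hR
  have hder := hasDerivAt_tsum
    (g := fun n y => c n * Real.sin (quarterFreq R n * y))
    (g' := fun n y => quarterFreq R n * c n * Real.cos (quarterFreq R n * y))
    ((Real.summable_abs_int_rpow (by linarith : 1 < r - 1)).mul_left _)
    (fun n y => ((hasDerivAt_quarterFreq_mul n y).sin.const_mul (c n)).congr_deriv (by ring))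
    (fun n y => hmul.mul_of_abs_le_one (fun _ => Real.abs_cos_le_one _) n)
    (h.mul_of_abs_le_one (fun _ => Real.abs_sin_le_one _) |>.summable (by linarith)) (y₀ := 0) x
  exact hder

lemma hasDerivAt_cosSeries_param {c c' : ℝ → ℤ → ℝ} (hr : 1 < r)
    (hc : ∀ n t, HasDerivAt (c · n) (c' t n) t) (h' : ∀ t, PowerDecay (c' t) r B')
    {t : ℝ} (h : PowerDecay (c t) r B) (x : ℝ) :
    HasDerivAt (fun t => cosSeries R (c t) x) (cosSeries R (c' t) x) t :=
  hasDerivAt_tsum ((Real.summable_abs_int_rpow hr).mul_left _)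
    (fun n t => (hc n t).mul_const (Real.cos (quarterFreq R n * x)))
    (fun n t => (h' t).mul_of_abs_le_one (fun _ => Real.abs_cos_le_one _) n)
    (h.summable_cos hr x) t

lemma continuous_cosSeries {c : ℝ → ℤ → ℝ} (hc : ∀ n, Continuous (c · n)) (hr : 1 < r)
    (h : ∀ t, PowerDecay (c t) r B) :
    Continuous fun p : ℝ × ℝ => cosSeries R (c p.2) p.1 :=
  continuous_tsum (fun n => by have := hc n; fun_prop)
    ((Real.summable_abs_int_rpow hr).mul_left B)
    fun n p => (h p.2).mul_of_abs_le_one (fun _ => Real.abs_cos_le_one _) n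

lemma quarterWave_cosSeries (hR : 0 < R) (hc : ∀ n, Even n → c n = 0) :
    QuarterWave R (cosSeries R c) := by
  have hterm : ∀ n, QuarterWave R fun x => c n * Real.cos (quarterFreq R n * x) := fun n => by
    rcases Int.even_or_odd n with hn | hn
    · simp only [hc n hn, zero_mul]
      exact ⟨fun _ => rfl, fun _ => neg_zero.symm⟩
    · exact ⟨fun x => by rw [(quarterWave_cos hR hn).even],
        fun x => by rw [(quarterWave_cos hR hn).odd, mul_neg]⟩
  exact ⟨fun x => tsum_congr fun n => (hterm n).even x,
    fun x => by rw [cosSeries, cosSeries, ← tsum_neg]; exact tsum_congr fun n => (hterm n).odd x⟩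

end

section

/-- Continuous fields on `ℝ × ℝ`, `T`-periodic in time, whose time slices are quarter waves. -/
structure QuarterWaveField (R T : ℝ) (F : ℝ → ℝ → ℝ) : Prop where
  cont : Continuous fun p : ℝ × ℝ => F p.1 p.2
  periodic : ∀ x t, F x (t + T) = F x t
  quarterWave : ∀ t, QuarterWave R fun x => F x t

/-- `z` is continuous and `T`-periodic in time, with derivatives `z_x = zx`, `z_xx = zxx`,
`z_t = zt` everywhere. -/
structure PeriodicC21 (T : ℝ) (z zx zxx zt : ℝ → ℝ → ℝ) : Prop where
  cont : Continuous fun p : ℝ × ℝ => z p.1 p.2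
  periodic : ∀ x t, z x (t + T) = z x t
  hasDerivAt_x : ∀ x t, HasDerivAt (fun y => z y t) (zx x t) x
  hasDerivAt_xx : ∀ x t, HasDerivAt (fun y => zx y t) (zxx x t) x
  hasDerivAt_t : ∀ x t, HasDerivAt (fun τ => z x τ) (zt x t) t

/-- `u` is a quarter-wave `T`-periodic classical solution of `u_t = u_xx - L u + F`, with
`u_x = ux` and `u_xx = uxx`. -/
structure LinearSol (R T L : ℝ) (F u ux uxx : ℝ → ℝ → ℝ) : Prop extends
  QuarterWaveField R T u, PeriodicC21 T u ux uxx fun x t => uxx x t - L * u x t + F x t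

variable {R T L s D : ℝ} {F : ℝ → ℝ → ℝ}

/-- The `n`-th cosine coefficient, at time `t`, of the `T`-periodic solution of
`u_t = u_xx - L u + F`. -/
def modeCoeff (R T L : ℝ) (F : ℝ → ℝ → ℝ) (t : ℝ) (n : ℤ) : ℝ :=
  periodicResponse T (quarterFreq R n ^ 2 + L) (fun τ => cosCoeff R (fun x => F x τ) n) t

/-- The `T`-periodic solution of `u_t = u_xx - L u + F` on the circle of length `4 * R`. -/
def heatSol (R T L : ℝ) (F : ℝ → ℝ → ℝ) (x t : ℝ) : ℝ := cosSeries R (modeCoeff R T L F t) x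

lemma QuarterWaveField.continuous_slice (hF : QuarterWaveField R T F) (t : ℝ) :
    Continuous fun x => F x t := by
  have := hF.cont
  fun_prop

lemma quarterFreq_sq_add_pos (hL : 0 < L) (n : ℤ) : 0 < quarterFreq R n ^ 2 + L := by
  positivity

lemma QuarterWaveField.periodic_cosCoeff (hF : QuarterWaveField R T F) (n : ℤ) :
    Function.Periodic (fun τ => cosCoeff R (fun x => F x τ) n) T := fun t => by
  simp only [hF.periodic]

lemma hasDerivAt_modeCoeff (hT : 0 < T) (hL : 0 < L) (hF : QuarterWaveField R T F)
    (n : ℤ) (t : ℝ) :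
    HasDerivAt (modeCoeff R T L F · n)
      (-(quarterFreq R n ^ 2 + L) * modeCoeff R T L F t n + cosCoeff R (fun x => F x t) n) t := by
  have hcont : Continuous fun τ => cosCoeff R (fun x => F x τ) n := by
    refine continuous_const.mul ?_
    apply intervalIntegral.continuous_parametric_intervalIntegral_of_continuous'
    have := hF.cont
    fun_prop
  exact hasDerivAt_periodicResponse hT (quarterFreq_sq_add_pos hL n) hcont
    (hF.periodic_cosCoeff n) t

lemma modeCoeff_add_period (hF : QuarterWaveField R T F) (t : ℝ) :
    modeCoeff R T L F (t + T) = modeCoeff R T L F t :=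
  funext fun n => periodic_periodicResponse (hF.periodic_cosCoeff n) t

lemma modeCoeff_eq_zero (hR : 0 < R) (hT : 0 < T) (hL : 0 < L) (hF : QuarterWaveField R T F)
    (t : ℝ) {n : ℤ} (hn : Even n) : modeCoeff R T L F t n = 0 := by
  have h := abs_periodicResponse_le (φ := fun τ => cosCoeff R (fun x => F x τ) n) (B := 0) hT
    (quarterFreq_sq_add_pos (R := R) hL n)
    (fun τ => by rw [(hF.quarterWave τ).cosCoeff_eq_zero hR hn, abs_zero]) t
  rw [zero_div] at h
  exact abs_nonpos_iff.1 h

/-- The factor lost in passing from a second-difference bound of exponent `s` on `F` to the decay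
of the modes of the solution. -/
def modeConst (R s : ℝ) : ℝ := (2 * R) ^ s / 4 * (2 * R / Real.pi) ^ 2

lemma modeConst_nonneg (hR : 0 < R) : 0 ≤ modeConst R s := by
  unfold modeConst; positivity

/-- Inverting `∂_xx` gains two powers of `n`. -/
lemma powerDecay_modeCoeff (hR : 0 < R) (hT : 0 < T) (hL : 0 < L) (hF : QuarterWaveField R T F)
    (hD : ∀ t, SecondDiffBound (fun x => F x t) s D) (t : ℝ) :
    PowerDecay (modeCoeff R T L F t) (s + 2) (modeConst R s * D) := by
  intro n
  have hD₀ := (hD 0).const_nonneg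
  have hK := modeConst_nonneg (s := s) hR
  rcases eq_or_ne n 0 with rfl | hn
  · rw [modeCoeff_eq_zero hR hT hL hF t Even.zero, abs_zero]; positivity
  have hn₀ : 0 < |(n : ℝ)| := by positivity
  have := Real.pi_pos
  have hfreq : (Real.pi / (2 * R)) ^ 2 * |(n : ℝ)| ^ 2 ≤ quarterFreq R n ^ 2 + L := by
    rw [← sq_abs (quarterFreq R n), abs_quarterFreq hR, mul_pow]; linarith
  calc |modeCoeff R T L F t n|
      ≤ D / 4 * (2 * R) ^ s * |(n : ℝ)| ^ (-s) / (quarterFreq R n ^ 2 + L) :=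
        abs_periodicResponse_le hT (quarterFreq_sq_add_pos hL n)
          (fun τ => (hD τ).abs_cosCoeff_le hR (hF.continuous_slice τ) (hF.quarterWave τ) n) t
    _ ≤ D / 4 * (2 * R) ^ s * |(n : ℝ)| ^ (-s) / ((Real.pi / (2 * R)) ^ 2 * |(n : ℝ)| ^ 2) := by
        apply div_le_div_of_nonneg_left _ _ hfreq <;> positivity
    _ = _ := by
        rw [neg_add, Real.rpow_add hn₀, Real.rpow_neg hn₀.le 2, Real.rpow_ofNat, modeConst]
        field_simp

lemma cosSeries_modeCoeff_deriv (hR : 0 < R) (hT : 0 < T) (hL : 0 < L) (hs : 1 < s)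
    (hF : QuarterWaveField R T F) (hD : ∀ t, SecondDiffBound (fun x => F x t) s D) (x t : ℝ) :
    cosSeries R (fun n => -(quarterFreq R n ^ 2 + L) * modeCoeff R T L F t n
        + cosCoeff R (fun x => F x t) n) x
      = cosSeries R (fun n => quarterFreq R n * -(quarterFreq R n * modeCoeff R T L F t n)) x
        - L * heatSol R T L F x t + F x t := by
  have hmode := powerDecay_modeCoeff hR hT hL hF hD t
  have hsource := fun n =>
    (hD t).abs_cosCoeff_le hR (hF.continuous_slice t) (hF.quarterWave t) n
  have hxx := ((hmode.mul_quarterFreq hR).neg.mul_quarterFreq hR).hasSum_cosSeries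
    (R := R) (by linarith) x
  have hsol := (hmode.hasSum_cosSeries (R := R) (by linarith) x).mul_left L
  have hF' := hasSum_cosCoeff hR (hF.continuous_slice t) (hF.quarterWave t).even
    (hF.quarterWave t).periodic (PowerDecay.summable hsource hs) x
  rw [heatSol, ← ((hxx.sub hsol).add hF').tsum_eq]
  exact tsum_congr fun n => by ring

lemma linearSol_heatSol (hR : 0 < R) (hT : 0 < T) (hL : 0 < L) (hs : 1 < s)
    (hF : QuarterWaveField R T F) (hD : ∀ t, SecondDiffBound (fun x => F x t) s D) :
    LinearSol R T L F (heatSol R T L F)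
      (fun x t => sinSeries R (fun n => -(quarterFreq R n * modeCoeff R T L F t n)) x)
      (fun x t => cosSeries R
        (fun n => quarterFreq R n * -(quarterFreq R n * modeCoeff R T L F t n)) x) := by
  have hmode := powerDecay_modeCoeff hR hT hL hF hD
  have hfreq := fun t => ((hmode t).mul_quarterFreq hR).neg
  refine ⟨⟨?_, ?_, fun t => quarterWave_cosSeries hR
    fun n hn => modeCoeff_eq_zero hR hT hL hF t hn⟩, ?_, ?_, ?_⟩
  · exact continuous_cosSeries (fun n => continuous_iff_continuousAt.2
      fun t => (hasDerivAt_modeCoeff hT hL hF n t).continuousAt) (by linarith) hmode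
  · intro x t
    rw [heatSol, modeCoeff_add_period hF, heatSol]
  · exact fun x t => hasDerivAt_cosSeries hR (hmode t) (by linarith) x
  · exact fun x t => hasDerivAt_sinSeries hR (hfreq t) (by linarith) x
  · intro x t
    have hsource : ∀ t, PowerDecay (cosCoeff R fun x => F x t) s (D / 4 * (2 * R) ^ s) :=
      fun t n => (hD t).abs_cosCoeff_le hR (hF.continuous_slice t) (hF.quarterWave t) n
    have hdiff : ∀ t, PowerDecay (fun n => -(quarterFreq R n ^ 2 + L) * modeCoeff R T L F t n
        + cosCoeff R (fun x => F x t) n) s _ := fun t n => by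
      convert ((((hfreq t).mul_quarterFreq hR).weaken (σ := s) (by linarith)
      (by linarith)).add (((hmode t).weaken (σ := s) (by linarith) (by linarith)).const_mul
        (-L))).add (hsource t) n using 2
      ring
    exact (hasDerivAt_cosSeries_param hs (hasDerivAt_modeCoeff hT hL hF) hdiff
      ((hmode t).weaken (by linarith) (by linarith)) x).congr_deriv
      (cosSeries_modeCoeff_deriv hR hT hL hs hF hD x t)

lemma secondDiffBound_zero_of_abs_le {g : ℝ → ℝ} {M : ℝ} (hM : ∀ x, |g x| ≤ M) :
    SecondDiffBound g 0 (4 * M) := by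
  intro x h _
  rw [Real.rpow_zero, mul_one, abs_le]
  have h₁ := abs_le.1 (hM (x + h))
  have h₂ := abs_le.1 (hM (x - h))
  have h₃ := abs_le.1 (hM x)
  constructor <;> linarith [h₁.1, h₁.2, h₂.1, h₂.2, h₃.1, h₃.2]

/-- The exponents `5 / 8` and `5 / 4` are a choice of `σ < 1` and `2 σ > 1`. -/
theorem exists_linearSol (hR : 0 < R) (hT : 0 < T) (hL : 0 < L) :
    ∃ C : ℝ, 0 ≤ C ∧ ∀ (F : ℝ → ℝ → ℝ) (D : ℝ), QuarterWaveField R T F →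
      (∀ t, SecondDiffBound (fun x => F x t) (5 / 4) D) →
      ∃ u ux uxx : ℝ → ℝ → ℝ, LinearSol R T L F u ux uxx ∧
        (∀ M, (∀ x t, |F x t| ≤ M) → ∀ t x y, |u x t - u y t| ≤ C * M * |x - y| ^ (5 / 8 : ℝ)) ∧
        (∀ D', (∀ t, SecondDiffBound (fun x => F x t) (5 / 8) D') →
          ∀ t, SecondDiffBound (fun x => u x t) (5 / 4) (C * D')) ∧
        (∀ x t, |uxx x t| ≤ C * D) := by
  have hK := fun s => modeConst_nonneg (s := s) hR
  have hz := intZeta_nonneg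
  set C₁ : ℝ := 2 * (Real.pi / (2 * R)) ^ (5 / 8 : ℝ) * intZeta (0 + 2 - 5 / 8)
    * (4 * modeConst R 0)
  set C₂ : ℝ := 4 * (Real.pi / (2 * R)) ^ (5 / 4 : ℝ) * intZeta (5 / 8 + 2 - 5 / 4)
    * modeConst R (5 / 8)
  set C₃ : ℝ := Real.pi / (2 * R) * (Real.pi / (2 * R) * modeConst R (5 / 4))
    * intZeta (5 / 4 + 2 - 1 - 1)
  have hC₁ : 0 ≤ C₁ := by have := hz (0 + 2 - 5 / 8); have := hK 0; positivity
  have hC₂ : 0 ≤ C₂ := by have := hz (5 / 8 + 2 - 5 / 4); have := hK (5 / 8); positivity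
  have hC₃ : 0 ≤ C₃ := by have := hz (5 / 4 + 2 - 1 - 1); have := hK (5 / 4); positivity
  refine ⟨C₁ + C₂ + C₃, by positivity, fun F D hF hD => ⟨_, _, _,
    linearSol_heatSol hR hT hL (by norm_num) hF hD, fun M hM t x y => ?_, fun D' hD' t => ?_,
    fun x t => ?_⟩⟩
  · have hM₀ : 0 ≤ M := (abs_nonneg _).trans (hM 0 0)
    have hmode := powerDecay_modeCoeff hR hT hL hF
      (fun t => secondDiffBound_zero_of_abs_le fun x => hM x t) t
    refine (abs_cosSeries_sub_le hR hmode (σ := 5 / 8) (by norm_num) (by norm_num)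
      (by norm_num) x y).trans (mul_le_mul_of_nonneg_right ?_ (by positivity))
    calc _ = C₁ * M := by ring
      _ ≤ _ := mul_le_mul_of_nonneg_right (by linarith) hM₀
  · have hmode := powerDecay_modeCoeff hR hT hL hF hD' t
    refine (secondDiffBound_cosSeries hR hmode (σ := 5 / 4) (by norm_num) (by norm_num)
      (by norm_num)).mono ?_
    calc _ = C₂ * D' := by ring
      _ ≤ _ := mul_le_mul_of_nonneg_right (by linarith) (hD' 0).const_nonneg
  · have hmode := powerDecay_modeCoeff hR hT hL hF hD t
    refine (abs_cosSeries_le ((hmode.mul_quarterFreq hR).neg.mul_quarterFreq hR)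
      (by norm_num) x).trans ?_
    calc _ = C₃ * D := by ring
      _ ≤ _ := mul_le_mul_of_nonneg_right (by linarith) (hD 0).const_nonneg

end

section

lemma tendsto_symmDiffQuotient {g : ℝ → ℝ} {g' x : ℝ} (hg : HasDerivAt g g' x) :
    Tendsto (fun h => (g (x + h) - g (x - h)) / h) (𝓝[>] 0) (𝓝 (2 * g')) := by
  have hright : HasDerivAt (fun h => g (x + h)) g' 0 := by
    refine HasDerivAt.comp_const_add x 0 ?_
    rwa [add_zero]
  have hleft : HasDerivAt (fun h => g (x - h)) (-g') 0 := by
    refine HasDerivAt.comp_const_sub x 0 ?_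
    rwa [sub_zero]
  have hslope := hasDerivAt_iff_tendsto_slope_zero.1 (hright.sub hleft)
  refine ((hslope.mono_left (nhdsWithin_mono _ fun h hh => ne_of_gt hh)).congr fun h => ?_).trans_eq
    (by rw [sub_neg_eq_add, two_mul])
  simp only [Pi.sub_apply, zero_add, add_zero, sub_zero, sub_self, smul_eq_mul]
  rw [inv_mul_eq_div]

lemma tendsto_secondDiffQuotient {w wx : ℝ → ℝ} {x wxx : ℝ} (hw : ∀ y, HasDerivAt w (wx y) y)
    (hwx : HasDerivAt wx wxx x) :
    Tendsto (fun h => (w (x + h) + w (x - h) - 2 * w x) / h ^ 2) (𝓝[>] 0) (𝓝 wxx) := by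
  have hcont : Continuous w := continuous_iff_continuousAt.2 fun y => (hw y).continuousAt
  refine HasDerivAt.lhopital_zero_nhdsGT (f' := fun h => wx (x + h) - wx (x - h))
    (g' := fun h => 2 * h) (Eventually.of_forall fun h => ?_)
    (Eventually.of_forall fun h => by simpa using hasDerivAt_pow 2 h) ?_ ?_ ?_ ?_
  · simpa [sub_eq_add_neg] using
      (((hw (x + h)).comp_const_add x h).add ((hw (x - h)).comp_const_sub x h)).sub_const (2 * w x)
  · filter_upwards [self_mem_nhdsWithin] with h hh
    exact mul_ne_zero two_ne_zero (ne_of_gt hh)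
  · refine ((Continuous.tendsto (by fun_prop) 0).mono_left nhdsWithin_le_nhds).trans_eq ?_
    rw [add_zero, sub_zero, ← two_mul, sub_self]
  · refine ((continuous_pow 2).tendsto 0).mono_left nhdsWithin_le_nhds |>.trans_eq ?_
    rw [zero_pow two_ne_zero]
  · refine ((tendsto_symmDiffQuotient hwx).div_const 2).congr (fun h => ?_) |>.trans_eq ?_
    · rw [div_div, mul_comm h]
    · rw [mul_div_cancel_left₀ _ two_ne_zero]

lemma eventually_add_sub_mem_Ioo {a b x : ℝ} (hx : x ∈ Ioo a b) :
    ∀ᶠ h in 𝓝[>] (0 : ℝ), x + h ∈ Ioo a b ∧ x - h ∈ Ioo a b := by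
  refine eventually_nhdsWithin_of_eventually_nhds (Eventually.and ?_ ?_)
  · exact (by fun_prop : Continuous fun h => x + h).continuousAt.eventually_mem
      (isOpen_Ioo.mem_nhds (by simpa using hx))
  · exact (by fun_prop : Continuous fun h => x - h).continuousAt.eventually_mem
      (isOpen_Ioo.mem_nhds (by simpa using hx))

lemma nonneg_of_isMinOn_Icc {w wx : ℝ → ℝ} {a b x wxx : ℝ} (hx : x ∈ Ioo a b)
    (hw : ∀ y, HasDerivAt w (wx y) y) (hwx : HasDerivAt wx wxx x)
    (hmin : IsMinOn w (Icc a b) x) : 0 ≤ wxx := by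
  refine ge_of_tendsto (tendsto_secondDiffQuotient hw hwx) ?_
  filter_upwards [eventually_add_sub_mem_Ioo hx] with h ⟨h₁, h₂⟩
  have := isMinOn_iff.1 hmin _ (Ioo_subset_Icc_self h₁)
  have := isMinOn_iff.1 hmin _ (Ioo_subset_Icc_self h₂)
  exact div_nonneg (by linarith) (sq_nonneg h)

lemma exists_forall_le_of_periodic {T : ℝ} (hT : 0 < T) {g : ℝ → ℝ} (hg : Continuous g)
    (hper : Function.Periodic g T) : ∃ t₀, ∀ t, g t ≤ g t₀ := by
  obtain ⟨t₀, -, h⟩ := isCompact_Icc.exists_isMaxOn (nonempty_Icc.2 hT.le)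
    (hg.continuousOn (s := Icc 0 T))
  refine ⟨t₀, fun t => ?_⟩
  obtain ⟨s, hs, hst⟩ := hper.exists_mem_Ico₀ hT t
  rw [hst]
  exact h (Ico_subset_Icc_self hs)

lemma exists_pos_forall_le_of_periodic {T : ℝ} (hT : 0 < T) {g : ℝ → ℝ} (hg : Continuous g)
    (hper : Function.Periodic g T) (hpos : ∀ t, 0 < g t) : ∃ δ > 0, ∀ t, δ ≤ g t := by
  obtain ⟨t₀, h⟩ := exists_forall_le_of_periodic hT hg.neg (fun t => by simp [hper t])
  exact ⟨g t₀, hpos t₀, fun t => neg_le_neg_iff.1 (h t)⟩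

lemma nonneg_of_no_interior_min {T a b : ℝ} (hT : 0 < T) {z : ℝ → ℝ → ℝ}
    (hz : Continuous fun p : ℝ × ℝ => z p.1 p.2) (hper : ∀ x t, z x (t + T) = z x t)
    (ha : ∀ t, 0 ≤ z a t) (hb : ∀ t, 0 ≤ z b t)
    (hmin : ∀ x ∈ Ioo a b, ∀ t, z x t < 0 → ¬ ∀ y ∈ Icc a b, ∀ τ, z x t ≤ z y τ) :
    ∀ x ∈ Icc a b, ∀ t, 0 ≤ z x t := by
  intro x hx t
  by_contra! hneg
  obtain ⟨⟨x₀, t₀⟩, hp, hpm⟩ := (isCompact_Icc.prod isCompact_Icc).exists_isMinOn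
    (⟨(x, 0), hx, left_mem_Icc.2 hT.le⟩ : (Icc a b ×ˢ Icc 0 T).Nonempty) hz.continuousOn
  have hglob : ∀ y ∈ Icc a b, ∀ τ, z x₀ t₀ ≤ z y τ := fun y hy τ => by
    obtain ⟨s, hs, hτ⟩ := Function.Periodic.exists_mem_Ico₀ (hper y) hT τ
    rw [hτ]
    exact hpm (⟨hy, Ico_subset_Icc_self hs⟩ : (y, s) ∈ Icc a b ×ˢ Icc 0 T)
  have hlt := (hglob x hx t).trans_lt hneg
  have hne_a : a ≠ x₀ := fun h => by rw [← h] at hlt; exact (ha _).not_gt hlt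
  have hne_b : x₀ ≠ b := fun h => by rw [h] at hlt; exact (hb _).not_gt hlt
  exact hmin x₀ ⟨hp.1.1.lt_of_ne hne_a, hp.1.2.lt_of_ne hne_b⟩ t₀ hlt hglob

end

namespace PeriodicC21

variable {T L a b : ℝ} {z zx zxx zt w wx wxx wt : ℝ → ℝ → ℝ}

lemma sub (hz : PeriodicC21 T z zx zxx zt) (hw : PeriodicC21 T w wx wxx wt) :
    PeriodicC21 T (fun x t => z x t - w x t) (fun x t => zx x t - wx x t)
      (fun x t => zxx x t - wxx x t) (fun x t => zt x t - wt x t) where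
  cont := hz.cont.sub hw.cont
  periodic x t := by rw [hz.periodic, hw.periodic]
  hasDerivAt_x x t := (hz.hasDerivAt_x x t).sub (hw.hasDerivAt_x x t)
  hasDerivAt_xx x t := (hz.hasDerivAt_xx x t).sub (hw.hasDerivAt_xx x t)
  hasDerivAt_t x t := (hz.hasDerivAt_t x t).sub (hw.hasDerivAt_t x t)

lemma reflect (hz : PeriodicC21 T z zx zxx zt) (l : ℝ) :
    PeriodicC21 T (fun x t => z (2 * l - x) t) (fun x t => -zx (2 * l - x) t)
      (fun x t => zxx (2 * l - x) t) (fun x t => zt (2 * l - x) t) where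
  cont := hz.cont.comp (by fun_prop : Continuous fun p : ℝ × ℝ => (2 * l - p.1, p.2))
  periodic x t := hz.periodic _ t
  hasDerivAt_x x t := (hz.hasDerivAt_x (2 * l - x) t).comp_const_sub (2 * l) x
  hasDerivAt_xx x t :=
    ((hz.hasDerivAt_xx (2 * l - x) t).comp_const_sub (2 * l) x).neg.congr_deriv (neg_neg _)
  hasDerivAt_t x t := hz.hasDerivAt_t _ t

lemma of_time {g g' : ℝ → ℝ} (hper : Function.Periodic g T) (hg : ∀ t, HasDerivAt g (g' t) t) :
    PeriodicC21 T (fun _ t => g t) (fun _ _ => 0) (fun _ _ => 0) (fun _ t => g' t) where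
  cont := (continuous_iff_continuousAt.2 fun t => (hg t).continuousAt).comp continuous_snd
  periodic _ t := hper t
  hasDerivAt_x x t := hasDerivAt_const x (g t)
  hasDerivAt_xx x _ := hasDerivAt_const x 0
  hasDerivAt_t _ t := hg t

lemma of_space {g g' g'' : ℝ → ℝ} (hg : ∀ x, HasDerivAt g (g' x) x)
    (hg' : ∀ x, HasDerivAt g' (g'' x) x) :
    PeriodicC21 T (fun x _ => g x) (fun x _ => g' x) (fun x _ => g'' x) (fun _ _ => 0) where
  cont := (continuous_iff_continuousAt.2 fun x => (hg x).continuousAt).comp continuous_fst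
  periodic _ _ := rfl
  hasDerivAt_x x _ := hg x
  hasDerivAt_xx x _ := hg' x
  hasDerivAt_t x t := hasDerivAt_const t (g x)

theorem nonneg (hT : 0 < T) (hL : 0 < L) (hz : PeriodicC21 T z zx zxx zt)
    (ha : ∀ t, 0 ≤ z a t) (hb : ∀ t, 0 ≤ z b t)
    (hpde : ∀ x ∈ Ioo a b, ∀ t, zxx x t - L * z x t ≤ zt x t) :
    ∀ x ∈ Icc a b, ∀ t, 0 ≤ z x t := by
  refine nonneg_of_no_interior_min hT hz.cont hz.periodic ha hb fun x hx t hneg hmin => ?_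
  have hxI := Ioo_subset_Icc_self hx
  have htime : zt x t = 0 := IsLocalMin.hasDerivAt_eq_zero
    (Eventually.of_forall fun τ => hmin x hxI τ) (hz.hasDerivAt_t x t)
  have hspace : 0 ≤ zxx x t := nonneg_of_isMinOn_Icc hx (fun y => hz.hasDerivAt_x y t)
    (hz.hasDerivAt_xx x t) fun y hy => hmin y hy t
  have := hpde x hx t
  have := mul_neg_of_pos_of_neg hL hneg
  linarith

lemma sinh_le {δ : ℝ} (hT : 0 < T) (hL : 0 < L) (hab : a < b) (hz : PeriodicC21 T z zx zxx zt)
    (ha : ∀ t, 0 ≤ z a t) (hb : ∀ t, δ ≤ z b t)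
    (hpde : ∀ x ∈ Ioo a b, ∀ t, zxx x t - L * z x t ≤ zt x t) :
    ∀ x ∈ Icc a b, ∀ t, δ / Real.sinh (√L * (b - a)) * Real.sinh (√L * (x - a)) ≤ z x t := by
  set κ := √L
  have hκ : 0 < κ := Real.sqrt_pos.2 hL
  have hs : 0 < Real.sinh (κ * (b - a)) := Real.sinh_pos_iff.2 (mul_pos hκ (sub_pos.2 hab))
  set c := δ / Real.sinh (κ * (b - a)) with hc
  have hlin : ∀ x, HasDerivAt (fun y => κ * (y - a)) κ x := fun x => by
    simpa using ((hasDerivAt_id x).sub_const a).const_mul κ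
  have hbarrier := of_space (T := T) (fun x => (hlin x).sinh.const_mul c)
    fun x => ((hlin x).cosh.mul_const κ).const_mul c
  have hdiff := (hz.sub hbarrier).nonneg hT hL (a := a) (b := b)
    (fun t => by simpa using ha t)
    (fun t => by rw [hc, div_mul_cancel₀ _ hs.ne']; linarith [hb t])
    (fun x hx t => by
      have hκL : κ * κ = L := Real.mul_self_sqrt hL.le
      rw [← hκL]
      linarith [hκL ▸ hpde x hx t])
  exact fun x hx t => sub_nonneg.1 (hdiff x hx t)

/-- A quantitative Hopf lemma. -/
lemma exists_pos_linear_le (hT : 0 < T) (hL : 0 < L) (hab : a < b)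
    (hz : PeriodicC21 T z zx zxx zt) (ha : ∀ t, 0 ≤ z a t) (hb : ∀ t, 0 < z b t)
    (hpde : ∀ x ∈ Ioo a b, ∀ t, zxx x t - L * z x t ≤ zt x t) :
    ∃ c > 0, ∀ x ∈ Icc a b, ∀ t, c * (x - a) ≤ z x t := by
  have := hz.cont
  obtain ⟨δ, hδ, hδz⟩ := exists_pos_forall_le_of_periodic hT (g := z b) (by fun_prop)
    (hz.periodic b) hb
  have hκ : 0 < √L := Real.sqrt_pos.2 hL
  have : 0 < Real.sinh (√L * (b - a)) := Real.sinh_pos_iff.2 (mul_pos hκ (sub_pos.2 hab))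
  refine ⟨δ / Real.sinh (√L * (b - a)) * √L, by positivity, fun x hx t => ?_⟩
  refine le_trans ?_ (hz.sinh_le hT hL hab ha hδz hpde x hx t)
  rw [mul_assoc]
  exact mul_le_mul_of_nonneg_left
    (Real.self_le_sinh_iff.2 (mul_nonneg hκ.le (sub_nonneg.2 hx.1))) (by positivity)

end PeriodicC21

lemma LinearSol.le_add {R T L ε : ℝ} {F₁ F₂ u₁ ux₁ uxx₁ u₂ ux₂ uxx₂ : ℝ → ℝ → ℝ} (hT : 0 < T)
    (hL : 0 < L) (h₁ : LinearSol R T L F₁ u₁ ux₁ uxx₁) (h₂ : LinearSol R T L F₂ u₂ ux₂ uxx₂)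
    (hε : 0 ≤ ε) (hF : ∀ x ∈ Icc (-R) R, ∀ t, F₁ x t ≤ F₂ x t + L * ε) :
    ∀ x ∈ Icc (-R) R, ∀ t, u₁ x t ≤ u₂ x t + ε := by
  have hdiff := ((h₂.toPeriodicC21.sub h₁.toPeriodicC21).sub
    (.of_time (g := fun _ => -ε) (fun _ => rfl) fun t => hasDerivAt_const t (-ε))).nonneg
    hT hL (a := -R) (b := R)
    (fun t => by
      have := (h₁.quarterWave t).apply_left
      have := (h₂.quarterWave t).apply_left
      linarith)
    (fun t => by
      have := (h₁.quarterWave t).apply_right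
      have := (h₂.quarterWave t).apply_right
      linarith)
    (fun x hx t => by linarith [hF x (Ioo_subset_Icc_self hx) t])
  exact fun x hx t => by linarith [hdiff x hx t]

/-- `g` has a first-order Taylor expansion on `s` whose remainder is at most `C * (b - a) ^ 2`. -/
def HasQuadraticRemainder (C : ℝ) (s : Set ℝ) (g : ℝ → ℝ) : Prop :=
  ∃ k : ℝ → ℝ, ∀ a ∈ s, ∀ b ∈ s, |g b - g a - k a * (b - a)| ≤ C * (b - a) ^ 2

lemma HasQuadraticRemainder.abs_midpoint_le {C a b : ℝ} {s : Set ℝ} {g : ℝ → ℝ}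
    (hg : HasQuadraticRemainder C s g) (hs : Convex ℝ s) (ha : a ∈ s) (hb : b ∈ s) :
    |g a + g b - 2 * g ((a + b) / 2)| ≤ C / 2 * (a - b) ^ 2 := by
  obtain ⟨k, hk⟩ := hg
  have hm : (a + b) / 2 ∈ s := by
    convert hs ha hb (by norm_num : (0 : ℝ) ≤ 1 / 2) (by norm_num : (0 : ℝ) ≤ 1 / 2)
      (by norm_num) using 1
    simp only [smul_eq_mul]; ring
  have h₁ := abs_le.1 (hk _ hm a ha)
  have h₂ := abs_le.1 (hk _ hm b hb)
  rw [abs_le]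
  constructor <;> nlinarith [h₁.1, h₁.2, h₂.1, h₂.2]

/-- A `T`-periodic reaction term, odd, bounded by `M`, `Λ`-Lipschitz and with quadratic Taylor
remainder on `[-K, K]`, together with a positive `T`-periodic solution `q ≤ K` of `q' = G(t, q)`. -/
structure OddReaction (T Λ M C K : ℝ) (G : ℝ → ℝ → ℝ) (q : ℝ → ℝ) : Prop where
  period_pos : 0 < T
  lip_pos : 0 < Λ
  remainder_nonneg : 0 ≤ C
  cont : Continuous fun p : ℝ × ℝ => G p.1 p.2
  periodic : ∀ t w, G (t + T) w = G t w
  odd : ∀ t w, G t (-w) = -G t w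
  lip : ∀ t a b, |G t a - G t b| ≤ Λ * |a - b|
  bdd : ∀ t w, |G t w| ≤ M
  remainder : ∀ t, HasQuadraticRemainder C (Icc (-K) K) (G t)
  q_periodic : ∀ t, q (t + T) = q t
  q_pos : ∀ t, 0 < q t
  q_le : ∀ t, q t ≤ K
  q_ode : ODESolOn G q univ

/-- Quarter-wave fields that decrease away from the origin on `[0, R]` and have the spatial
regularity propagated by the iteration. -/
structure Profile (R T H D : ℝ) (u : ℝ → ℝ → ℝ) : Prop extends QuarterWaveField R T u where
  anti : ∀ t, AntitoneOn (fun x => u x t) (Icc 0 R)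
  holder : ∀ t x y, |u x t - u y t| ≤ H * |x - y| ^ (5 / 8 : ℝ)
  secondDiff : ∀ t, SecondDiffBound (fun x => u x t) (5 / 4) D

/-- A viscosity subsolution `0 ≤ v ≤ q` of `v_t = v_xx + G(t, v)` on `(-R, R)`: the differential
inequality is required of time-periodic test functions touching `v` from above, up to a constant. -/
structure Subsolution (R T : ℝ) (G : ℝ → ℝ → ℝ) (q : ℝ → ℝ) (H D : ℝ) (v : ℝ → ℝ → ℝ) : Prop
    extends Profile R T H D v where
  nonneg : ∀ x ∈ Icc (-R) R, ∀ t, 0 ≤ v x t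
  le : ∀ x ∈ Icc (-R) R, ∀ t, v x t ≤ q t
  pos : ∀ t, 0 < v 0 t
  test : ∀ w wx wxx wt : ℝ → ℝ → ℝ, PeriodicC21 T w wx wxx wt → ∀ x ∈ Ioo (-R) R, ∀ t,
    (∀ y ∈ Icc (-R) R, ∀ τ, w x t - v x t ≤ w y τ - v y τ) → wt x t ≤ wxx x t + G t (v x t)

/-- Profiles between `v` and `q` on `[-R, R]`: the class in which the iteration runs. -/
structure Between (R T : ℝ) (v : ℝ → ℝ → ℝ) (q : ℝ → ℝ) (H D : ℝ) (u : ℝ → ℝ → ℝ) : Prop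
    extends Profile R T H D u where
  lo : ∀ x ∈ Icc (-R) R, ∀ t, v x t ≤ u x t
  hi : ∀ x ∈ Icc (-R) R, ∀ t, u x t ≤ q t

/-- The source `G(t, u) + Λ u`, nondecreasing in `u`, for which `u_t = u_xx + G(t, u)` reads
`u_t = u_xx - Λ u + shiftedSource Λ G u`. -/
def shiftedSource (Λ : ℝ) (G u : ℝ → ℝ → ℝ) (x t : ℝ) : ℝ := G t (u x t) + Λ * u x t

section

variable {R T Λ M C K H D H' D' l : ℝ} {G : ℝ → ℝ → ℝ} {q : ℝ → ℝ}
  {v u u₁ u₂ u' ux uxx w wx wxx : ℝ → ℝ → ℝ}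

lemma Profile.mono (hu : Profile R T H D u) (hH : H ≤ H') (hD : D ≤ D') : Profile R T H' D' u where
  toQuarterWaveField := hu.toQuarterWaveField
  anti := hu.anti
  holder t x y := (hu.holder t x y).trans (mul_le_mul_of_nonneg_right hH (by positivity))
  secondDiff t := (hu.secondDiff t).mono hD

lemma Profile.le_reflect (hu : Profile R T H D u) (hl : 0 ≤ l) {x : ℝ} (hx : x ∈ Icc l R) (t : ℝ) :
    u x t ≤ u (2 * l - x) t := by
  obtain ⟨hlx, hxR⟩ := hx
  rcases le_total 0 (2 * l - x) with h | h
  · exact hu.anti t ⟨h, by linarith⟩ ⟨by linarith, hxR⟩ (by linarith)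
  · rw [← (hu.quarterWave t).even (2 * l - x)]
    exact hu.anti t ⟨by linarith, by linarith⟩ ⟨by linarith, hxR⟩ (by linarith)

lemma sq_sub_le_of_holder {F : ℝ → ℝ} (hF : ∀ x y, |F x - F y| ≤ H * |x - y| ^ (5 / 8 : ℝ))
    {x h : ℝ} (hh : 0 ≤ h) : (F (x + h) - F (x - h)) ^ 2 ≤ 4 * H ^ 2 * h ^ (5 / 4 : ℝ) := by
  have htwo : (2 : ℝ) ^ (5 / 4 : ℝ) ≤ 2 ^ (2 : ℝ) :=
    Real.rpow_le_rpow_of_exponent_le (by norm_num) (by norm_num)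
  have hF' := hF (x + h) (x - h)
  rw [show x + h - (x - h) = 2 * h by ring, abs_of_nonneg (by positivity : 0 ≤ 2 * h)] at hF'
  calc (F (x + h) - F (x - h)) ^ 2 ≤ (H * (2 * h) ^ (5 / 8 : ℝ)) ^ 2 := sq_le_sq.2
        (hF'.trans (le_abs_self _))
    _ = H ^ 2 * (2 ^ (5 / 4 : ℝ) * h ^ (5 / 4 : ℝ)) := by
        rw [mul_pow, ← Real.rpow_mul_natCast (by positivity), ← Real.mul_rpow zero_le_two hh]
        norm_num
    _ ≤ H ^ 2 * (2 ^ (2 : ℝ) * h ^ (5 / 4 : ℝ)) := by gcongr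
    _ = _ := by norm_num; ring

/-- The first-order terms cancel in the second difference of `g ∘ F`, which leaves the square of
the Hölder increment. -/
lemma SecondDiffBound.comp {F g : ℝ → ℝ} {L : ℝ} (hD : SecondDiffBound F (5 / 4) D) (hL : 0 ≤ L)
    (hC : 0 ≤ C) (hF : ∀ x y, |F x - F y| ≤ H * |x - y| ^ (5 / 8 : ℝ))
    (hlip : ∀ a b, |g a - g b| ≤ L * |a - b|)
    (hmid : ∀ x y, |g (F x) + g (F y) - 2 * g ((F x + F y) / 2)| ≤ C * (F x - F y) ^ 2) :
    SecondDiffBound (fun x => g (F x)) (5 / 4) (4 * C * H ^ 2 + L * D) := by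
  intro x h hh
  set a := F (x + h)
  set b := F (x - h)
  have hsq : (a - b) ^ 2 ≤ 4 * H ^ 2 * h ^ (5 / 4 : ℝ) := sq_sub_le_of_holder hF hh
  have hlin : |2 * (g ((a + b) / 2) - g (F x))| ≤ L * |a + b - 2 * F x| := by
    have := hlip ((a + b) / 2) (F x)
    rw [show (a + b) / 2 - F x = (a + b - 2 * F x) / 2 by ring, abs_div, abs_two] at this
    rw [abs_mul, abs_two]
    linarith
  calc |g a + g b - 2 * g (F x)|
      = |(g a + g b - 2 * g ((a + b) / 2)) + 2 * (g ((a + b) / 2) - g (F x))| := by ring_nf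
    _ ≤ C * (a - b) ^ 2 + L * |a + b - 2 * F x| :=
        (abs_add_le _ _).trans (add_le_add (hmid _ _) hlin)
    _ ≤ C * (4 * H ^ 2 * h ^ (5 / 4 : ℝ)) + L * (D * h ^ (5 / 4 : ℝ)) := by
        gcongr
        exact hD x h hh
    _ = _ := by ring

namespace OddReaction

lemma apply_zero (hG : OddReaction T Λ M C K G q) (t : ℝ) : G t 0 = 0 := by
  have := hG.odd t 0
  rw [neg_zero] at this
  linarith

lemma shift_mono (hG : OddReaction T Λ M C K G q) (t : ℝ) {a b : ℝ} (h : a ≤ b) :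
    G t a + Λ * a ≤ G t b + Λ * b := by
  have hlip := hG.lip t a b
  rw [abs_of_nonpos (sub_nonpos.2 h)] at hlip
  linarith [le_abs_self (G t a - G t b)]

lemma abs_shift_sub_le (hG : OddReaction T Λ M C K G q) (t a b : ℝ) :
    |(G t a + Λ * a) - (G t b + Λ * b)| ≤ 2 * Λ * |a - b| := by
  have hΛ := hG.lip_pos
  calc |(G t a + Λ * a) - (G t b + Λ * b)| = |(G t a - G t b) + Λ * (a - b)| := by ring_nf
    _ ≤ |G t a - G t b| + |Λ * (a - b)| := abs_add_le _ _
    _ ≤ Λ * |a - b| + Λ * |a - b| := by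
        rw [abs_mul, abs_of_pos hΛ]; exact add_le_add_left (hG.lip t a b) _
    _ = _ := by ring

lemma quarterWaveField_shiftedSource (hG : OddReaction T Λ M C K G q)
    (hu : QuarterWaveField R T u) : QuarterWaveField R T (shiftedSource Λ G u) where
  cont := (hG.cont.comp (continuous_snd.prodMk hu.cont)).add (continuous_const.mul hu.cont)
  periodic x t := by simp only [shiftedSource, hu.periodic, hG.periodic]
  quarterWave t :=
    { even := fun x => by simp only [shiftedSource, (hu.quarterWave t).even x]
      odd := fun x => by
        simp only [shiftedSource, (hu.quarterWave t).odd x, hG.odd]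
        ring }

lemma secondDiffBound_shiftedSource (hG : OddReaction T Λ M C K G q) (hu : Profile R T H D u)
    (hK : ∀ x t, |u x t| ≤ K) (t : ℝ) :
    SecondDiffBound (fun x => shiftedSource Λ G u x t) (5 / 4) (2 * C * H ^ 2 + 2 * Λ * D) := by
  have hΛ := hG.lip_pos
  have hC := hG.remainder_nonneg
  rw [show 2 * C * H ^ 2 = 4 * (C / 2) * H ^ 2 by ring]
  refine (hu.secondDiff t).comp (g := fun w => G t w + Λ * w) (by positivity) (by positivity)
    (hu.holder t) (hG.abs_shift_sub_le t) fun x y => ?_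
  convert (hG.remainder t).abs_midpoint_le (convex_Icc _ _) (abs_le.1 (hK x t))
    (abs_le.1 (hK y t)) using 2
  ring

lemma secondDiffBound_shiftedSource_holder (hG : OddReaction T Λ M C K G q)
    (hu : Profile R T H D u) (t : ℝ) :
    SecondDiffBound (fun x => shiftedSource Λ G u x t) (5 / 8) (4 * Λ * H) := by
  intro x h hh
  have hΛ := hG.lip_pos
  have hbound : ∀ y, |y - x| = h → |shiftedSource Λ G u y t - shiftedSource Λ G u x t|
      ≤ 2 * Λ * (H * h ^ (5 / 8 : ℝ)) := fun y hy =>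
    (hG.abs_shift_sub_le t _ _).trans
      (mul_le_mul_of_nonneg_left (hy ▸ hu.holder t y x) (by positivity))
  calc |shiftedSource Λ G u (x + h) t + shiftedSource Λ G u (x - h) t
        - 2 * shiftedSource Λ G u x t|
      = |(shiftedSource Λ G u (x + h) t - shiftedSource Λ G u x t)
          + (shiftedSource Λ G u (x - h) t - shiftedSource Λ G u x t)| := by ring_nf
    _ ≤ 2 * Λ * (H * h ^ (5 / 8 : ℝ)) + 2 * Λ * (H * h ^ (5 / 8 : ℝ)) :=
        (abs_add_le _ _).trans (add_le_add
          (hbound _ (by rw [add_sub_cancel_left, abs_of_nonneg hh]))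
          (hbound _ (by rw [sub_sub_cancel_left, abs_neg, abs_of_nonneg hh])))
    _ = _ := by ring

lemma linearSol_mono (hG : OddReaction T Λ M C K G q)
    (h₁ : LinearSol R T Λ (shiftedSource Λ G u₁) u' ux uxx)
    (h₂ : LinearSol R T Λ (shiftedSource Λ G u₂) w wx wxx)
    (hle : ∀ x ∈ Icc (-R) R, ∀ t, u₁ x t ≤ u₂ x t) :
    ∀ x ∈ Icc (-R) R, ∀ t, u' x t ≤ w x t := fun x hx t => by
  simpa using h₁.le_add hG.period_pos hG.lip_pos h₂ le_rfl
    (fun x hx t => by rw [mul_zero, add_zero]; exact hG.shift_mono t (hle x hx t)) x hx t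

lemma abs_linearSol_sub_le (hG : OddReaction T Λ M C K G q) {δ : ℝ} (hδ : 0 ≤ δ)
    (h₁ : LinearSol R T Λ (shiftedSource Λ G u₁) u' ux uxx)
    (h₂ : LinearSol R T Λ (shiftedSource Λ G u₂) w wx wxx)
    (hle : ∀ x ∈ Icc (-R) R, ∀ t, |u₁ x t - u₂ x t| ≤ δ) :
    ∀ x ∈ Icc (-R) R, ∀ t, |u' x t - w x t| ≤ 2 * δ := fun x hx t => by
  have hΛ := hG.lip_pos
  have hF : ∀ x ∈ Icc (-R) R, ∀ t,
      |shiftedSource Λ G u₁ x t - shiftedSource Λ G u₂ x t| ≤ Λ * (2 * δ) := fun x hx t =>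
    (hG.abs_shift_sub_le t _ _).trans (by
      linarith [mul_le_mul_of_nonneg_left (hle x hx t) (by positivity : 0 ≤ 2 * Λ)])
  have hup := h₁.le_add hG.period_pos hΛ h₂ (ε := 2 * δ) (by positivity)
    (fun x hx t => by linarith [(abs_le.1 (hF x hx t)).2]) x hx t
  have hdown := h₂.le_add hG.period_pos hΛ h₁ (ε := 2 * δ) (by positivity)
    (fun x hx t => by linarith [(abs_le.1 (hF x hx t)).1]) x hx t
  rw [abs_le]
  constructor <;> linarith

lemma linearSol_le (hG : OddReaction T Λ M C K G q)
    (hs : LinearSol R T Λ (shiftedSource Λ G u) u' ux uxx)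
    (hu : ∀ x ∈ Icc (-R) R, ∀ t, u x t ≤ q t) : ∀ x ∈ Icc (-R) R, ∀ t, u' x t ≤ q t := by
  have hdiff := ((PeriodicC21.of_time hG.q_periodic fun t => hG.q_ode t trivial).sub
    hs.toPeriodicC21).nonneg hG.period_pos hG.lip_pos (a := -R) (b := R)
    (fun t => by rw [(hs.quarterWave t).apply_left, sub_zero]; exact (hG.q_pos t).le)
    (fun t => by rw [(hs.quarterWave t).apply_right, sub_zero]; exact (hG.q_pos t).le)
    (fun x hx t => by
      have := hG.shift_mono t (hu x (Ioo_subset_Icc_self hx) t)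
      simp only [shiftedSource]
      linarith)
  exact fun x hx t => sub_nonneg.1 (hdiff x hx t)

/-- The difference `u'(2l - x) - u'(x)` is a supersolution because the source decreases. -/
lemma reflect_supersolution (hG : OddReaction T Λ M C K G q) (hu : Profile R T H D u) (hl : 0 ≤ l) :
    ∀ x ∈ Ioo l R, ∀ t,
      uxx (2 * l - x) t - uxx x t - Λ * (u' (2 * l - x) t - u' x t)
        ≤ uxx (2 * l - x) t - Λ * u' (2 * l - x) t + shiftedSource Λ G u (2 * l - x) t
          - (uxx x t - Λ * u' x t + shiftedSource Λ G u x t) := fun x hx t => by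
  have := hG.shift_mono t (hu.le_reflect hl (Ioo_subset_Icc_self hx) t)
  simp only [shiftedSource]
  linarith

lemma linearSol_antitoneOn (hG : OddReaction T Λ M C K G q) (hu : Profile R T H D u)
    (hs : LinearSol R T Λ (shiftedSource Λ G u) u' ux uxx)
    (hnonneg : ∀ x ∈ Icc (-R) R, ∀ t, 0 ≤ u' x t) (t : ℝ) :
    AntitoneOn (fun x => u' x t) (Icc 0 R) := by
  have hreflect : ∀ l ∈ Icc 0 R, ∀ x ∈ Icc l R, ∀ t, 0 ≤ u' (2 * l - x) t - u' x t :=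
    fun l ⟨hl₀, hlR⟩ => ((hs.toPeriodicC21.reflect l).sub hs.toPeriodicC21).nonneg
      hG.period_pos hG.lip_pos
      (fun t => by rw [show 2 * l - l = l by ring, sub_self])
      (fun t => by
        rw [(hs.quarterWave t).apply_right, sub_zero]
        exact hnonneg _ ⟨by linarith, by linarith⟩ t)
      (hG.reflect_supersolution hu hl₀)
  intro x ⟨hx₀, hxR⟩ y ⟨hy₀, hyR⟩ hxy
  have := hreflect ((x + y) / 2) ⟨by linarith, by linarith⟩ y ⟨by linarith, hyR⟩ t
  rw [show 2 * ((x + y) / 2) - y = x by ring] at this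
  exact sub_nonneg.1 this

end OddReaction

lemma Subsolution.le_linearSol (hG : OddReaction T Λ M C K G q) (hv : Subsolution R T G q H D v)
    (hs : LinearSol R T Λ (shiftedSource Λ G u) u' ux uxx)
    (hu : ∀ x ∈ Icc (-R) R, ∀ t, v x t ≤ u x t) : ∀ x ∈ Icc (-R) R, ∀ t, v x t ≤ u' x t := by
  have hdiff := nonneg_of_no_interior_min (z := fun x t => u' x t - v x t) hG.period_pos
    (hs.toQuarterWaveField.cont.sub hv.cont) (fun x t => by rw [hs.periodic, hv.periodic])
    (fun t => by rw [(hs.quarterWave t).apply_left, (hv.quarterWave t).apply_left, sub_zero])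
    (fun t => by rw [(hs.quarterWave t).apply_right, (hv.quarterWave t).apply_right, sub_zero])
    (fun x hx t hneg hmin => by
      have htest := hv.test _ _ _ _ hs.toPeriodicC21 x hx t hmin
      have hmono := hG.shift_mono t (hu x (Ioo_subset_Icc_self hx) t)
      simp only [shiftedSource] at htest
      linarith [mul_neg_of_pos_of_neg hG.lip_pos hneg])
  exact fun x hx t => sub_nonneg.1 (hdiff x hx t)

lemma Between.abs_le (hR : 0 < R) (hG : OddReaction T Λ M C K G q)
    (hv : Subsolution R T G q H' D' v) (hu : Between R T v q H D u) (x t : ℝ) : |u x t| ≤ K := by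
  obtain ⟨y, hy, s, hs, hxy⟩ := QuarterWave.exists_mem_Icc_eq_mul hR x
  rw [hxy _ (hu.quarterWave t), abs_mul, hs, one_mul,
    abs_of_nonneg ((hv.nonneg y hy t).trans (hu.lo y hy t))]
  exact (hu.hi y hy t).trans (hG.q_le t)

lemma LinearSol.abs_sub_le_time {L A B M : ℝ} {F : ℝ → ℝ → ℝ} (hL : 0 ≤ L)
    (hs : LinearSol R T L F u ux uxx) (hA : ∀ x t, |uxx x t| ≤ A) (hB : ∀ x t, |u x t| ≤ B)
    (hM : ∀ x t, |F x t| ≤ M) (x s t : ℝ) :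
    |u x s - u x t| ≤ (A + L * B + M) * |s - t| := by
  refine convex_univ.norm_image_sub_le_of_norm_hasDerivWithin_le (f := fun τ => u x τ)
    (fun τ _ => (hs.hasDerivAt_t x τ).hasDerivWithinAt) (fun τ _ => ?_) (mem_univ t) (mem_univ s)
  calc |uxx x τ - L * u x τ + F x τ|
      ≤ |uxx x τ| + |L * u x τ| + |F x τ| :=
        (abs_add_le _ _).trans (add_le_add_left (abs_sub _ _) _)
    _ ≤ A + L * B + M := by
        rw [abs_mul, abs_of_nonneg hL]
        exact add_le_add (add_le_add (hA x τ) (mul_le_mul_of_nonneg_left (hB x τ) hL)) (hM x τ)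

end

section

variable {R T Λ M C K H D E : ℝ} {G : ℝ → ℝ → ℝ} {q : ℝ → ℝ} {v U : ℝ → ℝ → ℝ}
  {w : ℕ → ℝ → ℝ → ℝ} {S Sx Sxx : (ℝ → ℝ → ℝ) → ℝ → ℝ → ℝ}

lemma exists_iterationStep {Hv Dv : ℝ} (hR : 0 < R) (hG : OddReaction T Λ M C K G q)
    (hv : Subsolution R T G q Hv Dv v) :
    ∃ H D E : ℝ, Between R T v q H D v ∧ ∀ u, Between R T v q H D u →
      ∃ u' ux uxx, Between R T v q H D u' ∧ LinearSol R T Λ (shiftedSource Λ G u) u' ux uxx ∧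
        ∀ x s t, |u' x s - u' x t| ≤ E * |s - t| := by
  have hΛ := hG.lip_pos
  obtain ⟨B, _, hB⟩ := exists_linearSol hR hG.period_pos hΛ
  set M' := M + Λ * K
  set H := max (B * M') Hv
  set D := max (B * (4 * Λ * H)) Dv
  refine ⟨H, D, B * (2 * C * H ^ 2 + 2 * Λ * D) + Λ * K + M', ⟨hv.toProfile.mono
    (le_max_right _ _) (le_max_right _ _), fun _ _ _ => le_rfl, hv.le⟩, fun u hu => ?_⟩
  have hK := hu.abs_le hR hG hv
  have hsource : ∀ x t, |shiftedSource Λ G u x t| ≤ M' := fun x t => by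
    refine (abs_add_le _ _).trans (add_le_add (hG.bdd _ _) ?_)
    rw [abs_mul, abs_of_pos hΛ]
    exact mul_le_mul_of_nonneg_left (hK x t) hΛ.le
  obtain ⟨u', ux, uxx, hsol, hholder, hsecond, hbound⟩ := hB _ _
    (hG.quarterWaveField_shiftedSource hu.toQuarterWaveField)
    (hG.secondDiffBound_shiftedSource hu.toProfile hK)
  have hlo := hv.le_linearSol hG hsol hu.lo
  have hbetween : Between R T v q H D u' :=
    { toQuarterWaveField := hsol.toQuarterWaveField
      anti := hG.linearSol_antitoneOn hu.toProfile hsol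
        fun x hx t => (hv.nonneg x hx t).trans (hlo x hx t)
      holder := fun t x y => (hholder M' hsource t x y).trans
        (mul_le_mul_of_nonneg_right (le_max_left _ _) (by positivity))
      secondDiff := fun t =>
        (hsecond _ (hG.secondDiffBound_shiftedSource_holder hu.toProfile) t).mono (le_max_left _ _)
      lo := hlo
      hi := hG.linearSol_le hsol hu.hi }
  exact ⟨u', ux, uxx, hbetween, hsol,
    hsol.abs_sub_le_time hΛ.le hbound (hbetween.abs_le hR hG hv) hsource⟩

lemma continuous_of_holder_of_lipschitz {s : ℝ} (hs : 0 < s)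
    (hx : ∀ t x y, |U x t - U y t| ≤ H * |x - y| ^ s)
    (ht : ∀ x t τ, |U x t - U x τ| ≤ E * |t - τ|) : Continuous fun p : ℝ × ℝ => U p.1 p.2 := by
  rw [continuous_iff_continuousAt]
  intro p
  have hmodulus : Tendsto (fun r : ℝ × ℝ => H * |r.1 - p.1| ^ s + E * |r.2 - p.2|) (𝓝 p)
      (𝓝 (H * |p.1 - p.1| ^ s + E * |p.2 - p.2|)) := by
    have hpow : Continuous fun r : ℝ × ℝ => |r.1 - p.1| ^ s :=
      Continuous.rpow_const (by fun_prop) fun _ => .inr hs.le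
    exact Continuous.tendsto (by fun_prop) p
  rw [sub_self, sub_self, abs_zero, mul_zero, Real.zero_rpow hs.ne', mul_zero, add_zero] at hmodulus
  rw [ContinuousAt, tendsto_iff_dist_tendsto_zero]
  refine squeeze_zero (fun _ => dist_nonneg) (fun r => ?_) hmodulus
  exact (abs_sub_le (U r.1 r.2) (U p.1 r.2) (U p.1 p.2)).trans (add_le_add (hx _ _ _) (ht _ _ _))

namespace Between

lemma of_tendsto (hw : ∀ n, Between R T v q H D (w n))
    (hlim : ∀ x t, Tendsto (fun n => w n x t) atTop (𝓝 (U x t)))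
    (hcont : Continuous fun p : ℝ × ℝ => U p.1 p.2) : Between R T v q H D U where
  cont := hcont
  periodic x t := tendsto_nhds_unique (hlim x (t + T))
    ((hlim x t).congr fun n => ((hw n).periodic x t).symm)
  quarterWave t :=
    { even := fun x => tendsto_nhds_unique (hlim (-x) t)
        ((hlim x t).congr fun n => (((hw n).quarterWave t).even x).symm)
      odd := fun x => tendsto_nhds_unique (hlim (2 * R - x) t)
        ((hlim x t).neg.congr fun n => (((hw n).quarterWave t).odd x).symm) }
  anti t _ hx _ hy hxy :=
    le_of_tendsto_of_tendsto' (hlim _ t) (hlim _ t) fun n => (hw n).anti t hx hy hxy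
  holder t x y := le_of_tendsto' ((hlim x t).sub (hlim y t)).abs fun n => (hw n).holder t x y
  secondDiff t x h hh :=
    le_of_tendsto' (((hlim _ t).add (hlim _ t)).sub ((hlim x t).const_mul 2)).abs
      fun n => (hw n).secondDiff t x h hh
  lo x hx t := ge_of_tendsto' (hlim x t) fun n => (hw n).lo x hx t
  hi x hx t := le_of_tendsto' (hlim x t) fun n => (hw n).hi x hx t

lemma exists_tendsto_of_monotone (hR : 0 < R) (hw : ∀ n, Between R T v q H D (w n))
    (hmono : ∀ x ∈ Icc (-R) R, ∀ t, Monotone fun n => w n x t) :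
    ∃ U : ℝ → ℝ → ℝ, ∀ x t, Tendsto (fun n => w n x t) atTop (𝓝 (U x t)) := by
  suffices ∀ x t, ∃ l, Tendsto (fun n => w n x t) atTop (𝓝 l) by
    choose U hU using this
    exact ⟨U, hU⟩
  intro x t
  obtain ⟨y, hy, s, -, hxy⟩ := QuarterWave.exists_mem_Icc_eq_mul hR x
  have hlim := tendsto_atTop_ciSup (hmono y hy t)
    ⟨q t, by rintro _ ⟨n, rfl⟩; exact (hw n).hi y hy t⟩
  exact ⟨_, (hlim.const_mul s).congr fun n => (hxy _ ((hw n).quarterWave t)).symm⟩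

lemma eventually_abs_sub_le {ε : ℝ} (hT : 0 < T) (hw : ∀ n, Between R T v q H D (w n))
    (hmono : ∀ x ∈ Icc (-R) R, ∀ t, Monotone fun n => w n x t) (hU : Between R T v q H D U)
    (hlim : ∀ x t, Tendsto (fun n => w n x t) atTop (𝓝 (U x t))) (hε : 0 < ε) :
    ∀ᶠ n in atTop, ∀ x ∈ Icc (-R) R, ∀ t, |w n x t - U x t| ≤ ε := by
  have hdini : TendstoUniformlyOn (fun n (p : ℝ × ℝ) => w n p.1 p.2) (fun p => U p.1 p.2) atTop
      (Icc (-R) R ×ˢ Icc 0 T) :=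
    Monotone.tendstoUniformlyOn_of_forall_tendsto (isCompact_Icc.prod isCompact_Icc)
      (fun n => (hw n).cont.continuousOn) (fun p hp => hmono p.1 hp.1 p.2)
      hU.cont.continuousOn fun p _ => hlim p.1 p.2
  filter_upwards [Metric.tendstoUniformlyOn_iff.1 hdini ε hε] with n hn x hx t
  obtain ⟨s, hs, hts⟩ := Function.Periodic.exists_mem_Ico₀ (f := fun t => w n x t - U x t) (c := T)
    (fun t => by simp only [(hw n).periodic, hU.periodic]) hT t
  rw [hts, abs_sub_comm]
  exact (hn (x, s) ⟨hx, Ico_subset_Icc_self hs⟩).le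

lemma iterate (hv : Between R T v q H D v)
    (hS : ∀ u, Between R T v q H D u → Between R T v q H D (S u)) (n : ℕ) :
    Between R T v q H D (S^[n] v) :=
  Function.Iterate.rec (Between R T v q H D) hv hS n

lemma monotone_iterate (hG : OddReaction T Λ M C K G q) (hv : Between R T v q H D v)
    (hS : ∀ u, Between R T v q H D u → Between R T v q H D (S u))
    (hsol : ∀ u, Between R T v q H D u →
      LinearSol R T Λ (shiftedSource Λ G u) (S u) (Sx u) (Sxx u)) :
    ∀ x ∈ Icc (-R) R, ∀ t, Monotone fun n => S^[n] v x t := by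
  have hiter := hv.iterate hS
  suffices hsucc : ∀ n, ∀ x ∈ Icc (-R) R, ∀ t, S^[n] v x t ≤ S^[n + 1] v x t from
    fun x hx t => monotone_nat_of_le_succ fun n => hsucc n x hx t
  intro n
  induction n with
  | zero => exact (hS v hv).lo
  | succ n ih =>
    have := hG.linearSol_mono (hsol _ (hiter n)) (hsol _ (hiter (n + 1))) ih
    rwa [← Function.iterate_succ_apply' S, ← Function.iterate_succ_apply' S] at this

lemma eq_of_tendsto_iterate (hR : 0 < R) (hG : OddReaction T Λ M C K G q)
    (hv : Between R T v q H D v)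
    (hS : ∀ u, Between R T v q H D u → Between R T v q H D (S u))
    (hsol : ∀ u, Between R T v q H D u →
      LinearSol R T Λ (shiftedSource Λ G u) (S u) (Sx u) (Sxx u))
    (hU : Between R T v q H D U)
    (hlim : ∀ x t, Tendsto (fun n => S^[n] v x t) atTop (𝓝 (U x t))) : S U = U := by
  have hiter := hv.iterate hS
  have hIcc : ∀ x ∈ Icc (-R) R, ∀ t, S U x t = U x t := fun x hx t => by
    refine tendsto_nhds_unique (f := fun n => S^[n + 1] v x t) ?_
      ((hlim x t).comp (tendsto_add_atTop_nat 1))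
    refine tendsto_iff_dist_tendsto_zero.2 (tendsto_order.2
      ⟨fun a ha => .of_forall fun n => ha.trans_le dist_nonneg, fun ε hε => ?_⟩)
    have hunif := eventually_abs_sub_le hG.period_pos hiter (monotone_iterate hG hv hS hsol) hU hlim
      (by positivity : 0 < ε / 3)
    filter_upwards [hunif] with n hn
    have := hG.abs_linearSol_sub_le (by positivity) (hsol _ (hiter n)) (hsol _ hU) hn x hx t
    rw [Function.iterate_succ_apply', Real.dist_eq]
    linarith
  ext x t
  obtain ⟨y, hy, s, -, hxy⟩ := QuarterWave.exists_mem_Icc_eq_mul hR x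
  rw [hxy _ ((hS U hU).quarterWave t), hxy _ (hU.quarterWave t), hIcc y hy t]

end Between

lemma exists_semilinearSol {Hv Dv : ℝ} (hR : 0 < R) (hG : OddReaction T Λ M C K G q)
    (hv : Subsolution R T G q Hv Dv v) :
    ∃ (H D : ℝ) (u ux uxx : ℝ → ℝ → ℝ),
      Between R T v q H D u ∧ LinearSol R T Λ (shiftedSource Λ G u) u ux uxx := by
  obtain ⟨H, D, E, hv₀, hstep⟩ := exists_iterationStep hR hG hv
  choose! S Sx Sxx hS hsol hlip using hstep
  have hiter := hv₀.iterate hS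
  obtain ⟨U, hlim⟩ :=
    Between.exists_tendsto_of_monotone hR hiter (Between.monotone_iterate hG hv₀ hS hsol)
  have hlim_succ : ∀ x t, Tendsto (fun n => S^[n + 1] v x t) atTop (𝓝 (U x t)) := fun x t =>
    (hlim x t).comp (tendsto_add_atTop_nat 1)
  have hcont : Continuous fun p : ℝ × ℝ => U p.1 p.2 :=
    continuous_of_holder_of_lipschitz (by norm_num)
      (fun t x y => le_of_tendsto' ((hlim x t).sub (hlim y t)).abs
        fun n => (hiter n).holder t x y)
      (fun x s t => le_of_tendsto' ((hlim_succ x s).sub (hlim_succ x t)).abs fun n => by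
        rw [Function.iterate_succ_apply']
        exact hlip _ (hiter n) x s t)
  have hU := Between.of_tendsto hiter hlim hcont
  have hfix := Between.eq_of_tendsto_iterate hR hG hv₀ hS hsol hU hlim
  have := hsol U hU
  rw [hfix] at this
  exact ⟨H, D, U, _, _, hU, this⟩

end

namespace OddReaction

variable {R T Λ M C K H D : ℝ} {G : ℝ → ℝ → ℝ} {q : ℝ → ℝ} {u ux uxx : ℝ → ℝ → ℝ}

lemma semilinearSol_pos (hR : 0 < R) (hG : OddReaction T Λ M C K G q)
    (hs : LinearSol R T Λ (shiftedSource Λ G u) u ux uxx)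
    (hnonneg : ∀ x ∈ Icc (-R) R, ∀ t, 0 ≤ u x t) (hzero : ∀ t, 0 < u 0 t) :
    ∀ x ∈ Ioo (-R) R, ∀ t, 0 < u x t := by
  obtain ⟨c, hc, hle⟩ := hs.toPeriodicC21.exists_pos_linear_le hG.period_pos hG.lip_pos
    (neg_lt_zero.2 hR) (fun t => (hs.quarterWave t).apply_left.ge) hzero (fun x hx t => by
      have := hG.shift_mono t (hnonneg x ⟨hx.1.le, hx.2.le.trans hR.le⟩ t)
      rw [hG.apply_zero] at this
      simp only [shiftedSource]
      linarith)
  have hleft : ∀ x ∈ Ioc (-R) 0, ∀ t, 0 < u x t := fun x hx t =>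
    (mul_pos hc (sub_pos.2 hx.1)).trans_le (hle x ⟨hx.1.le, hx.2⟩ t)
  intro x hx t
  rcases le_total x 0 with h | h
  · exact hleft x ⟨hx.1, h⟩ t
  · rw [← (hs.quarterWave t).even x]
    exact hleft (-x) ⟨neg_lt_neg hx.2, neg_nonpos.2 h⟩ t

lemma semilinearSol_lt (hR : 0 < R) (hG : OddReaction T Λ M C K G q)
    (hs : LinearSol R T Λ (shiftedSource Λ G u) u ux uxx)
    (hu : ∀ x ∈ Icc (-R) R, ∀ t, u x t ≤ q t) : ∀ x ∈ Ioo (-R) R, ∀ t, u x t < q t := by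
  obtain ⟨c, hc, hle⟩ := ((PeriodicC21.of_time hG.q_periodic fun t => hG.q_ode t trivial).sub
    hs.toPeriodicC21).exists_pos_linear_le hG.period_pos hG.lip_pos (by linarith : -R < R)
    (fun t => by rw [(hs.quarterWave t).apply_left, sub_zero]; exact (hG.q_pos t).le)
    (fun t => by rw [(hs.quarterWave t).apply_right, sub_zero]; exact hG.q_pos t)
    (fun x hx t => by
      have := hG.shift_mono t (hu x (Ioo_subset_Icc_self hx) t)
      simp only [shiftedSource]
      linarith)
  exact fun x hx t => sub_pos.1
    ((mul_pos hc (sub_pos.2 hx.1)).trans_le (hle x (Ioo_subset_Icc_self hx) t))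

lemma semilinearSol_deriv_neg (hG : OddReaction T Λ M C K G q) (hu : Profile R T H D u)
    (hs : LinearSol R T Λ (shiftedSource Λ G u) u ux uxx)
    (hpos : ∀ x ∈ Ioo (-R) R, ∀ t, 0 < u x t) : ∀ l ∈ Ioo 0 R, ∀ t, ux l t < 0 := by
  intro l hl t
  obtain ⟨hl₀, hlR⟩ := hl
  obtain ⟨c, hc, hle⟩ := ((hs.toPeriodicC21.reflect l).sub hs.toPeriodicC21).exists_pos_linear_le
    hG.period_pos hG.lip_pos hlR
    (fun t => by rw [show 2 * l - l = l by ring, sub_self])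
    (fun t => by
      rw [(hs.quarterWave t).apply_right, sub_zero]
      exact hpos _ ⟨by linarith, by linarith⟩ t)
    (hG.reflect_supersolution hu hl₀.le)
  have hquotient : 2 * ux l t ≤ -c := by
    refine le_of_tendsto (tendsto_symmDiffQuotient (hs.hasDerivAt_x l t)) ?_
    filter_upwards [Ioo_mem_nhdsGT (sub_pos.2 hlR)] with h hh
    have := hle (l + h) ⟨by linarith [hh.1], by linarith [hh.2]⟩ t
    rw [show 2 * l - (l + h) = l - h by ring, add_sub_cancel_left] at this
    rw [div_le_iff₀ hh.1]
    linarith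
  linarith

end OddReaction

section

variable {E : Type*} [NormedAddCommGroup E] [NormedSpace ℝ E] [CompleteSpace E]
  {v : ℝ → E → E} {Λ : NNReal} {M : ℝ}

lemma exists_hasDerivAt_Ioo_of_lipschitz_of_bounded (hlip : ∀ t, LipschitzWith Λ (v t))
    (hcont : ∀ x, Continuous fun t => v t x) (hbdd : ∀ t x, ‖v t x‖ ≤ M) (x₀ : E)
    {r : ℝ} (hr : 0 < r) :
    ∃ y : ℝ → E, y 0 = x₀ ∧ ∀ t ∈ Ioo (-r) r, HasDerivAt y (v t (y t)) t := by
  have hM : 0 ≤ M := (norm_nonneg _).trans (hbdd 0 x₀)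
  have hzero : (0 : ℝ) ∈ Icc (-r) r := ⟨by linarith, hr.le⟩
  have hpl : IsPicardLindelof v (⟨0, hzero⟩ : Icc (-r) r) x₀ ⟨M * r, by positivity⟩ 0 ⟨M, hM⟩ Λ :=
    { lipschitzOnWith := fun t _ => (hlip t).lipschitzOnWith
      continuousOn := fun x _ => (hcont x).continuousOn
      norm_le := fun t _ x _ => hbdd t x
      mul_max_le := by
        change M * max (r - 0) (0 - -r) ≤ M * r - 0
        rw [sub_zero, sub_zero, zero_sub, neg_neg, max_self] }
  obtain ⟨y, hy₀, hy⟩ := hpl.exists_eq_forall_mem_Icc_hasDerivWithinAt₀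
  exact ⟨y, hy₀, fun t ht =>
    (hy t (Ioo_subset_Icc_self ht)).hasDerivAt (Icc_mem_nhds ht.1 ht.2)⟩

lemma exists_hasDerivAt_of_lipschitz_of_bounded (hlip : ∀ t, LipschitzWith Λ (v t))
    (hcont : ∀ x, Continuous fun t => v t x) (hbdd : ∀ t x, ‖v t x‖ ≤ M) (x₀ : E) :
    ∃ y : ℝ → E, y 0 = x₀ ∧ ∀ t, HasDerivAt y (v t (y t)) t := by
  have hpos (t : ℝ) : 0 < |t| + 1 := by positivity
  choose y hy₀ hy using fun s : ℝ =>
    exists_hasDerivAt_Ioo_of_lipschitz_of_bounded hlip hcont hbdd x₀ (hpos s)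
  have hagree_le : ∀ s t, |s| ≤ |t| → ∀ τ ∈ Ioo (-(|s| + 1)) (|s| + 1), y s τ = y t τ := by
    intro s t hst
    refine ODE_solution_unique_of_mem_Ioo (v := v) (s := fun _ => univ) (t₀ := 0)
      (fun τ _ => (hlip τ).lipschitzOnWith) ⟨by linarith [hpos s], hpos s⟩
      (fun τ hτ => ⟨hy s τ hτ, mem_univ _⟩) (fun τ hτ => ⟨hy t τ ?_, mem_univ _⟩)
      ((hy₀ s).trans (hy₀ t).symm)
    exact ⟨by linarith [hτ.1], by linarith [hτ.2]⟩
  have hmem (t : ℝ) : t ∈ Ioo (-(|t| + 1)) (|t| + 1) := abs_lt.1 (lt_add_one _)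
  have hagree : ∀ t, ∀ τ ∈ Ioo (-(|t| + 1)) (|t| + 1), y τ τ = y t τ := by
    intro t τ hτ
    rcases le_total |τ| |t| with h | h
    · exact hagree_le τ t h τ (hmem τ)
    · exact (hagree_le t τ h τ hτ).symm
  refine ⟨fun τ => y τ τ, hy₀ 0, fun t => (hy t t (hmem t)).congr_of_eventuallyEq ?_⟩
  exact (isOpen_Ioo.eventually_mem (hmem t)).mono (hagree t)

end

section

variable {Λ C K S t : ℝ} {G : ℝ → ℝ → ℝ} {y z w : ℝ → ℝ}

lemma lipschitzWith_toNNReal (hlip : ∀ t a b, |G t a - G t b| ≤ Λ * |a - b|) (t : ℝ) :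
    LipschitzWith Λ.toNNReal (G t) :=
  LipschitzWith.of_dist_le' fun a b => by simpa only [Real.dist_eq] using hlip t a b

namespace ODESolOn

lemma continuous (hy : ODESolOn G y univ) : Continuous y :=
  continuous_iff_continuousAt.2 fun t => (hy t (mem_univ t)).continuousAt

lemma eq_of_apply_eq (hlip : ∀ t a b, |G t a - G t b| ≤ Λ * |a - b|) (hy : ODESolOn G y univ)
    (hz : ODESolOn G z univ) {t₀ : ℝ} (h : y t₀ = z t₀) : y = z :=
  ODE_solution_unique_univ (v := G) (s := fun _ => univ)
    (fun t => (lipschitzWith_toNNReal hlip t).lipschitzOnWith)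
    (fun t => ⟨hy t (mem_univ t), mem_univ _⟩) (fun t => ⟨hz t (mem_univ t), mem_univ _⟩) h

lemma lt_of_initial_lt (hlip : ∀ t a b, |G t a - G t b| ≤ Λ * |a - b|) (hy : ODESolOn G y univ)
    (hz : ODESolOn G z univ) (h : y 0 < z 0) (t : ℝ) : y t < z t := by
  by_contra! hcross
  obtain ⟨s, -, hs⟩ := isPreconnected_univ.intermediate_value (mem_univ t) (mem_univ 0)
    (hz.continuous.sub hy.continuous).continuousOn ⟨sub_nonpos.2 hcross, (sub_pos.2 h).le⟩
  have hyz : y = z := eq_of_apply_eq hlip hy hz (sub_eq_zero.1 hs).symm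
  exact h.ne (congrFun hyz 0)

lemma le_of_initial_le (hlip : ∀ t a b, |G t a - G t b| ≤ Λ * |a - b|) (hy : ODESolOn G y univ)
    (hz : ODESolOn G z univ) (h : y 0 ≤ z 0) (t : ℝ) : y t ≤ z t := by
  rcases h.eq_or_lt with h | h
  · rw [eq_of_apply_eq hlip hy hz h]
  · exact (lt_of_initial_lt hlip hy hz h t).le

lemma abs_deriv_sub_le (hlip : ∀ t a b, |G t a - G t b| ≤ Λ * |a - b|)
    (hy : ODESolOn G y univ) (hz : ODESolOn G z univ) (h : y 0 ≤ z 0) (t : ℝ) :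
    |G t (z t) - G t (y t)| ≤ Λ * (z t - y t) := by
  simpa only [abs_of_nonneg (sub_nonneg.2 (le_of_initial_le hlip hy hz h t))]
    using hlip t (z t) (y t)

lemma exp_neg_mul_le_sub (hlip : ∀ t a b, |G t a - G t b| ≤ Λ * |a - b|)
    (hy : ODESolOn G y univ) (hz : ODESolOn G z univ) (h : y 0 ≤ z 0) (ht : 0 ≤ t) :
    Real.exp (-(Λ * t)) * (z 0 - y 0) ≤ z t - y t := by
  have hmono : Monotone fun t => Real.exp (Λ * t) * (z t - y t) := by
    refine monotone_of_hasDerivAt_nonneg (fun t => ((hasDerivAt_const_mul Λ).exp).mul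
      ((hz t (mem_univ t)).sub (hy t (mem_univ t)))) fun t => ?_
    have := mul_nonneg (Real.exp_pos (Λ * t)).le
      (neg_le_iff_add_nonneg'.1 (abs_le.1 (abs_deriv_sub_le hlip hy hz h t)).1)
    simp only [Pi.zero_apply]
    linarith
  have := hmono ht
  simp only [mul_zero, Real.exp_zero, one_mul] at this
  rwa [Real.exp_neg, inv_mul_le_iff₀ (Real.exp_pos _)]

lemma sub_le_exp_mul (hlip : ∀ t a b, |G t a - G t b| ≤ Λ * |a - b|)
    (hy : ODESolOn G y univ) (hz : ODESolOn G z univ) (h : y 0 ≤ z 0) (ht : 0 ≤ t) :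
    z t - y t ≤ Real.exp (Λ * t) * (z 0 - y 0) := by
  have hanti : Antitone fun t => Real.exp (-Λ * t) * (z t - y t) := by
    refine antitone_of_hasDerivAt_nonpos (fun t => ((hasDerivAt_const_mul (-Λ)).exp).mul
      ((hz t (mem_univ t)).sub (hy t (mem_univ t)))) fun t => ?_
    have := mul_nonneg (Real.exp_pos (-Λ * t)).le
      (sub_nonneg.2 (abs_le.1 (abs_deriv_sub_le hlip hy hz h t)).2)
    simp only [Pi.zero_apply]
    linarith
  have := hanti ht
  simp only [mul_zero, Real.exp_zero, one_mul, neg_mul] at this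
  rwa [Real.exp_neg, inv_mul_le_iff₀ (Real.exp_pos _)] at this

lemma abs_deriv_midpoint_le (hlip : ∀ t a b, |G t a - G t b| ≤ Λ * |a - b|) (hΛ : 0 ≤ Λ)
    (hC : 0 ≤ C) (hrem : HasQuadraticRemainder C (Icc (-K) K) (G t)) (hy : ODESolOn G y univ)
    (hz : ODESolOn G z univ) (hyz : y 0 ≤ z 0) (hyK : |y t| ≤ K) (hzK : |z t| ≤ K)
    (ht : t ∈ Icc 0 S) :
    |G t (y t) + G t (z t) - 2 * G t (w t)|
      ≤ Λ * |y t + z t - 2 * w t| + C / 2 * (Real.exp (Λ * S) * (z 0 - y 0)) ^ 2 := by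
  have hgap : (y t - z t) ^ 2 ≤ (Real.exp (Λ * S) * (z 0 - y 0)) ^ 2 := by
    rw [← neg_sub (z t), neg_sq]
    have hexp : Real.exp (Λ * t) ≤ Real.exp (Λ * S) :=
      Real.exp_le_exp.2 (mul_le_mul_of_nonneg_left ht.2 hΛ)
    exact pow_le_pow_left₀ (sub_nonneg.2 (le_of_initial_le hlip hy hz hyz t))
      ((sub_le_exp_mul hlip hy hz hyz ht.1).trans
        (mul_le_mul_of_nonneg_right hexp (sub_nonneg.2 hyz))) 2
  have hmid := hrem.abs_midpoint_le (convex_Icc _ _) (abs_le.1 hyK) (abs_le.1 hzK)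
  have hlip_mid : |2 * (G t ((y t + z t) / 2) - G t (w t))| ≤ Λ * |y t + z t - 2 * w t| := by
    have := hlip t ((y t + z t) / 2) (w t)
    rw [show (y t + z t) / 2 - w t = (y t + z t - 2 * w t) / 2 by ring, abs_div, abs_two] at this
    rw [abs_mul, abs_two]
    linarith
  calc |G t (y t) + G t (z t) - 2 * G t (w t)|
      = |2 * (G t ((y t + z t) / 2) - G t (w t))
        + (G t (y t) + G t (z t) - 2 * G t ((y t + z t) / 2))| := by ring_nf
    _ ≤ _ := (abs_add_le _ _).trans (add_le_add hlip_mid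
        (hmid.trans (mul_le_mul_of_nonneg_left hgap (by positivity))))

lemma abs_midpoint_le (hlip : ∀ t a b, |G t a - G t b| ≤ Λ * |a - b|) (hΛ : 0 < Λ)
    (hC : 0 ≤ C) (hrem : ∀ t, HasQuadraticRemainder C (Icc (-K) K) (G t))
    (hy : ODESolOn G y univ) (hz : ODESolOn G z univ) (hw : ODESolOn G w univ)
    (hmid : w 0 = (y 0 + z 0) / 2) (hyz : y 0 ≤ z 0) (hyK : ∀ t, |y t| ≤ K)
    (hzK : ∀ t, |z t| ≤ K) (ht : t ∈ Icc 0 S) :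
    |y t + z t - 2 * w t| ≤ C / 2 * Real.exp (Λ * S) ^ 3 / Λ * (z 0 - y 0) ^ 2 := by
  have hderiv (t : ℝ) : HasDerivAt (fun t => y t + z t - 2 * w t)
      (G t (y t) + G t (z t) - 2 * G t (w t)) t :=
    ((hy t (mem_univ t)).add (hz t (mem_univ t))).sub ((hw t (mem_univ t)).const_mul 2)
  have hgronwall := norm_le_gronwallBound_of_norm_deriv_right_le (δ := 0)
    (continuous_iff_continuousAt.2 fun t => (hderiv t).continuousAt).continuousOn
    (fun t _ => (hderiv t).hasDerivWithinAt)
    (by rw [hmid, mul_div_cancel₀ _ two_ne_zero, sub_self, norm_zero])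
    (fun s hs => abs_deriv_midpoint_le hlip hΛ.le hC (hrem s) hy hz hyz (hyK s) (hzK s)
      (Ico_subset_Icc_self hs)) t ht
  simp only [gronwallBound_of_K_ne_0 hΛ.ne', zero_mul, zero_add, sub_zero] at hgronwall
  have hexp : Real.exp (Λ * t) - 1 ≤ Real.exp (Λ * S) := by
    linarith [Real.exp_le_exp.2 (mul_le_mul_of_nonneg_left ht.2 hΛ.le)]
  calc |y t + z t - 2 * w t|
      ≤ C / 2 * (Real.exp (Λ * S) * (z 0 - y 0)) ^ 2 / Λ * (Real.exp (Λ * t) - 1) := hgronwall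
    _ ≤ C / 2 * (Real.exp (Λ * S) * (z 0 - y 0)) ^ 2 / Λ * Real.exp (Λ * S) := by gcongr
    _ = _ := by ring

end ODESolOn

end

/-- `Y a` is the global solution of `y' = G(t, y)` with initial value `a`. -/
structure IsFlow (G Y : ℝ → ℝ → ℝ) : Prop where
  initial : ∀ a, Y a 0 = a
  ode : ∀ a, ODESolOn G (Y a) univ

/-- Odd maps with slopes in `[m, M]` and second differences bounded by `C` on `[-A, A]`. -/
structure OddBiLipschitz (A m M C : ℝ) (g : ℝ → ℝ) : Prop where
  odd : ∀ a, g (-a) = -g a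
  slope_ge : ∀ ⦃a b⦄, a ≤ b → m * (b - a) ≤ g b - g a
  slope_le : ∀ ⦃a b⦄, a ≤ b → g b - g a ≤ M * (b - a)
  midpoint : ∀ ⦃a b⦄, |a| ≤ A → |b| ≤ A → |g a + g b - 2 * g ((a + b) / 2)| ≤ C * (b - a) ^ 2

section

variable {A B m M C l : ℝ} {g h : ℝ → ℝ}

namespace OddBiLipschitz

lemma apply_zero (hg : OddBiLipschitz A m M C g) : g 0 = 0 := by
  have := hg.odd 0
  rw [neg_zero] at this
  linarith

lemma mono_amplitude (hg : OddBiLipschitz B m M C g) (hAB : A ≤ B) :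
    OddBiLipschitz A m M C g where
  odd := hg.odd
  slope_ge := hg.slope_ge
  slope_le := hg.slope_le
  midpoint _ _ ha hb := hg.midpoint (ha.trans hAB) (hb.trans hAB)

lemma convexCombo (hg : OddBiLipschitz A m M C g) (hh : OddBiLipschitz A m M C h)
    (hl : l ∈ Icc (0 : ℝ) 1) : OddBiLipschitz A m M C fun a => (1 - l) * g a + l * h a where
  odd a := by rw [hg.odd, hh.odd]; ring
  slope_ge a b hab := by
    have hg' := mul_le_mul_of_nonneg_left (hg.slope_ge hab) (sub_nonneg.2 hl.2)
    have hh' := mul_le_mul_of_nonneg_left (hh.slope_ge hab) hl.1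
    linarith
  slope_le a b hab := by
    have hg' := mul_le_mul_of_nonneg_left (hg.slope_le hab) (sub_nonneg.2 hl.2)
    have hh' := mul_le_mul_of_nonneg_left (hh.slope_le hab) hl.1
    linarith
  midpoint a b ha hb := by
    set c := (a + b) / 2
    calc |(1 - l) * g a + l * h a + ((1 - l) * g b + l * h b) - 2 * ((1 - l) * g c + l * h c)|
        = |(1 - l) * (g a + g b - 2 * g c) + l * (h a + h b - 2 * h c)| := by ring_nf
      _ ≤ (1 - l) * |g a + g b - 2 * g c| + l * |h a + h b - 2 * h c| := by
          refine (abs_add_le _ _).trans_eq ?_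
          rw [abs_mul, abs_mul, abs_of_nonneg hl.1, abs_of_nonneg (sub_nonneg.2 hl.2)]
      _ ≤ (1 - l) * (C * (b - a) ^ 2) + l * (C * (b - a) ^ 2) :=
          add_le_add (mul_le_mul_of_nonneg_left (hg.midpoint ha hb) (sub_nonneg.2 hl.2))
            (mul_le_mul_of_nonneg_left (hh.midpoint ha hb) hl.1)
      _ = C * (b - a) ^ 2 := by ring

lemma abs_sub_le (hg : OddBiLipschitz A m M C g) (hm : 0 ≤ m) (a b : ℝ) :
    |g a - g b| ≤ M * |a - b| := by
  wlog hab : a ≤ b generalizing a b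
  · simpa only [abs_sub_comm] using this b a (le_of_not_ge hab)
  rw [abs_sub_comm, abs_sub_comm a, abs_of_nonneg (sub_nonneg.2 hab), abs_of_nonneg]
  · exact hg.slope_le hab
  · exact (mul_nonneg hm (sub_nonneg.2 hab)).trans (hg.slope_ge hab)

end OddBiLipschitz

end

section

variable {T Λ M C K S a t : ℝ} {G Y : ℝ → ℝ → ℝ} {q : ℝ → ℝ}

lemma OddReaction.exists_isFlow (hG : OddReaction T Λ M C K G q) : ∃ Y, IsFlow G Y := by
  choose Y hY₀ hY using exists_hasDerivAt_of_lipschitz_of_bounded (lipschitzWith_toNNReal hG.lip)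
    (fun x => hG.cont.comp (continuous_id.prodMk continuous_const)) hG.bdd
  exact ⟨Y, hY₀, fun a t _ => hY a t⟩

namespace IsFlow

lemma neg (hY : IsFlow G Y) (hG : OddReaction T Λ M C K G q) (a t : ℝ) : Y (-a) t = -Y a t := by
  have hneg : ODESolOn G (fun t => -Y a t) univ := fun t ht => by
    rw [hG.odd]
    exact (hY.ode a t ht).neg
  exact congrFun ((hY.ode (-a)).eq_of_apply_eq hG.lip hneg (t₀ := 0)
    (by rw [hY.initial, hY.initial])) t

lemma apply_le (hY : IsFlow G Y) (hG : OddReaction T Λ M C K G q) (ha : a ≤ q 0) (t : ℝ) :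
    Y a t ≤ q t :=
  (hY.ode a).le_of_initial_le hG.lip hG.q_ode (by rwa [hY.initial]) t

lemma abs_apply_le (hY : IsFlow G Y) (hG : OddReaction T Λ M C K G q) (ha : |a| ≤ q 0) (t : ℝ) :
    |Y a t| ≤ K := by
  have hpos := hY.apply_le hG ((le_abs_self a).trans ha) t
  have hneg := hY.apply_le hG ((neg_le_abs a).trans ha) t
  rw [hY.neg hG] at hneg
  exact abs_le'.2 ⟨hpos.trans (hG.q_le t), hneg.trans (hG.q_le t)⟩

lemma abs_midpoint_le (hY : IsFlow G Y) (hG : OddReaction T Λ M C K G q) (ht : t ∈ Icc 0 S)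
    {a b : ℝ} (ha : |a| ≤ q 0) (hb : |b| ≤ q 0) :
    |Y a t + Y b t - 2 * Y ((a + b) / 2) t|
      ≤ C / 2 * Real.exp (Λ * S) ^ 3 / Λ * (b - a) ^ 2 := by
  wlog hab : a ≤ b generalizing a b
  · rw [add_comm (Y a t), add_comm a, ← neg_sub a b, neg_sq]
    exact this hb ha (le_of_not_ge hab)
  have := ODESolOn.abs_midpoint_le hG.lip hG.lip_pos hG.remainder_nonneg hG.remainder
    (hY.ode a) (hY.ode b) (hY.ode ((a + b) / 2)) (by simp only [hY.initial])
    (by rwa [hY.initial, hY.initial]) (hY.abs_apply_le hG ha) (hY.abs_apply_le hG hb) ht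
  rwa [hY.initial, hY.initial] at this

lemma oddBiLipschitz (hY : IsFlow G Y) (hG : OddReaction T Λ M C K G q) (ht : t ∈ Icc 0 S) :
    OddBiLipschitz (q 0) (Real.exp (-(Λ * S))) (Real.exp (Λ * S))
      (C / 2 * Real.exp (Λ * S) ^ 3 / Λ) (fun a => Y a t) where
  odd a := hY.neg hG a t
  slope_ge a b hab := by
    have hslope := (hY.ode a).exp_neg_mul_le_sub hG.lip (hY.ode b)
      (by rwa [hY.initial, hY.initial]) ht.1
    rw [hY.initial, hY.initial] at hslope
    have hexp := neg_le_neg (mul_le_mul_of_nonneg_left ht.2 hG.lip_pos.le)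
    exact (mul_le_mul_of_nonneg_right (Real.exp_le_exp.2 hexp) (sub_nonneg.2 hab)).trans hslope
  slope_le a b hab := by
    have hslope := (hY.ode a).sub_le_exp_mul hG.lip (hY.ode b)
      (by rwa [hY.initial, hY.initial]) ht.1
    rw [hY.initial, hY.initial] at hslope
    have hexp := mul_le_mul_of_nonneg_left ht.2 hG.lip_pos.le
    exact hslope.trans (mul_le_mul_of_nonneg_right (Real.exp_le_exp.2 hexp) (sub_nonneg.2 hab))
  midpoint _ _ ha hb := hY.abs_midpoint_le hG ht ha hb

lemma continuousOn (hY : IsFlow G Y) (hG : OddReaction T Λ M C K G q) (S : ℝ) :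
    ContinuousOn (fun p : ℝ × ℝ => Y p.2 p.1) (Icc 0 S ×ˢ univ) := by
  refine continuousOn_prod_of_continuousOn_lipschitzOnWith' _ (Real.exp (Λ * S)).toNNReal
    (fun t ht => (LipschitzWith.of_dist_le' fun a b => ?_).lipschitzOnWith)
    (fun a _ => (hY.ode a).continuous.continuousOn)
  exact (hY.oddBiLipschitz hG ht).abs_sub_le (Real.exp_pos _).le a b

end IsFlow

end

lemma HasQuadraticRemainder.convexCombo_le {C a b l : ℝ} {s : Set ℝ} {g : ℝ → ℝ}
    (hg : HasQuadraticRemainder C s g) (hs : Convex ℝ s) (hC : 0 ≤ C) (ha : a ∈ s) (hb : b ∈ s)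
    (hl : l ∈ Icc (0 : ℝ) 1) :
    (1 - l) * g a + l * g b ≤ g ((1 - l) * a + l * b) + C * (a - b) ^ 2 := by
  obtain ⟨k, hk⟩ := hg
  have hl' := sub_nonneg.2 hl.2
  set c := (1 - l) * a + l * b with hc
  have hcs : c ∈ s := hs ha hb hl' hl.1 (sub_add_cancel 1 l)
  have hca := mul_le_mul_of_nonneg_left (abs_le.1 (hk c hcs a ha)).2 hl'
  have hcb := mul_le_mul_of_nonneg_left (abs_le.1 (hk c hcs b hb)).2 hl.1
  rw [show a - c = l * (a - b) by rw [hc]; ring] at hca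
  rw [show b - c = -((1 - l) * (a - b)) by rw [hc]; ring] at hcb
  have hweight : l * (1 - l) * (C * (a - b) ^ 2) ≤ 1 * (C * (a - b) ^ 2) :=
    mul_le_mul_of_nonneg_right (mul_le_one₀ hl.2 hl' (by linarith [hl.1])) (by positivity)
  linarith

/-- The `T`-periodic interpolation between `Y a (t + T)` at `t = 0` and `Y a t` at `t = T`. -/
def interpFlow (T : ℝ) (Y : ℝ → ℝ → ℝ) (t a : ℝ) : ℝ :=
  (1 - t / T) * Y a (t + T) + t / T * Y a t

/-- A family `J t a` which is `T`-periodic in `t`, stays below `q`, and for `a ∈ [0, A]` is a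
subsolution of `y' = G(t, y)`, strict by `η` when `A / 8 ≤ a`. The weak case `a < A / 8` is the
range in which the spatial profile of the subsolution is convex. -/
structure SlackFlow (T A m M C η : ℝ) (G : ℝ → ℝ → ℝ) (q : ℝ → ℝ) (J : ℝ → ℝ → ℝ) : Prop where
  amp_pos : 0 < A
  slope_pos : 0 < m
  slack_pos : 0 < η
  amp_small : 12 * C * A ≤ m
  cont : ContinuousOn (fun p : ℝ × ℝ => J p.1 p.2) (Icc 0 T ×ˢ univ)
  wrap : ∀ a, J 0 a = J T a
  map : ∀ t ∈ Icc 0 T, OddBiLipschitz A m M C (J t)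
  le : ∀ t ∈ Icc 0 T, ∀ a ∈ Icc 0 A, J t a ≤ q t
  deriv : ∀ t ∈ Icc 0 T, ∀ a ∈ Icc 0 A, ∃ d, HasDerivAt (fun τ => J τ a) d t ∧
    d ≤ G t (J t a) ∧ (A / 8 ≤ a → d ≤ G t (J t a) - η)

section

variable {T Λ M C K A δ a t : ℝ} {G Y : ℝ → ℝ → ℝ} {q : ℝ → ℝ}

lemma div_mem_unitInterval (hT : 0 < T) (ht : t ∈ Icc 0 T) : t / T ∈ Icc (0 : ℝ) 1 :=
  ⟨div_nonneg ht.1 hT.le, (div_le_one hT).2 ht.2⟩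

lemma mem_Icc_two_mul (ht : t ∈ Icc 0 T) : t ∈ Icc 0 (2 * T) :=
  ⟨ht.1, by linarith [ht.1, ht.2]⟩

lemma add_mem_Icc_two_mul (ht : t ∈ Icc 0 T) : t + T ∈ Icc 0 (2 * T) :=
  ⟨by linarith [ht.1, ht.2], by linarith [ht.2]⟩

namespace IsFlow

lemma continuousOn_add_period (hY : IsFlow G Y) (hG : OddReaction T Λ M C K G q) :
    ContinuousOn (fun p : ℝ × ℝ => Y p.2 (p.1 + T)) (Icc 0 T ×ˢ univ) :=
  (hY.continuousOn hG (2 * T)).comp (f := fun p : ℝ × ℝ => (p.1 + T, p.2)) (by fun_prop)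
    fun _ hp => ⟨add_mem_Icc_two_mul hp.1, mem_univ _⟩

lemma hasDerivAt_interpFlow (hY : IsFlow G Y) (hG : OddReaction T Λ M C K G q) (a t : ℝ) :
    HasDerivAt (fun τ => interpFlow T Y τ a)
      ((1 - t / T) * G t (Y a (t + T)) + t / T * G t (Y a t) - (Y a (t + T) - Y a t) / T) t := by
  have hshift : HasDerivAt (fun τ => Y a (τ + T)) (G t (Y a (t + T))) t := by
    simpa only [hG.periodic] using (hY.ode a (t + T) (mem_univ _)).comp_add_const t T
  have hlin : HasDerivAt (fun τ : ℝ => τ / T) (1 / T) t := (hasDerivAt_id t).div_const T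
  refine (((hlin.const_sub 1).mul hshift).add (hlin.mul (hY.ode a t (mem_univ _)))).congr_deriv ?_
  ring

lemma apply_nonneg (hY : IsFlow G Y) (hG : OddReaction T Λ M C K G q) (ha : 0 ≤ a) (ht : 0 ≤ t) :
    0 ≤ Y a t := by
  have hmap := hY.oddBiLipschitz hG (⟨ht, le_rfl⟩ : t ∈ Icc 0 t)
  have := hmap.slope_ge ha
  rw [hmap.apply_zero, sub_zero, sub_zero] at this
  exact (mul_nonneg (Real.exp_pos _).le ha).trans this

/-- Interpolating gains `(P - Q) / T` with `P = Y a (t + T)` and `Q = Y a t`; at small amplitude the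
convexity error `C (P - Q)²` consumes at most half of it. -/
lemma interpFlow_deriv_le (hY : IsFlow G Y) (hG : OddReaction T Λ M C K G q) (hA : A ≤ q 0)
    (hsmall : 2 * T * C * Real.exp (Λ * (2 * T)) * A ≤ 1) (ht : t ∈ Icc 0 T) (ha : a ∈ Icc 0 A)
    (hinc : Y a t ≤ Y a (t + T)) :
    (1 - t / T) * G t (Y a (t + T)) + t / T * G t (Y a t) - (Y a (t + T) - Y a t) / T
      ≤ G t (interpFlow T Y t a) - (Y a (t + T) - Y a t) / (2 * T) := by
  have hT := hG.period_pos
  have hC := hG.remainder_nonneg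
  have haq : |a| ≤ q 0 := by rw [abs_of_nonneg ha.1]; exact ha.2.trans hA
  have hconv := (hG.remainder t).convexCombo_le (convex_Icc _ _) hC
    (abs_le.1 (hY.abs_apply_le hG haq (t + T))) (abs_le.1 (hY.abs_apply_le hG haq t))
    (div_mem_unitInterval hT ht)
  have hP : Y a (t + T) ≤ Real.exp (Λ * (2 * T)) * A := by
    have hmap := hY.oddBiLipschitz hG (add_mem_Icc_two_mul ht)
    have := hmap.slope_le ha.1
    rw [hmap.apply_zero, sub_zero, sub_zero] at this
    exact this.trans (mul_le_mul_of_nonneg_left ha.2 (Real.exp_pos _).le)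
  have hQ : 0 ≤ Y a t := hY.apply_nonneg hG ha.1 ht.1
  set P := Y a (t + T)
  set Q := Y a t
  have herror : C * (P - Q) ^ 2 ≤ (P - Q) / (2 * T) := by
    rw [le_div_iff₀ (by positivity)]
    have hsmall' : 2 * T * C * (P - Q) ≤ 1 := by
      have := mul_le_mul_of_nonneg_left (sub_le_self P hQ |>.trans hP)
        (by positivity : 0 ≤ 2 * T * C)
      linarith
    linarith [mul_le_mul_of_nonneg_right hsmall' (sub_nonneg.2 hinc)]
  have hhalf : (P - Q) / T = 2 * ((P - Q) / (2 * T)) := by field_simp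
  change _ ≤ G t ((1 - t / T) * P + t / T * Q) - _
  linarith

lemma exists_pos_forall_le_sub (hY : IsFlow G Y) (hG : OddReaction T Λ M C K G q) (hA : 0 < A)
    (hinc : ∀ a ∈ Ioc 0 A, ∀ t, 0 ≤ t → Y a t < Y a (t + T)) :
    ∃ η > 0, ∀ t ∈ Icc 0 T, ∀ a ∈ Icc (A / 8) A, η ≤ Y a (t + T) - Y a t := by
  have hcont : ContinuousOn (fun p : ℝ × ℝ => Y p.2 (p.1 + T) - Y p.2 p.1)
      (Icc 0 T ×ˢ Icc (A / 8) A) :=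
    ((hY.continuousOn_add_period hG).sub (hY.continuousOn hG T)).mono
      (prod_mono le_rfl (subset_univ _))
  have hne : (Icc 0 T ×ˢ Icc (A / 8) A).Nonempty :=
    ⟨(0, A), left_mem_Icc.2 hG.period_pos.le, by linarith, le_rfl⟩
  obtain ⟨p, hp, hmin⟩ := (isCompact_Icc.prod isCompact_Icc).exists_isMinOn hne hcont
  exact ⟨_, sub_pos.2 (hinc p.2 ⟨by linarith [hp.2.1], hp.2.2⟩ p.1 hp.1.1),
    fun t ht a ha => hmin (mk_mem_prod ht ha)⟩

lemma exists_slackFlow_interpFlow (hY : IsFlow G Y) (hG : OddReaction T Λ M C K G q) (hA : 0 < A)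
    (hAq : A ≤ q 0) (hmap : 12 * (C / 2 * Real.exp (Λ * (2 * T)) ^ 3 / Λ) * A
      ≤ Real.exp (-(Λ * (2 * T)))) (hsmall : 2 * T * C * Real.exp (Λ * (2 * T)) * A ≤ 1)
    (hinc : ∀ a ∈ Ioc 0 A, ∀ t, 0 ≤ t → Y a t < Y a (t + T)) :
    ∃ η, SlackFlow T A (Real.exp (-(Λ * (2 * T)))) (Real.exp (Λ * (2 * T)))
      (C / 2 * Real.exp (Λ * (2 * T)) ^ 3 / Λ) η G q (interpFlow T Y) := by
  have hT := hG.period_pos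
  obtain ⟨η, hη, hgap⟩ := hY.exists_pos_forall_le_sub hG hA hinc
  refine ⟨η / (2 * T), hA, Real.exp_pos _, by positivity, hmap, ?_, fun a => ?_,
    fun t ht => ?_, fun t ht a ha => ?_, fun t ht a ha => ?_⟩
  · have hweight : Continuous fun p : ℝ × ℝ => p.1 / T := by fun_prop
    exact ((continuous_const.sub hweight).continuousOn.mul (hY.continuousOn_add_period hG)).add
      (hweight.continuousOn.mul (hY.continuousOn hG T))
  · simp [interpFlow, div_self hT.ne']
  · exact ((hY.oddBiLipschitz hG (add_mem_Icc_two_mul ht)).mono_amplitude hAq).convexCombo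
      ((hY.oddBiLipschitz hG (mem_Icc_two_mul ht)).mono_amplitude hAq)
      (div_mem_unitInterval hT ht)
  · have hl := div_mem_unitInterval hT ht
    have hP := hY.apply_le hG (ha.2.trans hAq) (t + T)
    rw [hG.q_periodic] at hP
    calc interpFlow T Y t a ≤ (1 - t / T) * q t + t / T * q t :=
          add_le_add (mul_le_mul_of_nonneg_left hP (sub_nonneg.2 hl.2))
            (mul_le_mul_of_nonneg_left (hY.apply_le hG (ha.2.trans hAq) t) hl.1)
      _ = q t := by ring
  · have hle : Y a t ≤ Y a (t + T) := by
      rcases ha.1.eq_or_lt with rfl | hpos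
      · rw [(hY.oddBiLipschitz hG (mem_Icc_two_mul ht)).apply_zero,
          (hY.oddBiLipschitz hG (add_mem_Icc_two_mul ht)).apply_zero]
      · exact (hinc a ⟨hpos, ha.2⟩ t ht.1).le
    have hderiv := hY.interpFlow_deriv_le hG hAq hsmall ht ha hle
    have hslack : 0 ≤ (Y a (t + T) - Y a t) / (2 * T) :=
      div_nonneg (sub_nonneg.2 hle) (by positivity)
    refine ⟨_, hY.hasDerivAt_interpFlow hG a t, by linarith, fun hamp => ?_⟩
    have := div_le_div_of_nonneg_right (hgap t ht a ⟨hamp, ha.2⟩) (by positivity : 0 ≤ 2 * T)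
    linarith

end IsFlow

lemma OddReaction.exists_slackFlow (hG : OddReaction T Λ M C K G q) (hδ : 0 < δ)
    (hmono : ∀ y, ODESolOn G y univ → 0 < y 0 → y 0 < δ → ∀ t, 0 ≤ t → y t < y (t + T)) :
    ∃ A m M' C' η J, SlackFlow T A m M' C' η G q J := by
  obtain ⟨Y, hY⟩ := hG.exists_isFlow
  have hsmall (c : ℝ) {d : ℝ} (hd : 0 < d) : ∀ᶠ A in 𝓝[>] (0 : ℝ), c * A < d :=
    (((continuous_const_mul c).tendsto' 0 0 (mul_zero c)).eventually_lt_const hd).filter_mono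
      nhdsWithin_le_nhds
  obtain ⟨A, hA, hmin, hmap, hone⟩ := (eventually_mem_nhdsWithin.and
    ((hsmall 1 (lt_min hδ (hG.q_pos 0))).and ((hsmall _ (Real.exp_pos _)).and
      (hsmall _ one_pos)))).exists
  rw [one_mul, lt_min_iff] at hmin
  obtain ⟨η, hJ⟩ := hY.exists_slackFlow_interpFlow hG hA hmin.2.le hmap.le hone.le
    fun a ha => hmono (Y a) (hY.ode a) (by rw [hY.initial]; exact ha.1)
      (by rw [hY.initial]; exact ha.2.trans_lt hmin.1)
  exact ⟨A, _, _, _, η, _, hJ⟩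

end

/-- The profile `A cos³(ωx)`, of amplitude `A`; it is convex where it is small. -/
def cosCube (A ω x : ℝ) : ℝ := A * Real.cos (ω * x) ^ 3

/-- The first derivative of `cosCube A ω`. -/
def cosCubeDeriv (A ω x : ℝ) : ℝ := -(3 * A * ω * Real.cos (ω * x) ^ 2 * Real.sin (ω * x))

/-- The second derivative of `cosCube A ω`. -/
def cosCubeDeriv₂ (A ω x : ℝ) : ℝ :=
  3 * A * ω ^ 2 * (Real.cos (ω * x) * (2 - 3 * Real.cos (ω * x) ^ 2))

section

variable {A R ω s x : ℝ}

lemma cosCube_eq (A ω x : ℝ) :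
    cosCube A ω x = A / 4 * (3 * Real.cos (ω * x) + Real.cos (3 * ω * x)) := by
  rw [cosCube, mul_assoc 3 ω, Real.cos_three_mul]
  ring

lemma continuous_cosCube (A ω : ℝ) : Continuous (cosCube A ω) := by
  unfold cosCube
  fun_prop

lemma hasDerivAt_cosCube (A ω x : ℝ) : HasDerivAt (cosCube A ω) (cosCubeDeriv A ω x) x := by
  have hlin : HasDerivAt (fun y => ω * y) ω x := by simpa using (hasDerivAt_id x).const_mul ω
  refine ((hlin.cos.pow 3).const_mul A).congr_deriv ?_
  rw [cosCubeDeriv]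
  norm_num
  ring

lemma hasDerivAt_cosCubeDeriv (A ω x : ℝ) :
    HasDerivAt (cosCubeDeriv A ω) (cosCubeDeriv₂ A ω x) x := by
  have hlin : HasDerivAt (fun y => ω * y) ω x := by simpa using (hasDerivAt_id x).const_mul ω
  refine (((hlin.cos.pow 2).const_mul (3 * A * ω)).mul hlin.sin).neg.congr_deriv ?_
  rw [cosCubeDeriv₂]
  norm_num
  linear_combination (6 * A * ω ^ 2 * Real.cos (ω * x)) * Real.sin_sq (ω * x)

lemma abs_cosCube_le (hA : 0 ≤ A) (ω x : ℝ) : |cosCube A ω x| ≤ A := by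
  rw [cosCube, abs_mul, abs_of_nonneg hA, abs_pow]
  exact mul_le_of_le_one_right hA (pow_le_one₀ (abs_nonneg _) (Real.abs_cos_le_one _))

lemma exists_holder_cosCube (hs₀ : 0 ≤ s) (hs₁ : s ≤ 1) (A ω : ℝ) :
    ∃ H, ∀ x y, |cosCube A ω x - cosCube A ω y| ≤ H * |x - y| ^ s := by
  have hcos : ∀ ω x y : ℝ, |Real.cos (ω * x) - Real.cos (ω * y)| ≤ 2 * |ω| ^ s * |x - y| ^ s :=
    fun ω x y => (abs_cos_sub_cos_le_rpow hs₀ hs₁ (ω * x) (ω * y)).trans_eq <| by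
      rw [← mul_sub, abs_mul, Real.mul_rpow (abs_nonneg _) (abs_nonneg _), mul_assoc]
  refine ⟨|A / 4| * (3 * (2 * |ω| ^ s) + 2 * |3 * ω| ^ s), fun x y => ?_⟩
  rw [cosCube_eq, cosCube_eq, ← mul_sub, abs_mul, mul_assoc |A / 4|]
  refine mul_le_mul_of_nonneg_left ?_ (abs_nonneg _)
  have h₁ := abs_le.1 (hcos ω x y)
  have h₃ := abs_le.1 (hcos (3 * ω) x y)
  rw [abs_le]
  constructor <;> linarith [h₁.1, h₁.2, h₃.1, h₃.2]

lemma secondDiffBound_cos (hs₀ : 0 ≤ s) (hs₂ : s ≤ 2) (ω : ℝ) :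
    SecondDiffBound (fun x => Real.cos (ω * x)) s (4 * |ω| ^ s) := fun x h hh => by
  have hprod : Real.cos (ω * (x + h)) + Real.cos (ω * (x - h)) - 2 * Real.cos (ω * x)
      = Real.cos (ω * x) * (2 * Real.cos (ω * h) - 2) := by
    rw [mul_add, mul_sub, Real.cos_add, Real.cos_sub]
    ring
  calc |Real.cos (ω * (x + h)) + Real.cos (ω * (x - h)) - 2 * Real.cos (ω * x)|
      = |Real.cos (ω * x)| * |2 * Real.cos (ω * h) - 2| := by rw [hprod, abs_mul]
    _ ≤ |2 * Real.cos (ω * h) - 2| :=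
        mul_le_of_le_one_left (abs_nonneg _) (Real.abs_cos_le_one _)
    _ ≤ 4 * |ω * h| ^ s := abs_two_mul_cos_sub_two_le_rpow hs₀ hs₂ _
    _ = 4 * |ω| ^ s * h ^ s := by
        rw [abs_mul, Real.mul_rpow (abs_nonneg _) (abs_nonneg _), abs_of_nonneg hh, mul_assoc]

lemma exists_secondDiffBound_cosCube (hs₀ : 0 ≤ s) (hs₂ : s ≤ 2) (A ω : ℝ) :
    ∃ D, SecondDiffBound (cosCube A ω) s D := by
  refine ⟨|A / 4| * (3 * (4 * |ω| ^ s) + 4 * |3 * ω| ^ s), fun x h hh => ?_⟩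
  have hfactor : cosCube A ω (x + h) + cosCube A ω (x - h) - 2 * cosCube A ω x
      = A / 4 * (3 * (Real.cos (ω * (x + h)) + Real.cos (ω * (x - h)) - 2 * Real.cos (ω * x))
        + (Real.cos (3 * ω * (x + h)) + Real.cos (3 * ω * (x - h))
          - 2 * Real.cos (3 * ω * x))) := by
    simp only [cosCube_eq]
    ring
  rw [hfactor, abs_mul, mul_assoc |A / 4|]
  refine mul_le_mul_of_nonneg_left ?_ (abs_nonneg _)
  have h₁ := abs_le.1 (secondDiffBound_cos hs₀ hs₂ ω x h hh)
  have h₃ := abs_le.1 (secondDiffBound_cos hs₀ hs₂ (3 * ω) x h hh)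
  rw [abs_le]
  constructor <;> linarith [h₁.1, h₁.2, h₃.1, h₃.2]

lemma pi_div_mul_mem_Icc (hR : 0 < R) (hx : x ∈ Icc (-R) R) :
    Real.pi / (2 * R) * x ∈ Icc (-(Real.pi / 2)) (Real.pi / 2) := by
  have hend : Real.pi / (2 * R) * R = Real.pi / 2 := by field_simp
  have hω : 0 ≤ Real.pi / (2 * R) := by positivity
  have hlo := mul_le_mul_of_nonneg_left hx.1 hω
  have hhi := mul_le_mul_of_nonneg_left hx.2 hω
  exact ⟨by linarith, by linarith⟩

lemma cosCube_mem_Icc (hA : 0 ≤ A) (hR : 0 < R) (hx : x ∈ Icc (-R) R) :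
    cosCube A (Real.pi / (2 * R)) x ∈ Icc 0 A :=
  ⟨mul_nonneg hA (pow_nonneg (Real.cos_nonneg_of_mem_Icc (pi_div_mul_mem_Icc hR hx)) 3),
    (le_abs_self _).trans (abs_cosCube_le hA _ _)⟩

lemma antitoneOn_cosCube (hA : 0 ≤ A) (hR : 0 < R) :
    AntitoneOn (cosCube A (Real.pi / (2 * R))) (Icc 0 R) := fun x hx y hy hxy => by
  have hω : 0 ≤ Real.pi / (2 * R) := by positivity
  have hyπ := pi_div_mul_mem_Icc hR (⟨by linarith [hy.1], hy.2⟩ : y ∈ Icc (-R) R)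
  have hcos := Real.cos_le_cos_of_nonneg_of_le_pi (mul_nonneg hω hx.1)
    (by linarith [hyπ.2, Real.pi_pos]) (mul_le_mul_of_nonneg_left hxy hω)
  exact mul_le_mul_of_nonneg_left (pow_le_pow_left₀ (Real.cos_nonneg_of_mem_Icc hyπ) hcos 3) hA

lemma quarterWave_cosCube (hR : 0 < R) (A : ℝ) :
    QuarterWave R (cosCube A (Real.pi / (2 * R))) := by
  have hcos := quarterWave_cos hR odd_one
  simp only [quarterFreq, Int.cast_one, mul_one] at hcos
  exact ⟨fun x => by simp only [cosCube, hcos.even x],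
    fun x => by simp only [cosCube, hcos.odd x]; ring⟩

lemma cosCubeDeriv_sq_le (A ω x : ℝ) : (2 * cosCubeDeriv A ω x) ^ 2 ≤ 36 * A ^ 2 * ω ^ 2 := by
  have hle : (Real.cos (ω * x) ^ 2) ^ 2 * Real.sin (ω * x) ^ 2 ≤ 1 :=
    mul_le_one₀ (pow_le_one₀ (sq_nonneg _) (Real.cos_sq_le_one _)) (sq_nonneg _)
      (Real.sin_sq_le_one _)
  calc (2 * cosCubeDeriv A ω x) ^ 2
      = 36 * A ^ 2 * ω ^ 2 * ((Real.cos (ω * x) ^ 2) ^ 2 * Real.sin (ω * x) ^ 2) := by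
        rw [cosCubeDeriv]; ring
    _ ≤ _ := mul_le_of_le_one_right (by positivity) hle

lemma neg_le_cosCubeDeriv₂ (hA : 0 ≤ A) (ω x : ℝ) : -(3 * A * ω ^ 2) ≤ cosCubeDeriv₂ A ω x := by
  have hle : -1 ≤ Real.cos (ω * x) * (2 - 3 * Real.cos (ω * x) ^ 2) := by
    set c := Real.cos (ω * x)
    have : 0 ≤ (1 - c) * (3 * (c + 1 / 2) ^ 2 + 1 / 4) :=
      mul_nonneg (sub_nonneg.2 (Real.cos_le_one _)) (by positivity)
    linarith
  rw [cosCubeDeriv₂, ← mul_neg_one]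
  exact mul_le_mul_of_nonneg_left hle (by positivity)

lemma mul_cosCubeDeriv_sq_le (hA : 0 ≤ A) {C m : ℝ} (hC : 0 ≤ C) (hCA : 12 * C * A ≤ m)
    (hcos : 0 ≤ Real.cos (ω * x)) (hthird : Real.cos (ω * x) ^ 2 ≤ 1 / 3) :
    0 ≤ cosCubeDeriv₂ A ω x ∧ C * (2 * cosCubeDeriv A ω x) ^ 2 ≤ m * cosCubeDeriv₂ A ω x := by
  have hm : 0 ≤ m := le_trans (by positivity) hCA
  have hsin : Real.sin (ω * x) ^ 2 ≤ 1 := Real.sin_sq_le_one _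
  have hcos₁ : Real.cos (ω * x) ≤ 1 := Real.cos_le_one _
  have hconvex : 3 * A * ω ^ 2 * Real.cos (ω * x) ≤ cosCubeDeriv₂ A ω x :=
    mul_le_mul_of_nonneg_left (le_mul_of_one_le_right hcos (by linarith)) (by positivity)
  refine ⟨le_trans (by positivity) hconvex, ?_⟩
  set c := Real.cos (ω * x)
  have hquartic : c ^ 4 * Real.sin (ω * x) ^ 2 ≤ c :=
    (mul_le_of_le_one_right (by positivity) hsin).trans
      (pow_le_of_le_one hcos hcos₁ four_ne_zero)
  calc C * (2 * cosCubeDeriv A ω x) ^ 2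
      = 12 * C * A * (3 * A * ω ^ 2) * (c ^ 4 * Real.sin (ω * x) ^ 2) := by rw [cosCubeDeriv]; ring
    _ ≤ m * (3 * A * ω ^ 2) * c := by gcongr
    _ = m * (3 * A * ω ^ 2 * c) := by ring
    _ ≤ _ := mul_le_mul_of_nonneg_left hconvex hm

lemma div_eight_le_cosCube (hA : 0 ≤ A) (hcos : 0 ≤ Real.cos (ω * x))
    (hthird : 1 / 3 ≤ Real.cos (ω * x) ^ 2) : A / 8 ≤ cosCube A ω x := by
  have hhalf : 1 / 2 ≤ Real.cos (ω * x) := by nlinarith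
  calc A / 8 = A * (1 / 2) ^ 3 := by ring
    _ ≤ _ := mul_le_mul_of_nonneg_left (pow_le_pow_left₀ (by norm_num) hhalf 3) hA

end

lemma hasDerivAt_le_of_eventually_sub_le {g j : ℝ → ℝ} {g' j' t : ℝ} (hg : HasDerivAt g g' t)
    (hj : HasDerivAt j j' t) (h : ∀ᶠ τ in 𝓝[<] t, g t - j t ≤ g τ - j τ) : g' ≤ j' := by
  refine sub_nonpos.1 (le_of_tendsto (hasDerivAt_iff_tendsto_slope_left_right.1 (hg.sub hj)).1 ?_)
  filter_upwards [h, self_mem_nhdsWithin] with τ hτ hlt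
  rw [slope_def_field]
  exact div_nonpos_of_nonneg_of_nonpos (sub_nonneg.2 hτ) (sub_nonpos.2 (mem_Iio.1 hlt).le)

namespace OddBiLipschitz

variable {A m M C : ℝ} {g : ℝ → ℝ}

lemma lower_le_upper (hg : OddBiLipschitz A m M C g) : m ≤ M := by
  simpa using (hg.slope_ge zero_le_one).trans (hg.slope_le zero_le_one)

lemma remainder_nonneg (hg : OddBiLipschitz A m M C g) (hA : 0 < A) : 0 ≤ C := by
  have := (abs_nonneg _).trans (hg.midpoint (abs_zero.trans_le hA.le) (abs_of_pos hA).le)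
  rw [sub_zero] at this
  exact nonneg_of_mul_nonneg_left this (by positivity)

lemma le_secondDiff (hg : OddBiLipschitz A m M C g) (a : ℝ) {b c : ℝ} (hb : |b| ≤ A)
    (hc : |c| ≤ A) :
    min (m * (b + c - 2 * a)) (M * (b + c - 2 * a)) - C * (b - c) ^ 2 ≤ g b + g c - 2 * g a := by
  have hmid := (abs_le.1 (hg.midpoint hc hb)).1
  rw [add_comm c b] at hmid
  suffices min (m * (b + c - 2 * a)) (M * (b + c - 2 * a)) ≤ 2 * (g ((b + c) / 2) - g a) by
    linarith
  rcases le_total a ((b + c) / 2) with h | h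
  · exact (min_le_left _ _).trans (by linarith [hg.slope_ge h])
  · exact (min_le_right _ _).trans (by linarith [hg.slope_le h])

/-- `g ∘ F` need not be twice differentiable, so the second-derivative test for a function touching
it from above uses the bi-Lipschitz and midpoint bounds instead. -/
lemma le_secondDeriv_of_isMinOn (hg : OddBiLipschitz A m M C g) {F F' w wx : ℝ → ℝ}
    {a b x F'' wxx : ℝ} (hx : x ∈ Ioo a b) (hFA : ∀ y, |F y| ≤ A)
    (hF : ∀ y, HasDerivAt F (F' y) y) (hF' : HasDerivAt F' F'' x)
    (hw : ∀ y, HasDerivAt w (wx y) y) (hwx : HasDerivAt wx wxx x)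
    (hmin : IsMinOn (fun y => w y - g (F y)) (Icc a b) x) :
    min (m * F'') (M * F'') - C * (2 * F' x) ^ 2 ≤ wxx := by
  have hquot := tendsto_secondDiffQuotient hF hF'
  refine le_of_tendsto_of_tendsto (((hquot.const_mul m).min (hquot.const_mul M)).sub
    (((tendsto_symmDiffQuotient (hF x)).pow 2).const_mul C))
    (tendsto_secondDiffQuotient hw hwx) ?_
  filter_upwards [eventually_add_sub_mem_Ioo hx, self_mem_nhdsWithin] with h ⟨h₁, h₂⟩ hh
  have hh₂ : 0 < h ^ 2 := pow_pos (mem_Ioi.1 hh) 2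
  have hplus := isMinOn_iff.1 hmin _ (Ioo_subset_Icc_self h₁)
  have hminus := isMinOn_iff.1 hmin _ (Ioo_subset_Icc_self h₂)
  have hsecond := hg.le_secondDiff (F x) (hFA (x + h)) (hFA (x - h))
  rw [div_pow, ← mul_div_assoc, ← mul_div_assoc, ← mul_div_assoc, min_div_div_right hh₂.le,
    ← sub_div]
  exact div_le_div_of_nonneg_right (by linarith) hh₂.le

end OddBiLipschitz

/-- The subsolution on `[-R, R]`: the slack flow, extended `T`-periodically in time, applied to the
profile `A cos³(πx / 2R)`. -/
def slackSubsolution (T A R : ℝ) (J : ℝ → ℝ → ℝ) (x t : ℝ) : ℝ :=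
  J (T * Int.fract (t / T)) (cosCube A (Real.pi / (2 * R)) x)

section

variable {T Λ M' C' K A m M C η R s t x : ℝ} {G J : ℝ → ℝ → ℝ} {q : ℝ → ℝ}

lemma mul_fract_div_mem_Icc (hT : 0 < T) (t : ℝ) : T * Int.fract (t / T) ∈ Icc 0 T :=
  ⟨mul_nonneg hT.le (Int.fract_nonneg _), mul_le_of_le_one_right hT.le (Int.fract_lt_one _).le⟩

lemma exists_mem_Ioc_add_int_mul (hT : 0 < T) (t : ℝ) : ∃ s ∈ Ioc 0 T, ∃ k : ℤ, s + k * T = t := by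
  refine ⟨toIocMod hT 0 t, ?_, toIocDiv hT 0 t, ?_⟩
  · simpa using toIocMod_mem_Ioc hT 0 t
  · rw [← zsmul_eq_mul, toIocMod_add_toIocDiv_zsmul]

namespace SlackFlow

lemma slackSubsolution_add_int_mul (hJ : SlackFlow T A m M C η G q J) (hT : 0 < T)
    (hs : s ∈ Icc 0 T) (k : ℤ) (R x : ℝ) :
    slackSubsolution T A R J x (s + k * T) = J s (cosCube A (Real.pi / (2 * R)) x) := by
  rw [slackSubsolution, add_div, mul_div_cancel_right₀ _ hT.ne', Int.fract_add_intCast]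
  rcases hs.2.eq_or_lt with rfl | h
  · rw [div_self hT.ne', Int.fract_one, mul_zero, hJ.wrap]
  · rw [Int.fract_eq_self.2 ⟨div_nonneg hs.1 hT.le, (div_lt_one hT).2 h⟩, mul_div_cancel₀ _ hT.ne']

lemma continuous_slackSubsolution (hJ : SlackFlow T A m M C η G q J) (hT : 0 < T) (R : ℝ) :
    Continuous fun p : ℝ × ℝ => slackSubsolution T A R J p.1 p.2 := by
  have hcos := continuous_cosCube A (Real.pi / (2 * R))
  refine ContinuousOn.comp_fract (s := fun p : ℝ × ℝ => p.2 / T)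
    (f := fun p r => J (T * r) (cosCube A (Real.pi / (2 * R)) p.1)) ?_ (by fun_prop) ?_
  · exact hJ.cont.comp
      (f := fun z : (ℝ × ℝ) × ℝ => (T * z.2, cosCube A (Real.pi / (2 * R)) z.1.1)) (by fun_prop)
      fun z hz => ⟨⟨mul_nonneg hT.le hz.2.1, mul_le_of_le_one_right hT.le hz.2.2⟩, mem_univ _⟩
  · intro p
    simp only [mul_zero, mul_one, hJ.wrap]

lemma quarterWaveField (hJ : SlackFlow T A m M C η G q J) (hT : 0 < T) (hR : 0 < R) :
    QuarterWaveField R T (slackSubsolution T A R J) where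
  cont := hJ.continuous_slackSubsolution hT R
  periodic x t := by rw [slackSubsolution, slackSubsolution, add_div, div_self hT.ne',
    Int.fract_add_one]
  quarterWave t :=
    { even := fun x => by simp only [slackSubsolution, (quarterWave_cosCube hR A).even x]
      odd := fun x => by
        simp only [slackSubsolution, (quarterWave_cosCube hR A).odd x,
          (hJ.map _ (mul_fract_div_mem_Icc hT t)).odd] }

lemma map_monotone (hJ : SlackFlow T A m M C η G q J) (hs : s ∈ Icc 0 T) : Monotone (J s) :=
  fun _ _ hab => sub_nonneg.1 <|
    (mul_nonneg hJ.slope_pos.le (sub_nonneg.2 hab)).trans ((hJ.map s hs).slope_ge hab)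

lemma exists_profile (hJ : SlackFlow T A m M C η G q J) (hT : 0 < T) (hR : 0 < R) :
    ∃ H D, Profile R T H D (slackSubsolution T A R J) := by
  obtain ⟨H, hH⟩ := exists_holder_cosCube (s := 5 / 8) (by norm_num) (by norm_num) A
    (Real.pi / (2 * R))
  obtain ⟨D, hD⟩ := exists_secondDiffBound_cosCube (s := 5 / 4) (by norm_num) (by norm_num) A
    (Real.pi / (2 * R))
  have hmap (t : ℝ) := hJ.map _ (mul_fract_div_mem_Icc hT t)
  have hM : 0 ≤ M := hJ.slope_pos.le.trans (hmap 0).lower_le_upper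
  have hlip (t : ℝ) := (hmap t).abs_sub_le hJ.slope_pos.le
  have hcos := abs_cosCube_le hJ.amp_pos.le (Real.pi / (2 * R))
  refine ⟨M * H, 4 * C * H ^ 2 + M * D, hJ.quarterWaveField hT hR, fun t => ?_, fun t x y => ?_,
    fun t => ?_⟩
  · exact (hJ.map_monotone (mul_fract_div_mem_Icc hT t)).comp_antitoneOn
      (antitoneOn_cosCube hJ.amp_pos.le hR)
  · rw [mul_assoc]
    exact (hlip t _ _).trans (mul_le_mul_of_nonneg_left (hH x y) hM)
  · exact hD.comp hM ((hmap t).remainder_nonneg hJ.amp_pos) hH (hlip t) fun x y => by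
      rw [sub_sq_comm]
      exact (hmap t).midpoint (hcos x) (hcos y)

lemma slackSubsolution_le (hJ : SlackFlow T A m M C η G q J) (hT : 0 < T)
    (hq : Function.Periodic q T) (hR : 0 < R) (hx : x ∈ Icc (-R) R) (t : ℝ) :
    slackSubsolution T A R J x t ≤ q t := by
  obtain ⟨s, hs, k, rfl⟩ := exists_mem_Ioc_add_int_mul hT t
  rw [hJ.slackSubsolution_add_int_mul hT (Ioc_subset_Icc_self hs), hq.int_mul k s]
  exact hJ.le s (Ioc_subset_Icc_self hs) _ (cosCube_mem_Icc hJ.amp_pos.le hR hx)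

/-- Near the boundary the convexity of `cos³` outweighs the remainder; elsewhere the amplitude is at
least `A / 8` and the diffusion loss, of order `R⁻²`, is at most the slack. -/
lemma diffusion_nonneg_or_slack (hJ : SlackFlow T A m M C η G q J) (hs : s ∈ Icc 0 T) (hR : 0 < R)
    (hη : (Real.pi / (2 * R)) ^ 2 * (3 * M * A + 36 * C * A ^ 2) ≤ η) (hx : x ∈ Icc (-R) R) {d : ℝ}
    (hd : min (m * cosCubeDeriv₂ A (Real.pi / (2 * R)) x)
      (M * cosCubeDeriv₂ A (Real.pi / (2 * R)) x)
        - C * (2 * cosCubeDeriv A (Real.pi / (2 * R)) x) ^ 2 ≤ d) :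
    0 ≤ d ∨ A / 8 ≤ cosCube A (Real.pi / (2 * R)) x ∧ -η ≤ d := by
  set ω := Real.pi / (2 * R)
  have hA := hJ.amp_pos.le
  have hC := (hJ.map s hs).remainder_nonneg hJ.amp_pos
  have hmM := (hJ.map s hs).lower_le_upper
  have hcos : 0 ≤ Real.cos (ω * x) := Real.cos_nonneg_of_mem_Icc (pi_div_mul_mem_Icc hR hx)
  rcases le_total (Real.cos (ω * x) ^ 2) (1 / 3) with hthird | hthird
  · obtain ⟨hconvex, hsq⟩ := mul_cosCubeDeriv_sq_le hA hC hJ.amp_small hcos hthird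
    rw [min_eq_left (mul_le_mul_of_nonneg_right hmM hconvex)] at hd
    exact Or.inl (by linarith)
  · refine Or.inr ⟨div_eight_le_cosCube hA hcos hthird, ?_⟩
    have hm := hJ.slope_pos.le
    have hneg := neg_le_cosCubeDeriv₂ hA ω x
    have hloss : m * (3 * A * ω ^ 2) ≤ M * (3 * A * ω ^ 2) := by gcongr
    have hmin : -(M * (3 * A * ω ^ 2)) ≤ min (m * cosCubeDeriv₂ A ω x) (M * cosCubeDeriv₂ A ω x) :=
      le_min (by linarith [mul_le_mul_of_nonneg_left hneg hm])
        (by linarith [mul_le_mul_of_nonneg_left hneg (hm.trans hmM)])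
    linarith [mul_le_mul_of_nonneg_left (cosCubeDeriv_sq_le A ω x) hC]

lemma deriv_le_of_isMin (hJ : SlackFlow T A m M C η G q J) (hT : 0 < T) (hs : s ∈ Ioc 0 T) (k : ℤ)
    {w : ℝ → ℝ} {w' d : ℝ} (hw : HasDerivAt w w' (s + k * T))
    (hd : HasDerivAt (fun τ => J τ (cosCube A (Real.pi / (2 * R)) x)) d s)
    (hmin : ∀ τ, w (s + k * T) - slackSubsolution T A R J x (s + k * T)
      ≤ w τ - slackSubsolution T A R J x τ) : w' ≤ d := by
  refine hasDerivAt_le_of_eventually_sub_le (hw.comp_add_const s (k * T)) hd ?_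
  filter_upwards [Ioo_mem_nhdsLT hs.1] with τ hτ
  have := hmin (τ + k * T)
  rwa [hJ.slackSubsolution_add_int_mul hT (Ioc_subset_Icc_self hs),
    hJ.slackSubsolution_add_int_mul hT ⟨hτ.1.le, hτ.2.le.trans hs.2⟩] at this

lemma test_slackSubsolution (hJ : SlackFlow T A m M C η G q J) (hT : 0 < T)
    (hG : Function.Periodic G T) (hR : 0 < R)
    (hη : (Real.pi / (2 * R)) ^ 2 * (3 * M * A + 36 * C * A ^ 2) ≤ η)
    {w wx wxx wt : ℝ → ℝ → ℝ} (hw : PeriodicC21 T w wx wxx wt) (hx : x ∈ Ioo (-R) R)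
    (hmin : ∀ y ∈ Icc (-R) R, ∀ τ,
      w x t - slackSubsolution T A R J x t ≤ w y τ - slackSubsolution T A R J y τ) :
    wt x t ≤ wxx x t + G t (slackSubsolution T A R J x t) := by
  obtain ⟨s, hs, k, rfl⟩ := exists_mem_Ioc_add_int_mul hT t
  have hsI := Ioc_subset_Icc_self hs
  have hxI := Ioo_subset_Icc_self hx
  obtain ⟨d, hd, hflow, hslack⟩ := hJ.deriv s hsI _ (cosCube_mem_Icc hJ.amp_pos.le hR hxI)
  have htime := hJ.deriv_le_of_isMin hT hs k (hw.hasDerivAt_t x _) hd (hmin x hxI)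
  have hspace := (hJ.map s hsI).le_secondDeriv_of_isMinOn hx (abs_cosCube_le hJ.amp_pos.le _)
    (hasDerivAt_cosCube A (Real.pi / (2 * R))) (hasDerivAt_cosCubeDeriv _ _ _)
    (fun y => hw.hasDerivAt_x y _) (hw.hasDerivAt_xx x _) (isMinOn_iff.2 fun y hy => by
      simpa only [hJ.slackSubsolution_add_int_mul hT hsI] using hmin y hy (s + k * T))
  rw [hJ.slackSubsolution_add_int_mul hT hsI, hG.int_mul k s]
  rcases hJ.diffusion_nonneg_or_slack hsI hR hη hxI hspace with h | ⟨hamp, h⟩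
  · linarith
  · linarith [hslack hamp]

end SlackFlow

lemma OddReaction.exists_subsolution (hG : OddReaction T Λ M' C' K G q)
    (hJ : SlackFlow T A m M C η G q J) (hR : 0 < R)
    (hη : (Real.pi / (2 * R)) ^ 2 * (3 * M * A + 36 * C * A ^ 2) ≤ η) :
    ∃ H D, Subsolution R T G q H D (slackSubsolution T A R J) := by
  have hT := hG.period_pos
  obtain ⟨H, D, hprofile⟩ := hJ.exists_profile hT hR
  have hmem := mul_fract_div_mem_Icc hT
  refine ⟨H, D, hprofile, fun x hx t => ?_,
    fun x hx => hJ.slackSubsolution_le hT hG.q_periodic hR hx, fun t => ?_,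
    fun w wx wxx wt hw x hx t =>
      hJ.test_slackSubsolution hT (fun t => funext (hG.periodic t)) hR hη hw hx⟩
  · rw [slackSubsolution, ← (hJ.map _ (hmem t)).apply_zero]
    exact hJ.map_monotone (hmem t) (cosCube_mem_Icc hJ.amp_pos.le hR hx).1
  · have hslope := (hJ.map _ (hmem t)).slope_ge hJ.amp_pos.le
    rw [(hJ.map _ (hmem t)).apply_zero, sub_zero, sub_zero] at hslope
    rw [slackSubsolution, cosCube, mul_zero, Real.cos_zero, one_pow, mul_one]
    exact (mul_pos hJ.slope_pos hJ.amp_pos).trans_le hslope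

/-- A symmetrically decreasing `T`-periodic solution of `u_t = u_xx + G(t, u)` on `[-R, R]`, with
`0 < u < q` inside and zero boundary values; `u_x = ux` and `u_xx = uxx`. -/
structure SymmDecreasingSol (R T : ℝ) (G : ℝ → ℝ → ℝ) (q : ℝ → ℝ) (u ux uxx : ℝ → ℝ → ℝ) : Prop
    extends QuarterWaveField R T u,
      PeriodicC21 T u ux uxx (fun x t => uxx x t + G t (u x t)) where
  pos : ∀ x ∈ Ioo (-R) R, ∀ t, 0 < u x t
  lt : ∀ x ∈ Ioo (-R) R, ∀ t, u x t < q t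
  deriv_neg : ∀ x ∈ Ioo 0 R, ∀ t, ux x t < 0

lemma OddReaction.exists_symmDecreasingSol_of_slack (hG : OddReaction T Λ M' C' K G q)
    (hJ : SlackFlow T A m M C η G q J) (hR : 0 < R)
    (hη : (Real.pi / (2 * R)) ^ 2 * (3 * M * A + 36 * C * A ^ 2) ≤ η) :
    ∃ u ux uxx, SymmDecreasingSol R T G q u ux uxx := by
  obtain ⟨Hv, Dv, hv⟩ := hG.exists_subsolution hJ hR hη
  obtain ⟨H, D, u, ux, uxx, hu, hs⟩ := exists_semilinearSol hR hG hv
  have hpos := hG.semilinearSol_pos hR hs (fun x hx t => (hv.nonneg x hx t).trans (hu.lo x hx t))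
    fun t => (hv.pos t).trans_le (hu.lo 0 ⟨(neg_lt_zero.2 hR).le, hR.le⟩ t)
  exact ⟨u, ux, uxx,
    { hu.toQuarterWaveField, hs.toPeriodicC21 with
      hasDerivAt_t := fun x t => (hs.hasDerivAt_t x t).congr_deriv (by rw [shiftedSource]; ring)
      pos := hpos
      lt := hG.semilinearSol_lt hR hs hu.hi
      deriv_neg := hG.semilinearSol_deriv_neg hu.toProfile hs hpos }⟩

lemma OddReaction.exists_symmDecreasingSol (hG : OddReaction T Λ M' C' K G q) {δ : ℝ} (hδ : 0 < δ)
    (hmono : ∀ y, ODESolOn G y univ → 0 < y 0 → y 0 < δ → ∀ t, 0 ≤ t → y t < y (t + T)) :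
    ∃ R₀ > 0, ∀ R, R₀ ≤ R → ∃ u ux uxx, SymmDecreasingSol R T G q u ux uxx := by
  obtain ⟨A, m, M, C, η, J, hJ⟩ := hG.exists_slackFlow hδ hmono
  have hlim : Tendsto (fun R : ℝ => (Real.pi / (2 * R)) ^ 2 * (3 * M * A + 36 * C * A ^ 2)) atTop
      (𝓝 0) := by
    have hω : Tendsto (fun R : ℝ => Real.pi / (2 * R)) atTop (𝓝 0) :=
      (tendsto_id.const_mul_atTop two_pos).const_div_atTop _
    simpa using (hω.pow 2).mul_const (3 * M * A + 36 * C * A ^ 2)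
  obtain ⟨R₀, hR₀⟩ := eventually_atTop.1
    ((hlim.eventually_le_const hJ.slack_pos).and (eventually_gt_atTop 0))
  exact ⟨R₀, (hR₀ R₀ le_rfl).2, fun R hR =>
    hG.exists_symmDecreasingSol_of_slack hJ (hR₀ R hR).2 (hR₀ R hR).1⟩

end

section

variable {C K L : ℝ} {g g' : ℝ → ℝ}

lemma HasQuadraticRemainder.of_hasDerivWithinAt {s : Set ℝ} (hs : Convex ℝ s) (hC : 0 ≤ C)
    (hd : ∀ x ∈ s, HasDerivWithinAt g (g' x) s x)
    (hlip : ∀ x ∈ s, ∀ y ∈ s, |g' x - g' y| ≤ C * |x - y|) : HasQuadraticRemainder C s g := by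
  refine ⟨g', fun a ha b hb => ?_⟩
  have hsub : uIcc a b ⊆ s := hs.ordConnected.uIcc_subset ha hb
  have hmean := (convex_uIcc a b).norm_image_sub_le_of_norm_hasDerivWithin_le
    (f := fun x => g x - g' a * x) (f' := fun x => g' x - g' a) (C := C * |b - a|)
    (fun x hx => by
      simpa using
        ((hd x (hsub hx)).mono hsub).fun_sub ((hasDerivWithinAt_id x _).const_mul (g' a)))
    (fun x hx => (hlip x (hsub hx) a ha).trans
      (mul_le_mul_of_nonneg_left (abs_sub_left_of_mem_uIcc hx) hC))
    left_mem_uIcc right_mem_uIcc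
  calc |g b - g a - g' a * (b - a)| = ‖g b - g' a * b - (g a - g' a * a)‖ := by
        rw [Real.norm_eq_abs]; ring_nf
    _ ≤ C * |b - a| * ‖b - a‖ := hmean
    _ = C * (b - a) ^ 2 := by rw [Real.norm_eq_abs, mul_assoc, abs_mul_abs_self, sq]

lemma hasDerivWithinAt_of_odd (hodd : ∀ x, g (-x) = -g x)
    (hd : ∀ x ∈ Icc 0 K, HasDerivWithinAt g (g' x) (Icc 0 K) x) {x : ℝ} (hx : x ∈ Icc (-K) K) :
    HasDerivWithinAt g (g' |x|) (Icc (-K) K) x := by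
  have hreflect : ∀ x ∈ Icc (-K) 0, HasDerivWithinAt g (g' (-x)) (Icc (-K) 0) x := by
    intro x hx
    have hmaps : MapsTo Neg.neg (Icc (-K) 0) (Icc 0 K) := fun y hy =>
      ⟨neg_nonneg.2 hy.2, neg_le.1 hy.1⟩
    have hcomp := ((hd (-x) (hmaps hx)).scomp x (hasDerivWithinAt_neg x _) hmaps).fun_neg
    simpa [Function.comp_def, hodd] using hcomp
  rcases lt_trichotomy x 0 with hneg | rfl | hpos
  · rw [abs_of_neg hneg]
    refine (hreflect x ⟨hx.1, hneg.le⟩).mono_of_mem_nhdsWithin ?_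
    filter_upwards [self_mem_nhdsWithin, mem_nhdsWithin_of_mem_nhds (Iio_mem_nhds hneg)]
      with y hy hy0 using ⟨hy.1, hy0.le⟩
  · have hK : 0 ≤ K := hx.2
    have hunion := (hreflect 0 ⟨hx.1, le_rfl⟩).union (by simpa using hd 0 ⟨le_rfl, hK⟩)
    rw [abs_zero]
    rwa [Icc_union_Icc_eq_Icc hx.1 hK, neg_zero] at hunion
  · rw [abs_of_pos hpos]
    refine (hd x ⟨hpos.le, hx.2⟩).mono_of_mem_nhdsWithin ?_
    filter_upwards [self_mem_nhdsWithin, mem_nhdsWithin_of_mem_nhds (Ioi_mem_nhds hpos)]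
      with y hy hy0 using ⟨hy0.le, hy.2⟩

lemma HasQuadraticRemainder.of_odd (hC : 0 ≤ C) (hodd : ∀ x, g (-x) = -g x)
    (hd : ∀ x ∈ Icc 0 K, HasDerivWithinAt g (g' x) (Icc 0 K) x)
    (hlip : ∀ x ∈ Icc 0 K, ∀ y ∈ Icc 0 K, |g' x - g' y| ≤ C * |x - y|) :
    HasQuadraticRemainder C (Icc (-K) K) g :=
  .of_hasDerivWithinAt (convex_Icc _ _) hC (fun _ hx => hasDerivWithinAt_of_odd hodd hd hx)
    fun x hx y hy => (hlip _ ⟨abs_nonneg x, abs_le.2 hx⟩ _ ⟨abs_nonneg y, abs_le.2 hy⟩).trans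
      (mul_le_mul_of_nonneg_left (abs_abs_sub_abs_le_abs_sub x y) hC)

/-- The odd extension of `g - g 0` from `[0, K]`, constant outside `[-K, K]`. -/
def oddExtension (K : ℝ) (g : ℝ → ℝ) (w : ℝ) : ℝ :=
  g (max 0 (min K w)) - g (max 0 (min K (-w)))

lemma oddExtension_neg (K : ℝ) (g : ℝ → ℝ) (w : ℝ) :
    oddExtension K g (-w) = -oddExtension K g w := by
  rw [oddExtension, oddExtension, neg_neg, neg_sub]

lemma oddExtension_apply {w : ℝ} (hw : w ∈ Icc 0 K) (g : ℝ → ℝ) :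
    oddExtension K g w = g w - g 0 := by
  rw [oddExtension, min_eq_right hw.2, max_eq_right hw.1, max_eq_left]
  exact (min_le_right _ _).trans (neg_nonpos.2 hw.1)

lemma max_min_mem_Icc (hK : 0 ≤ K) (w : ℝ) : max 0 (min K w) ∈ Icc 0 K :=
  ⟨le_max_left _ _, max_le hK (min_le_left _ _)⟩

lemma abs_oddExtension_le {F : ℝ} (hK : 0 ≤ K) (hF : ∀ w ∈ Icc 0 K, |g w| ≤ F) (w : ℝ) :
    |oddExtension K g w| ≤ 2 * F :=
  (abs_sub _ _).trans (by
    linarith [hF _ (max_min_mem_Icc hK w), hF _ (max_min_mem_Icc hK (-w))])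

lemma abs_oddExtension_sub_le {N : ℝ} (hK : 0 ≤ K) (hN : 0 ≤ N)
    (hlip : ∀ v ∈ Icc 0 K, ∀ w ∈ Icc 0 K, |g v - g w| ≤ N * |v - w|) (a b : ℝ) :
    |oddExtension K g a - oddExtension K g b| ≤ 2 * N * |a - b| := by
  have hclamp (a b : ℝ) : |g (max 0 (min K a)) - g (max 0 (min K b))| ≤ N * |a - b| := by
    refine (hlip _ (max_min_mem_Icc hK a) _ (max_min_mem_Icc hK b)).trans
      (mul_le_mul_of_nonneg_left ?_ hN)
    simpa [Subtype.dist_eq, Real.dist_eq, coe_projIcc] using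
      (LipschitzWith.projIcc hK).dist_le_mul a b
  have hneg := hclamp (-a) (-b)
  rw [neg_sub_neg, abs_sub_comm b a] at hneg
  rw [oddExtension, oddExtension, sub_sub_sub_comm]
  exact (abs_sub _ _).trans (by linarith [hclamp a b])

lemma hasQuadraticRemainder_oddExtension (hL : 0 ≤ L) (hg : Differentiable ℝ g)
    (hlip : ∀ v ∈ Icc 0 K, ∀ w ∈ Icc 0 K, |deriv g v - deriv g w| ≤ L * |v - w|) :
    HasQuadraticRemainder L (Icc (-K) K) (oddExtension K g) :=
  .of_odd hL (oddExtension_neg K g) (fun x hx =>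
    ((hg x).hasDerivAt.sub_const (g 0)).hasDerivWithinAt.congr_of_mem
      (fun _ hy => oddExtension_apply hy g) hx) hlip

lemma abs_deriv_le_of_abs_le {F : ℝ} (hK : 0 < K) (hL : 0 ≤ L) (hg : Differentiable ℝ g)
    (hF : ∀ w ∈ Icc 0 K, |g w| ≤ F)
    (hlip : ∀ v ∈ Icc 0 K, ∀ w ∈ Icc 0 K, |deriv g v - deriv g w| ≤ L * |v - w|) {w : ℝ}
    (hw : w ∈ Icc 0 K) : |deriv g w| ≤ 2 * F / K + L * K := by
  obtain ⟨ξ, hξ, hslope⟩ := exists_deriv_eq_slope g hK hg.continuous.continuousOn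
    hg.differentiableOn
  have hξ_le : |deriv g ξ| ≤ 2 * F / K := by
    rw [hslope, sub_zero, abs_div, abs_of_pos hK]
    gcongr
    exact (abs_sub _ _).trans
      (by linarith [hF K ⟨hK.le, le_rfl⟩, hF 0 ⟨le_rfl, hK.le⟩])
  have hvar : |deriv g w - deriv g ξ| ≤ L * K := by
    refine (hlip w hw ξ (Ioo_subset_Icc_self hξ)).trans (mul_le_mul_of_nonneg_left ?_ hL)
    rw [abs_le]
    constructor <;> linarith [hw.1, hw.2, hξ.1, hξ.2]
  linarith [abs_sub_abs_le_abs_sub (deriv g w) (deriv g ξ)]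

end

section

variable {T K L : ℝ} {h : ℝ → ℝ → ℝ} {q : ℝ → ℝ}

lemma exists_abs_le_of_periodic_of_isCompact {s : Set ℝ} (hT : 0 < T)
    (hcont : Continuous fun p : ℝ × ℝ => h p.1 p.2) (hs : IsCompact s)
    (hper : ∀ w ∈ s, Function.Periodic (fun t => h t w) T) :
    ∃ F, ∀ t, ∀ w ∈ s, |h t w| ≤ F := by
  obtain ⟨F, hF⟩ := (isCompact_Icc.prod hs).exists_bound_of_continuousOn
    (hcont.continuousOn (s := Icc 0 T ×ˢ s))
  refine ⟨F, fun t w hw => ?_⟩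
  obtain ⟨t', ht', heq⟩ := (hper w hw).exists_mem_Ico₀ hT t
  exact (congrArg abs heq).le.trans (hF (t', w) ⟨Ico_subset_Icc_self ht', hw⟩)

lemma exists_oddReaction_oddExtension (hT : 0 < T) (hK : 0 < K) (hL : 0 ≤ L)
    (hcont : Continuous fun p : ℝ × ℝ => h p.1 p.2) (hdiff : ∀ t, Differentiable ℝ (h t))
    (hper : ∀ t, ∀ w ∈ Icc 0 K, h (t + T) w = h t w)
    (hlip : ∀ t, ∀ v ∈ Icc 0 K, ∀ w ∈ Icc 0 K, |deriv (h t) v - deriv (h t) w| ≤ L * |v - w|)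
    (hqT : ∀ t, q (t + T) = q t) (hq_pos : ∀ t, 0 < q t) (hqK : ∀ t, q t ≤ K)
    (hq : ∀ t, HasDerivAt q (h t (q t) - h t 0) t) :
    ∃ Λ M, OddReaction T Λ M L K (fun t => oddExtension K (h t)) q := by
  obtain ⟨F, hF⟩ := exists_abs_le_of_periodic_of_isCompact hT hcont isCompact_Icc
    fun w hw t => hper t w hw
  have hF_nonneg : 0 ≤ F := (abs_nonneg _).trans (hF 0 0 ⟨le_rfl, hK.le⟩)
  set N := 2 * F / K + L * K
  have hN : 0 ≤ N := by positivity
  have hN_lip (t : ℝ) : ∀ v ∈ Icc 0 K, ∀ w ∈ Icc 0 K, |h t v - h t w| ≤ N * |v - w| :=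
    fun v hv w hw => (convex_Icc 0 K).norm_image_sub_le_of_norm_deriv_le (fun x _ => hdiff t x)
      (fun x hx => abs_deriv_le_of_abs_le hK hL (hdiff t) (hF t) (hlip t) hx) hw hv
  exact ⟨2 * N + 1, 2 * F,
    { period_pos := hT
      lip_pos := by positivity
      remainder_nonneg := hL
      cont := (hcont.comp (by fun_prop : Continuous fun p : ℝ × ℝ => (p.1, max 0 (min K p.2)))).sub
        (hcont.comp (by fun_prop : Continuous fun p : ℝ × ℝ => (p.1, max 0 (min K (-p.2)))))
      periodic := fun t w => by
        simp only [oddExtension, hper t _ (max_min_mem_Icc hK.le _)]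
      odd := fun t => oddExtension_neg K (h t)
      lip := fun t a b => (abs_oddExtension_sub_le hK.le hN (hN_lip t) a b).trans
        (mul_le_mul_of_nonneg_right (by linarith) (abs_nonneg _))
      bdd := fun t => abs_oddExtension_le hK.le (hF t)
      remainder := fun t => hasQuadraticRemainder_oddExtension hL (hdiff t) (hlip t)
      q_periodic := hqT
      q_pos := hq_pos
      q_le := hqK
      q_ode := fun t _ => by
        simpa only [oddExtension_apply ⟨(hq_pos t).le, hqK t⟩] using hq t }⟩

end

section

variable {T R Λ M K L : ℝ} {f u ux uxx : ℝ → ℝ → ℝ} {p pm pp q : ℝ → ℝ}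

lemma exists_abs_deriv_shift_sub_le {B : ℝ} (hK : 0 < K) (hp : ∀ t, p t ∈ Icc 0 B)
    (hfLip : ∀ K : ℝ, ∃ L : ℝ, ∀ t : ℝ, ∀ v ∈ Icc (0 : ℝ) K, ∀ w ∈ Icc (0 : ℝ) K,
      |deriv (f t) v - deriv (f t) w| ≤ L * |v - w|) :
    ∃ L ≥ 0, ∀ t, ∀ v ∈ Icc 0 K, ∀ w ∈ Icc 0 K,
      |deriv (fun w => f t (p t + w)) v - deriv (fun w => f t (p t + w)) w| ≤ L * |v - w| := by
  obtain ⟨L, hL⟩ := hfLip (B + K)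
  have hmem (t : ℝ) : ∀ w ∈ Icc 0 K, p t + w ∈ Icc 0 (B + K) := fun w hw =>
    ⟨add_nonneg (hp t).1 hw.1, add_le_add (hp t).2 hw.2⟩
  have hlip (t : ℝ) : ∀ v ∈ Icc 0 K, ∀ w ∈ Icc 0 K,
      |deriv (fun w => f t (p t + w)) v - deriv (fun w => f t (p t + w)) w| ≤ L * |v - w| := by
    intro v hv w hw
    simpa only [deriv_comp_const_add, add_sub_add_left_eq_sub] using
      hL t _ (hmem t v hv) _ (hmem t w hw)
  refine ⟨L, nonneg_of_mul_nonneg_left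
    ((abs_nonneg _).trans (hlip 0 K ⟨hK.le, le_rfl⟩ 0 ⟨le_rfl, hK.le⟩)) ?_, hlip⟩
  rwa [sub_zero, abs_of_pos hK]

lemma exists_oddReaction_of_xPer (hT : 0 < T) (hf_cont : Continuous fun q : ℝ × ℝ => f q.1 q.2)
    (hf_diff : ∀ t, Differentiable ℝ (f t)) (hfT : ∀ t v : ℝ, 0 ≤ v → f (t + T) v = f t v)
    (hfLip : ∀ K : ℝ, ∃ L : ℝ, ∀ t : ℝ, ∀ v ∈ Icc (0 : ℝ) K, ∀ w ∈ Icc (0 : ℝ) K,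
      |deriv (f t) v - deriv (f t) w| ≤ L * |v - w|)
    (hpm : XPer T f pm) (hpp : XPer T f pp) (hlt : ∀ t, pm t < pp t) :
    ∃ K Λ M C, OddReaction T Λ M C K (fun t => oddExtension K fun w => f t (pm t + w))
      (fun t => pp t - pm t) := by
  obtain ⟨hpm_nonneg, hpmT, hpm_ode⟩ := hpm
  obtain ⟨-, hppT, hpp_ode⟩ := hpp
  have hpm_cont := hpm_ode.continuous
  obtain ⟨tgap, hgap⟩ := exists_forall_le_of_periodic hT (hpp_ode.continuous.sub hpm_cont)
    fun t => by simp only [Pi.sub_apply, hpmT, hppT]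
  obtain ⟨tmax, hmax⟩ := exists_forall_le_of_periodic hT hpm_cont hpmT
  have hK : 0 < pp tgap - pm tgap := sub_pos.2 (hlt tgap)
  obtain ⟨L, hL, hlip⟩ :=
    exists_abs_deriv_shift_sub_le hK (fun t => ⟨hpm_nonneg t, hmax t⟩) hfLip
  obtain ⟨Λ, M, hG⟩ := exists_oddReaction_oddExtension (h := fun t w => f t (pm t + w))
    (q := fun t => pp t - pm t) hT hK hL
    (hf_cont.comp (by fun_prop : Continuous fun p : ℝ × ℝ => (p.1, pm p.1 + p.2)))
    (fun t => (hf_diff t).fun_comp (by fun_prop))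
    (fun t w hw => by rw [hpmT, hfT _ _ (add_nonneg (hpm_nonneg t) hw.1)]) hlip
    (fun t => by rw [hpmT, hppT]) (fun t => sub_pos.2 (hlt t)) hgap fun t => by
      simpa only [add_sub_cancel, add_zero] using
        (hpp_ode t (mem_univ t)).fun_sub (hpm_ode t (mem_univ t))
  exact ⟨_, Λ, M, L, hG⟩

lemma OddReaction.pos_lt_of_initial {G : ℝ → ℝ → ℝ} {y : ℝ → ℝ} (hG : OddReaction T Λ M L K G q)
    (hy : ODESolOn G y univ) (h₀ : 0 < y 0) (hq : y 0 < q 0) (t : ℝ) : y t ∈ Ioo 0 (q t) := by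
  have hzero : ODESolOn G (fun _ => 0) univ := fun t _ => by
    simpa only [hG.apply_zero] using hasDerivAt_const t (0 : ℝ)
  exact ⟨hzero.lt_of_initial_lt hG.lip hy h₀ t, hy.lt_of_initial_lt hG.lip hG.q_ode hq t⟩

lemma ODESolOn.add_of_oddExtension {s : Set ℝ} {y : ℝ → ℝ} (hpm : ODESolOn f pm s)
    (hy : ODESolOn (fun t => oddExtension K fun w => f t (pm t + w)) y s)
    (hmem : ∀ t ∈ s, y t ∈ Icc 0 K) : ODESolOn f (fun t => pm t + y t) s := fun t ht => by
  have hyt := hy t ht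
  simp only [oddExtension_apply (hmem t ht), add_zero] at hyt
  simpa only [add_sub_cancel] using (hpm t ht).fun_add hyt

namespace SymmDecreasingSol

lemma deriv_const_add {G : ℝ → ℝ → ℝ} (hu : SymmDecreasingSol R T G q u ux uxx) (c t : ℝ) :
    deriv (fun x => c + u x t) = fun x => ux x t :=
  funext fun x => ((hu.hasDerivAt_x x t).const_add c).deriv

lemma satPDE_add (hu : SymmDecreasingSol R T
      (fun t => oddExtension K fun w => f t (pm t + w)) q u ux uxx)
    (hq : ∀ t, q t ≤ K) (hpm : ODESolOn f pm univ) :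
    SatPDE f (fun x t => pm t + u x t) (Ioo (-R) R) univ := by
  intro x hx t _
  simp only [hu.deriv_const_add]
  refine ⟨((hu.hasDerivAt_x x t).const_add _).differentiableAt,
    (hu.hasDerivAt_xx x t).differentiableAt, ?_⟩
  have hmem : u x t ∈ Icc 0 K := ⟨(hu.pos x hx t).le, (hu.lt x hx t).le.trans (hq t)⟩
  have ht := hu.hasDerivAt_t x t
  simp only [oddExtension_apply hmem, add_zero] at ht
  exact ((hpm t (mem_univ t)).fun_add ht).congr_deriv
    (by rw [(hu.hasDerivAt_xx x t).deriv]; ring)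

end SymmDecreasingSol

theorem dirichlet_periodic_solution_exists_general
    (T : ℝ) (hT : 0 < T) (f : ℝ → ℝ → ℝ)
    (hf_cont : Continuous fun q : ℝ × ℝ => f q.1 q.2)
    (hf_diff : ∀ t, Differentiable ℝ (f t))
    (hfT : ∀ t v : ℝ, 0 ≤ v → f (t + T) v = f t v)
    (hfLip : ∀ K : ℝ, ∃ L : ℝ, ∀ t : ℝ, ∀ v ∈ Set.Icc (0:ℝ) K, ∀ w ∈ Set.Icc (0:ℝ) K,
      |deriv (f t) v - deriv (f t) w| ≤ L * |v - w|)
    (pm pp : ℝ → ℝ) (hpm : XPer T f pm) (hpp : XPer T f pp) (hlt : ∀ t, pm t < pp t)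
    (hmono : ∃ ε > 0, ∀ a ∈ Set.Ioo (pm 0) (pm 0 + ε), ∀ g : ℝ → ℝ,
      ODESolOn f g (Set.Ici 0) → g 0 = a → ∀ t : ℝ, 0 ≤ t → g t < g (t + T)) :
    ∃ R₀ > (0:ℝ), ∀ R : ℝ, R₀ ≤ R →
      ∃ φ : ℝ → ℝ → ℝ,
        SatPDE f φ (Set.Ioo (-R) R) Set.univ ∧
        ContinuousOn (fun q : ℝ × ℝ => φ q.1 q.2) (Set.Icc (-R) R ×ˢ Set.univ) ∧
        (∀ x t, φ x (t + T) = φ x t) ∧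
        (∀ x ∈ Set.Ioo (-R) R, ∀ t : ℝ, pm t < φ x t ∧ φ x t < pp t) ∧
        (∀ t : ℝ, φ R t = pm t ∧ φ (-R) t = pm t) ∧
        (∀ x t, φ (-x) t = φ x t) ∧
        (∀ x ∈ Set.Ioo (0:ℝ) R, ∀ t : ℝ, deriv (fun y => φ y t) x < 0) := by
  obtain ⟨K, Λ, M, C, hG⟩ :=
    exists_oddReaction_of_xPer hT hf_cont hf_diff hfT hfLip hpm hpp hlt
  obtain ⟨-, hpmT, hpm_ode⟩ := hpm
  have hpm_cont := hpm_ode.continuous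
  obtain ⟨ε, hε, hmono⟩ := hmono
  obtain ⟨R₀, hR₀, hex⟩ := hG.exists_symmDecreasingSol (lt_min hε (hG.q_pos 0))
    fun y hy hy₀ hyδ t ht => by
      obtain ⟨hyε, hyq⟩ := lt_min_iff.1 hyδ
      have hmem (t : ℝ) : y t ∈ Icc 0 K :=
        (Ioo_subset_Icc_self.trans (Icc_subset_Icc_right (hG.q_le t)))
          (hG.pos_lt_of_initial hy hy₀ hyq t)
      have hsol := hpm_ode.add_of_oddExtension hy fun t _ => hmem t
      simpa only [hpmT, add_lt_add_iff_left] using hmono (pm 0 + y 0)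
        ⟨lt_add_of_pos_right _ hy₀, by linarith⟩ _ (fun s _ => hsol s (mem_univ s)) rfl t ht
  refine ⟨R₀, hR₀, fun R hR => ?_⟩
  obtain ⟨u, ux, uxx, hu⟩ := hex R hR
  have hu_cont := hu.toPeriodicC21.cont
  refine ⟨fun x t => pm t + u x t, hu.satPDE_add hG.q_le hpm_ode, by fun_prop, fun x t => ?_,
    fun x hx t => ⟨lt_add_of_pos_right _ (hu.pos x hx t), lt_sub_iff_add_lt'.1 (hu.lt x hx t)⟩,
    fun t => ⟨?_, ?_⟩, fun x t => ?_, fun x hx t => ?_⟩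
  · simp only [hpmT, hu.toPeriodicC21.periodic]
  · simp only [(hu.quarterWave t).apply_right, add_zero]
  · simp only [(hu.quarterWave t).apply_left, add_zero]
  · simp only [(hu.quarterWave t).even x]
  · rw [hu.deriv_const_add]
    exact hu.deriv_neg x hx t

end

theorem dirichlet_periodic_solution_exists
    (T : ℝ) (hT : 0 < T) (f : ℝ → ℝ → ℝ)
    (hf_cont : Continuous fun q : ℝ × ℝ => f q.1 q.2)
    (hf_C1 : ∀ t, ContDiff ℝ 1 (f t))
    (hfT : ∀ t v : ℝ, 0 ≤ v → f (t + T) v = f t v)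
    (hfLip : ∀ K : ℝ, ∃ L : ℝ, ∀ t : ℝ, ∀ v ∈ Set.Icc (0:ℝ) K, ∀ w ∈ Set.Icc (0:ℝ) K,
      |deriv (f t) v - deriv (f t) w| ≤ L * |v - w|)
    (pm pp : ℝ → ℝ) (hpm : XPer T f pm) (hpp : XPer T f pp) (hlt : ∀ t, pm t < pp t)
    (hbasin : ∀ a ∈ Set.Ioo (pm 0) (pp 0), ∀ g : ℝ → ℝ,
      ODESolOn f g (Set.Ici 0) → g 0 = a →
        (∀ t : ℝ, 0 ≤ t → StrictMono fun m : ℕ => g (t + (m : ℝ) * T)) ∧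
        TendstoLocallyUniformly (fun (m : ℕ) (t : ℝ) => g (t + (m : ℝ) * T)) pp atTop) :
    ∃ R₀ > (0:ℝ), ∀ R : ℝ, R₀ ≤ R →
      ∃ φ : ℝ → ℝ → ℝ,
        SatPDE f φ (Set.Ioo (-R) R) Set.univ ∧
        ContinuousOn (fun q : ℝ × ℝ => φ q.1 q.2) (Set.Icc (-R) R ×ˢ Set.univ) ∧
        (∀ x t, φ x (t + T) = φ x t) ∧
        (∀ x ∈ Set.Ioo (-R) R, ∀ t : ℝ, pm t < φ x t ∧ φ x t < pp t) ∧
        (∀ t : ℝ, φ R t = pm t ∧ φ (-R) t = pm t) ∧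
        (∀ x t, φ (-x) t = φ x t) ∧
        (∀ x ∈ Set.Ioo (0:ℝ) R, ∀ t : ℝ, deriv (fun y => φ y t) x < 0) :=
  dirichlet_periodic_solution_exists_general T hT f hf_cont
    (fun t => (hf_C1 t).differentiable one_ne_zero) hfT hfLip pm pp hpm hpp hlt
    ⟨pp 0 - pm 0, sub_pos.2 (hlt 0), fun a ha g hg hga t ht => by
      simpa using (hbasin a (by rwa [add_sub_cancel] at ha) g hg hga).1 t ht Nat.zero_lt_one⟩
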